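/- Let ρ₀ : Γ → PSL(2,ℝ) be a convex cocompact representation and let h be a homeomorphism of S¹ that restricts to the identity on the limit set L of ρ₀(Γ) and such that ρ₁ = h ρ₀ h⁻¹ takes values in Diff(S¹). Then ρ₁ preserves a C² volume form on the cylinder C. -/

import Mathlib

/-!
Write `ρ` for the action `ρ₁`, `F` for the lifts of its elements and `A` for matrices of the
corresponding elements of `ρ₀`. The data are gathered in the structure `Sys` (`exists_sys`).

**Hyperbolicity.** By minimality, every point of the limit set `L` is contracted arbitrarily
strongly, relative to the norm, by elements of the group (`limit_contr`). A geodesic argument in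
the convex set on which `ρ₀` is cocompact then shows that limit points are conical, so that every
point of `L` is expanded by a factor `2` by some element (`conical`). As `L` is perfect and `ρ₁`
agrees with `ρ₀` on `L`, the derivatives of `ρ₁` along `L` are those of the Möbius action
(`deriv_eq_on`). In particular `ρ₁` preserves orientation.

**The form.** The invariant density is `1 / H` with `H(t, τ) = pair (Q(t, τ)) (Q(τ, t))`. Here
`pair` is the `SL(2,ℝ)`-invariant bilinear form on symmetric `2 × 2` matrices polarizing the
determinant, and `Q` is a field of symmetric matrices with the equivariance
`Q(F t, F τ) = F'(t) · A Q(t, τ) Aᵀ` (`Q_equiv`). For the Möbius action itself one may take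
`Q(t, τ) = v vᵀ`, where `v` is the unit vector of direction `t`; this is `EE t`, and `H` is then the
squared chordal distance.

For `ρ₁`, the starting point is `Q0 = EE + κ · 1` with `κ ≥ 0` smooth and vanishing exactly on `L`.
When `τ` lies in the domain of discontinuity, averaging the pullbacks of `Q0` over the group, with
weights depending on `τ`, gives an invariant field `QΩ`. The point is that it extends to a `C²`
field for all `τ ≠ t`. Take a partition of unity `p0`, `p s` (`s ∈ T`) on the circle, with `p0`
supported away from `L` and `p s` supported where `s` expands by a factor `2` (the structure
`Cov`). Then `QΩ - Q0` solves a transfer equation `R = f0 + U R`, where `U` is the weighted sum of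
the pullbacks by the elements of `T`, and the smooth source `f0` vanishes when `t` lies in `L`
(`QΩ_eq`). The solution is the series `R = ∑ Uⁿ f0`. Its `n`-th term at `(t, τ)` involves only the
words of length `n` that expand at every step along the orbit of `τ`; these bring `t` exponentially
close to `L` (`Reach.contract`). Since `L` has no isolated points, `f0` vanishes to infinite order
there (`flat_iter`), which beats the exponential growth of the `C²` norms of `Uⁿ`. Hence the series
converges in `C²` locally off the diagonal (`f_decay`, `R_smooth`), and `Q = Q0 + R` is equivariant
by density of the complement of `L`.

**Positivity.** If neither point lies in `L`, both matrices are positive definite, and so `H > 0`.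
If `τ ∈ L`, an expanding word at `τ` keeps the two points apart and makes `R` negligible, so that
`H` is close to a number at least the squared chordal distance (`H_pos_L`); the case `t ∈ L` is
symmetric.
-/


noncomputable section

open Real Set Function MeasureTheory
open scoped Classical

/-- The circle, modeled as the real projective line `ℝP¹`. -/
abbrev RP1 : Type := Projectivization ℝ (Fin 2 → ℝ)

instance : TopologicalSpace RP1 :=
  inferInstanceAs (TopologicalSpace (Quotient (projectivizationSetoid ℝ (Fin 2 → ℝ))))

instance : MeasurableSpace RP1 := borel RP1
instance : BorelSpace RP1 := ⟨rfl⟩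

lemma cossin_ne_zero (t : ℝ) : ![Real.cos (π * t), Real.sin (π * t)] ≠ 0 := by
  intro h
  have h0 : Real.cos (π * t) = 0 := by simpa using congrFun h 0
  have h1 : Real.sin (π * t) = 0 := by simpa using congrFun h 1
  have h2 := Real.sin_sq_add_cos_sq (π * t)
  rw [h0, h1] at h2
  norm_num at h2

/-- The standard (angular) parametrization `ℝ → ℝP¹`; it has period `1` and realizes
the identification `S¹ = ℝ/ℤ ≃ ℝP¹`. -/
def para (t : ℝ) : RP1 :=
  Projectivization.mk ℝ ![Real.cos (π * t), Real.sin (π * t)] (cossin_ne_zero t)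

/-- `F : ℝ → ℝ` is a lift of the circle map `f` through the angular parametrization. -/
def IsLift (F : ℝ → ℝ) (f : RP1 → RP1) : Prop :=
  ∀ t : ℝ, f (para t) = para (F t)

/-- `f` is a `C^k` diffeomorphism of the circle: it admits a `C^k` lift of degree `±1`
with nowhere vanishing derivative. -/
def IsCircleDiffeo (k : ℕ∞) (f : RP1 → RP1) : Prop :=
  ∃ F : ℝ → ℝ, IsLift F f ∧ ContDiff ℝ k F ∧ (∀ t : ℝ, deriv F t ≠ 0) ∧
    ((∀ t : ℝ, F (t + 1) = F t + 1) ∨ (∀ t : ℝ, F (t + 1) = F t - 1))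

/-- `f` is a real-analytic diffeomorphism of the circle. -/
def IsAnalyticCircleDiffeo (f : RP1 → RP1) : Prop :=
  ∃ F : ℝ → ℝ, IsLift F f ∧ AnalyticOnNhd ℝ F Set.univ ∧ (∀ t : ℝ, deriv F t ≠ 0) ∧
    ((∀ t : ℝ, F (t + 1) = F t + 1) ∨ (∀ t : ℝ, F (t + 1) = F t - 1))

/-- The derivative of a circle map at a point, computed in the angular coordinate via a
differentiable lift. (Any two differentiable lifts differ by an integer constant, and the
derivative of a lift is `1`-periodic, so this does not depend on any choice.) -/
def circleDeriv (f : RP1 → RP1) (x : RP1) : ℝ :=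
  if h : ∃ F : ℝ → ℝ, IsLift F f ∧ Differentiable ℝ F
  then deriv h.choose (Function.invFun para x) else 0

/-- The `n`-th derivative of a smooth circle map at a point, in the angular coordinate. -/
def circleDerivN (n : ℕ) (f : RP1 → RP1) (x : RP1) : ℝ :=
  if h : ∃ F : ℝ → ℝ, IsLift F f ∧ ContDiff ℝ (⊤ : ℕ∞) F
  then iteratedDeriv n h.choose (Function.invFun para x) else 0

/-- The expression of a function on `S¹ × S¹` in the angular coordinates. -/
def chartDensity (ω : RP1 → RP1 → ℝ) : ℝ × ℝ → ℝ := fun q => ω (para q.1) (para q.2)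

/-- The lift to `ℝ × ℝ` of the complement of the diagonal in `S¹ × S¹`. -/
def offDiag2 : Set (ℝ × ℝ) := {q : ℝ × ℝ | para q.1 ≠ para q.2}

/-- A `C^k` volume form on the cylinder `C = S¹ × S¹ \ Δ`: a positive function of class
`C^k` (in the angular coordinates) off the diagonal. -/
def IsVolumeForm (k : ℕ∞) (ω : RP1 → RP1 → ℝ) : Prop :=
  (∀ x y : RP1, x ≠ y → 0 < ω x y) ∧ ContDiffOn ℝ k (chartDensity ω) offDiag2

/-- A real-analytic volume form on the cylinder `C = S¹ × S¹ \ Δ`. -/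
def IsAnalyticVolumeForm (ω : RP1 → RP1 → ℝ) : Prop :=
  (∀ x y : RP1, x ≠ y → 0 < ω x y) ∧ AnalyticOnNhd ℝ (chartDensity ω) offDiag2

/-- The circle diffeomorphism `f` preserves the volume form `ω` on the cylinder:
`ω (f x) (f y) · f'(x) · f'(y) = ω x y` for all `x ≠ y`. -/
def PreservesForm (f : RP1 → RP1) (ω : RP1 → RP1 → ℝ) : Prop :=
  ∀ x y : RP1, x ≠ y →
    ω (f x) (f y) * circleDeriv f x * circleDeriv f y = ω x y

abbrev SL2 : Type := Matrix.SpecialLinearGroup (Fin 2) ℝ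

/-- The projective action of `SL(2,ℝ)` on `ℝP¹`; its image in the maps of `ℝP¹`
is the group `PSL(2,ℝ)`. -/
def mobius (M : SL2) : RP1 → RP1 :=
  Projectivization.map (Matrix.SpecialLinearGroup.toLin' M : (Fin 2 → ℝ) →ₗ[ℝ] Fin 2 → ℝ)
    (Matrix.SpecialLinearGroup.toLin' M).injective

/-- `f` is an element of `PSL(2,ℝ)`, viewed as a self-map of the circle `ℝP¹`. -/
def IsMobius (f : RP1 → RP1) : Prop := ∃ M : SL2, f = mobius M

lemma rot_det (α : ℝ) :
    Matrix.det !![Real.cos (π * α), -Real.sin (π * α); Real.sin (π * α), Real.cos (π * α)] = 1 := by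
  rw [Matrix.det_fin_two_of]
  nlinarith [Real.sin_sq_add_cos_sq (π * α)]

/-- The rotation of angle `α` (in the angular coordinate of total length `1`), as an
element of `SL(2,ℝ)`: `mobius (rotSL α)` is the rotation `para t ↦ para (t + α)`. -/
def rotSL (α : ℝ) : SL2 :=
  ⟨!![Real.cos (π * α), -Real.sin (π * α); Real.sin (π * α), Real.cos (π * α)], rot_det α⟩

section Reps

variable {Γ : Type*} [Group Γ]

/-- The action `ρ` has no finite orbit on the circle. -/
def HasNoFiniteOrbit (ρ : Γ →* Equiv.Perm RP1) : Prop :=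
  ∀ x : RP1, (Set.range fun γ : Γ => ρ γ x).Infinite

/-- The action `ρ` has a dense orbit on the circle. -/
def HasDenseOrbit (ρ : Γ →* Equiv.Perm RP1) : Prop :=
  ∃ x : RP1, Dense (Set.range fun γ : Γ => ρ γ x)

/-- `L` is the limit set of the action `ρ`: the minimal nonempty closed invariant subset. -/
def IsLimitSet (ρ : Γ →* Equiv.Perm RP1) (L : Set RP1) : Prop :=
  L.Nonempty ∧ IsClosed L ∧ (∀ γ : Γ, (ρ γ) '' L = L) ∧
    ∀ L' : Set RP1, L'.Nonempty → IsClosed L' → (∀ γ : Γ, (ρ γ) '' L' = L') → L ⊆ L'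

/-- `ρ` is area-preserving: the diagonal action on the cylinder preserves a smooth
volume form. -/
def AreaPreserving (ρ : Γ →* Equiv.Perm RP1) : Prop :=
  ∃ ω : RP1 → RP1 → ℝ, IsVolumeForm (⊤ : ℕ∞) ω ∧ ∀ γ : Γ, PreservesForm (ρ γ) ω

/-- `ρ` is topologically Fuchsian: conjugate to a subgroup of `PSL(2,ℝ)` by a
homeomorphism of the circle. -/
def TopologicallyFuchsian (ρ : Γ →* Equiv.Perm RP1) : Prop :=
  ∃ h : RP1 ≃ₜ RP1, ∀ γ : Γ, IsMobius fun x => h.symm (ρ γ (h x))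

/-- `ρ` is differentially Fuchsian: conjugate to a subgroup of `PSL(2,ℝ)` by a `C^∞`
diffeomorphism of the circle. -/
def DifferentiallyFuchsian (ρ : Γ →* Equiv.Perm RP1) : Prop :=
  ∃ h g : RP1 → RP1, IsCircleDiffeo (⊤ : ℕ∞) h ∧ IsCircleDiffeo (⊤ : ℕ∞) g ∧
    (∀ x, g (h x) = x) ∧ (∀ x, h (g x) = x) ∧
    ∀ γ : Γ, IsMobius fun x => g (ρ γ (h x))

/-- `ρ` is analytically Fuchsian: conjugate to a subgroup of `PSL(2,ℝ)` by a real-analytic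
diffeomorphism of the circle. -/
def AnalyticallyFuchsian (ρ : Γ →* Equiv.Perm RP1) : Prop :=
  ∃ h g : RP1 → RP1, IsAnalyticCircleDiffeo h ∧ IsAnalyticCircleDiffeo g ∧
    (∀ x, g (h x) = x) ∧ (∀ x, h (g x) = x) ∧
    ∀ γ : Γ, IsMobius fun x => g (ρ γ (h x))

end Reps

/-- The "Lebesgue" measure on the circle, transported from `[0,1)` by the angular
parametrization. -/
def circleMeasure : Measure RP1 :=
  Measure.map para (volume.restrict (Set.Ico (0 : ℝ) 1))

/-- The measure on `S¹ × S¹` with density `ω` with respect to Lebesgue measure. -/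
def volumeFormMeasure (ω : RP1 → RP1 → ℝ) : Measure (RP1 × RP1) :=
  (circleMeasure.prod circleMeasure).withDensity fun q => ENNReal.ofReal (ω q.1 q.2)

-- extras appended to base
section Extra

open scoped UpperHalfPlane

/-- The affine chart `ℝ → ℝP¹`, `u ↦ [u : 1]`, realizing `S¹ = ℝ ∪ {∞}`. -/
def aff (u : ℝ) : RP1 :=
  Projectivization.mk ℝ ![u, (1 : ℝ)] (by
    intro h
    simpa using congrFun h 1)

/-- The curvature `K = (2/ω) ∂²(log ω)/∂x∂y` (in the angular coordinates) of the Lorentz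
metric associated to the volume form `ω` on the cylinder. -/
def curvature (ω : RP1 → RP1 → ℝ) (x y : RP1) : ℝ :=
  (2 / ω x y) *
    deriv (fun t : ℝ =>
        deriv (fun s : ℝ => Real.log (ω (para t) (para s))) (Function.invFun para y))
      (Function.invFun para x)

/-- The Schwarzian derivative of `f` (with respect to the standard projective structure of
`ℝP¹`) vanishes at `x`: `f` agrees to third order at `x` with some element of `PSL(2,ℝ)`. -/
def SchwarzianVanishesAt (f : RP1 → RP1) (x : RP1) : Prop :=
  ∃ M : SL2, f x = mobius M x ∧
    circleDerivN 1 f x = circleDerivN 1 (mobius M) x ∧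
    circleDerivN 2 f x = circleDerivN 2 (mobius M) x ∧
    circleDerivN 3 f x = circleDerivN 3 (mobius M) x

/-- The action on the hyperbolic plane of an element of `PSL(2,ℝ)`, given as a self-map of
the circle. (Well defined: matrices `±M` induce the same map on `ℝP¹` and on `ℍ`.) -/
def mobiusHAct (f : RP1 → RP1) : ℍ → ℍ :=
  if h : ∃ M : SL2, f = mobius M then fun z => h.choose • z else id

/-- A subset of the hyperbolic plane is (geodesically) convex iff it contains every point
lying between two of its points. -/
def HypConvex (C : Set ℍ) : Prop :=
  ∀ x ∈ C, ∀ y ∈ C, ∀ z : ℍ, dist x z + dist z y = dist x y → z ∈ C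

/-- A Cantor subset of the circle: nonempty, perfect, with empty interior. -/
def IsCantorSet (L : Set RP1) : Prop :=
  L.Nonempty ∧ Perfect L ∧ interior L = ∅

/-- `ρ` is a convex cocompact representation in `PSL(2,ℝ)`: it is injective, takes values in
`PSL(2,ℝ)`, is discrete (acts properly discontinuously on `ℍ`), its limit set is a Cantor
set, and it acts cocompactly on some nonempty closed convex invariant subset of `ℍ`
(equivalently, on the convex hull of its limit set). -/
def IsConvexCocompact {Γ : Type*} [Group Γ] (ρ : Γ →* Equiv.Perm RP1) : Prop :=
  Function.Injective ρ ∧ (∀ γ : Γ, IsMobius (ρ γ)) ∧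
  (∀ K : Set ℍ, IsCompact K →
    {γ : Γ | ((mobiusHAct (ρ γ) '' K) ∩ K).Nonempty}.Finite) ∧
  (∃ L : Set RP1, IsLimitSet ρ L) ∧
  (∀ L : Set RP1, IsLimitSet ρ L → IsCantorSet L) ∧
  ∃ C : Set ℍ, C.Nonempty ∧ IsClosed C ∧ HypConvex C ∧
    (∀ γ : Γ, mobiusHAct (ρ γ) '' C = C) ∧
    ∃ K : Set ℍ, IsCompact K ∧ C ⊆ ⋃ γ : Γ, mobiusHAct (ρ γ) '' K

/-- Two circle maps are `ε`-close in the `C¹` topology. -/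
def C1Close (f g : RP1 → RP1) (ε : ℝ) : Prop :=
  ∃ F G : ℝ → ℝ, IsLift F f ∧ IsLift G g ∧ ContDiff ℝ 1 F ∧ ContDiff ℝ 1 G ∧
    ∀ t : ℝ, |F t - G t| ≤ ε ∧ |deriv F t - deriv G t| ≤ ε

/-- `ρ` is spectrally Möbius-like: every nontrivial element has at most two fixed points,
and at a pair of fixed points `N, S` the derivatives satisfy `f'(N)·f'(S) = 1`, `f'(N) ≠ 1`. -/
def SpectrallyMobiusLike {Γ : Type*} [Group Γ] (ρ : Γ →* Equiv.Perm RP1) : Prop :=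
  ∀ γ : Γ, ρ γ ≠ 1 →
    {x : RP1 | ρ γ x = x}.encard ≤ 2 ∧
    ∀ N S : RP1, N ≠ S → {x : RP1 | ρ γ x = x} = {N, S} →
      circleDeriv (ρ γ) N * circleDeriv (ρ γ) S = 1 ∧ circleDeriv (ρ γ) N ≠ 1

end Extra

/-! ### Flat functions on sets without isolated points -/

/-- A function on the plane that is `1`-periodic in both variables. -/
def DP {X : Type*} (g : ℝ × ℝ → X) : Prop :=
  (∀ z, g (z + (1, 0)) = g z) ∧ ∀ z, g (z + (0, 1)) = g z

lemma DP.int {X : Type*} {g : ℝ × ℝ → X} (h : DP g) (m n : ℤ) (t τ : ℝ) :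
    g (t + m, τ + n) = g (t, τ) := by
  have h1 : Function.Periodic (fun t => g (t, τ + n)) 1 := by
    intro x; simpa using h.1 (x, τ + n)
  have h2 : Function.Periodic (fun τ => g (t, τ)) 1 := by
    intro x; simpa using h.2 (t, x)
  have e1 := h1.int_mul m t
  have e2 := h2.int_mul n τ
  simp only [mul_one] at e1 e2
  rw [e1, e2]

lemma DP.exists_bound {X : Type*} [NormedAddCommGroup X] {g : ℝ × ℝ → X} (h : DP g)
    (hc : Continuous g) : ∃ C, 0 ≤ C ∧ ∀ z, ‖g z‖ ≤ C := by
  obtain ⟨C, hC⟩ := (isCompact_Icc (a := (0 : ℝ)) (b := 1)).prod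
    (isCompact_Icc (a := (0 : ℝ)) (b := 1)) |>.exists_bound_of_continuousOn hc.continuousOn
  have key : ∀ z, ‖g z‖ ≤ C := by
    rintro ⟨t, τ⟩
    have := h.int (-⌊t⌋) (-⌊τ⌋) t τ
    rw [← this]
    apply hC
    push_cast
    have a := Int.floor_le t
    have b := (Int.lt_floor_add_one t).le
    have c := Int.floor_le τ
    have d := (Int.lt_floor_add_one τ).le
    refine ⟨⟨?_, ?_⟩, ⟨?_, ?_⟩⟩ <;> simp only <;> linarith
  exact ⟨C, (norm_nonneg _).trans (key (0, 0)), key⟩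

section
variable {X : Type*} [NormedAddCommGroup X] [NormedSpace ℝ X]

lemma DP.iter {g : ℝ × ℝ → X} (h : DP g) (k : ℕ) : DP (iteratedFDeriv ℝ k g) := by
  constructor <;> intro z
  · rw [← iteratedFDeriv_comp_add_right]; congr 1; funext w; exact h.1 w
  · rw [← iteratedFDeriv_comp_add_right]; congr 1; funext w; exact h.2 w

lemma DP.fd {g : ℝ × ℝ → X} (h : DP g) : DP (fderiv ℝ g) := by
  constructor <;> intro z
  · rw [← fderiv_comp_add_right]; congr 1; funext w; exact h.1 w
  · rw [← fderiv_comp_add_right]; congr 1; funext w; exact h.2 w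

lemma DP.exists_bound_iter {g : ℝ × ℝ → X} (h : DP g) (hc : ContDiff ℝ (⊤ : ℕ∞) g) (k : ℕ) :
    ∃ C, 0 ≤ C ∧ ∀ l ≤ k, ∀ z, ‖iteratedFDeriv ℝ l g z‖ ≤ C := by
  induction k with
  | zero =>
    obtain ⟨C, h0, hC⟩ := (h.iter 0).exists_bound
      (hc.continuous_iteratedFDeriv (m := 0) (by exact_mod_cast le_top))
    refine ⟨C, h0, fun l hl z => ?_⟩
    obtain rfl : l = 0 := by omega
    exact hC z
  | succ k ih =>
    obtain ⟨C, h0, hC⟩ := (h.iter (k+1)).exists_bound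
      (hc.continuous_iteratedFDeriv (m := k+1) (by exact_mod_cast le_top))
    obtain ⟨C', h0', hC'⟩ := ih
    refine ⟨max C C', le_max_of_le_left h0, fun l hl z => ?_⟩
    rcases Nat.lt_or_ge l (k+1) with h1 | h1
    · exact (hC' l (by omega) z).trans (le_max_right _ _)
    · obtain rfl : l = k+1 := by omega
      exact (hC z).trans (le_max_left _ _)
end

/-- The set `A` has no isolated points: each of its points is a limit of other points of `A`. -/
def NoIsol (A : Set ℝ) : Prop := ∀ p ∈ A, ∃ᶠ s in nhdsWithin p {p}ᶜ, s ∈ A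

lemma deriv_zero_of_frequently {X : Type*} [NormedAddCommGroup X] [NormedSpace ℝ X]
    {f : ℝ → X} {f' : X} {p : ℝ} {A : Set ℝ} (hf : HasDerivAt f f' p) (hA : NoIsol A)
    (hp : p ∈ A) (hz : ∀ s ∈ A, f s = 0) : f' = 0 := by
  have h1 := hasDerivAt_iff_tendsto_slope.1 hf
  by_contra hne
  have h2 := h1.eventually_ne hne
  obtain ⟨s, hs, hs'⟩ := ((hA p hp).and_eventually h2).exists
  apply hs'
  simp [slope, hz s hs, hz p hp]

/-- The tangential derivative vanishes along the line over `p`, the transversal one because `p` is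
accumulated by `A`. -/
lemma fderiv_zero_on {X : Type*} [NormedAddCommGroup X] [NormedSpace ℝ X] {A : Set ℝ}
    (hA : NoIsol A) {g : ℝ × ℝ → X} (hg : Differentiable ℝ g)
    (hz : ∀ p ∈ A, ∀ τ, g (p, τ) = 0) : ∀ p ∈ A, ∀ τ, fderiv ℝ g (p, τ) = 0 := by
  intro p hp τ
  have hd := (hg (p, τ)).hasFDerivAt
  have h1 : fderiv ℝ g (p, τ) (1, 0) = 0 := by
    have : HasDerivAt (fun s : ℝ => g (s, τ)) (fderiv ℝ g (p, τ) (1, 0)) p :=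
      HasFDerivAt.comp_hasDerivAt (f := fun s : ℝ => (s, τ)) p hd
        ((hasDerivAt_id p).prodMk (hasDerivAt_const p τ))
    exact deriv_zero_of_frequently this hA hp fun s hs => hz s hs τ
  have h2 : fderiv ℝ g (p, τ) (0, 1) = 0 := by
    have : HasDerivAt (fun s : ℝ => g (p, s)) (fderiv ℝ g (p, τ) (0, 1)) τ :=
      HasFDerivAt.comp_hasDerivAt (f := fun s : ℝ => (p, s)) τ hd
        ((hasDerivAt_const τ p).prodMk (hasDerivAt_id τ))
    have h0 : (fun s : ℝ => g (p, s)) = fun _ => 0 := by funext s; exact hz p hp s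
    rw [h0] at this
    exact this.unique (hasDerivAt_const τ 0)
  ext
  · simpa using h1
  · simpa using h2

/-- A smooth periodic function vanishing on `A × ℝ` is flat there: as `A` has no isolated points
all its derivatives vanish on `A × ℝ`, hence it is bounded by every power of the distance to `A ×
ℝ`. -/
lemma flat_pow {A : Set ℝ} (hA : NoIsol A) (N : ℕ) :
    ∀ {X : Type} [NormedAddCommGroup X] [NormedSpace ℝ X] {g : ℝ × ℝ → X},
      ContDiff ℝ (⊤ : ℕ∞) g → DP g → (∀ p ∈ A, ∀ τ, g (p, τ) = 0) →
      ∃ C, 0 ≤ C ∧ ∀ p ∈ A, ∀ t τ, ‖g (t, τ)‖ ≤ C * |t - p| ^ N := by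
  induction N with
  | zero =>
    intro X _ _ g hg hp _
    obtain ⟨C, h0, hC⟩ := hp.exists_bound hg.continuous
    exact ⟨C, h0, fun p _ t τ => by simpa using hC _⟩
  | succ N ih =>
    intro X _ _ g hg hp hz
    have hdiff : Differentiable ℝ g := hg.differentiable (by simp)
    obtain ⟨C, h0, hC⟩ := ih (g := fderiv ℝ g) (hg.fderiv_right (by simp)) hp.fd
      (fderiv_zero_on hA hdiff hz)
    refine ⟨C, h0, fun p hpA t τ => ?_⟩
    have := (convex_segment (𝕜 := ℝ) ((p, τ) : ℝ × ℝ) (t, τ)).norm_image_sub_le_of_norm_fderiv_le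
      (f := g) (C := C * |t - p| ^ N) (fun x _ => hdiff x) ?_
      (left_mem_segment ℝ _ _) (right_mem_segment ℝ _ _)
    · rw [hz p hpA, sub_zero] at this
      refine this.trans (le_of_eq ?_)
      rw [pow_succ, ← mul_assoc]
      congr 1
      rw [Prod.mk_sub_mk, sub_self, Prod.norm_mk, norm_zero, max_eq_left (norm_nonneg _)]
      rfl
    · intro x hx
      rw [segment_eq_image] at hx
      obtain ⟨θ, hθ, rfl⟩ := hx
      refine (hC p hpA _ _).trans ?_
      refine mul_le_mul_of_nonneg_left (pow_le_pow_left₀ (abs_nonneg _) ?_ N) h0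
      have : (1 - θ) * p + θ * t - p = θ * (t - p) := by ring
      change |(1 - θ) * p + θ * t - p| ≤ _
      rw [this, abs_mul, abs_of_nonneg hθ.1]
      exact mul_le_of_le_one_left (abs_nonneg _) hθ.2

lemma iter_zero_on {X : Type} [NormedAddCommGroup X] [NormedSpace ℝ X] {A : Set ℝ}
    (hA : NoIsol A) {g : ℝ × ℝ → X} (hg : ContDiff ℝ (⊤ : ℕ∞) g)
    (hz : ∀ p ∈ A, ∀ τ, g (p, τ) = 0) (k : ℕ) :
    ∀ p ∈ A, ∀ τ, iteratedFDeriv ℝ k g (p, τ) = 0 := by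
  induction k with
  | zero => intro p hp τ; rw [← norm_eq_zero, norm_iteratedFDeriv_zero, hz p hp, norm_zero]
  | succ k ih =>
    intro p hp τ
    have := fderiv_zero_on hA (hg.differentiable_iteratedFDeriv (m := k)
      (by exact_mod_cast WithTop.coe_lt_top _)) ih p hp τ
    have h2 : ‖iteratedFDeriv ℝ (k + 1) g (p, τ)‖ = 0 := by
      rw [← norm_fderiv_iteratedFDeriv]
      exact (congrArg norm this).trans ContinuousLinearMap.opNorm_zero
    exact norm_eq_zero.1 h2

/-- Flatness of the derivatives up to order `k`, with a common constant. -/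
lemma flat_iter {A : Set ℝ} (hA : NoIsol A) (N : ℕ) (k : ℕ)
    {X : Type} [NormedAddCommGroup X] [NormedSpace ℝ X] {g : ℝ × ℝ → X}
    (hg : ContDiff ℝ (⊤ : ℕ∞) g) (hp : DP g) (hz : ∀ p ∈ A, ∀ τ, g (p, τ) = 0) :
    ∃ C, 0 ≤ C ∧ ∀ l ≤ k, ∀ p ∈ A, ∀ t τ, ‖iteratedFDeriv ℝ l g (t, τ)‖ ≤ C * |t - p| ^ N := by
  have h1 : ∀ l, ∃ C, 0 ≤ C ∧ ∀ p ∈ A, ∀ t τ,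
      ‖iteratedFDeriv ℝ l g (t, τ)‖ ≤ C * |t - p| ^ N := fun l =>
    flat_pow hA N (hg.iteratedFDeriv_right (i := l) (m := (⊤ : ℕ∞)) (by exact_mod_cast le_top)) (hp.iter l)
      (iter_zero_on hA hg hz l)
  choose C h0 hC using h1
  refine ⟨∑ l ∈ Finset.range (k+1), C l, Finset.sum_nonneg fun l _ => h0 l,
    fun l hl p hpA t τ => (hC l p hpA t τ).trans ?_⟩
  gcongr
  exact Finset.single_le_sum (f := C) (fun l _ => h0 l) (Finset.mem_range.2 (by omega))

/-! ### Twice differentiable sums of series -/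

section
variable {X : Type*} [NormedAddCommGroup X] [NormedSpace ℝ X]

/-- One term of the transfer operator: the derivatives at `z` of `c · (f ∘ G)` are controlled by
those of `f` at `G z`, and vanish off the support of `c`. -/
lemma one_term {c : ℝ × ℝ → X →L[ℝ] X} (hc : ContDiff ℝ (⊤ : ℕ∞) c) (hcp : DP c)
    {G : ℝ × ℝ → ℝ × ℝ} (hG : ContDiff ℝ (⊤ : ℕ∞) G) (hGp : DP (fderiv ℝ G)) :
    ∃ B, 0 ≤ B ∧ ∀ (f : ℝ × ℝ → X), ContDiff ℝ (⊤ : ℕ∞) f → ∀ (z : ℝ × ℝ) (M : ℝ), 0 ≤ M →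
      (z ∈ tsupport c → ∀ l ≤ 2, ‖iteratedFDeriv ℝ l f (G z)‖ ≤ M) →
      ∀ j ≤ 2, ‖iteratedFDeriv ℝ j (fun z => c z (f (G z))) z‖ ≤ B * M := by
  obtain ⟨Cc, hCc0, hCc⟩ := hcp.exists_bound_iter hc 2
  obtain ⟨CG, hCG0, hCG⟩ := hGp.exists_bound_iter (hG.fderiv_right (m := (⊤ : ℕ∞)) (by simp)) 2
  set D := max 1 CG with hD
  have hD1 : 1 ≤ D := le_max_left _ _
  refine ⟨12 * Cc * (2 * D ^ 2), by positivity, fun f hf z M hM h j hj => ?_⟩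
  have hjT : (j : WithTop ℕ∞) ≤ ((⊤ : ℕ∞) : WithTop ℕ∞) := by exact_mod_cast le_top
  have hb := norm_iteratedFDeriv_clm_apply hc (hf.comp hG) z hjT
  refine hb.trans ?_
  by_cases hz : z ∈ tsupport c
  · have hM' := h hz
    have h1 : ∀ i ≤ 2, ‖iteratedFDeriv ℝ i (f ∘ G) z‖ ≤ M * (2 * D ^ 2) := by
      intro i hi
      have := norm_iteratedFDeriv_comp_le hf hG (n := i) (by exact_mod_cast le_top) z (C := M)
        (D := D) (fun l hl => hM' l (hl.trans hi)) (by
          intro l hl hl2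
          obtain ⟨l, rfl⟩ : ∃ l', l = l' + 1 := ⟨l - 1, by omega⟩
          rw [← norm_iteratedFDeriv_fderiv]
          refine (hCG l (by omega) z).trans ((le_max_right 1 CG).trans ?_)
          exact le_self_pow₀ hD1 (by omega))
      refine this.trans ?_
      have a1 : (i.factorial : ℝ) ≤ 2 := by
        interval_cases i <;> norm_num [Nat.factorial]
      have a2 : D ^ i ≤ D ^ 2 := pow_le_pow_right₀ hD1 hi
      calc (i.factorial : ℝ) * M * D ^ i ≤ 2 * M * D ^ 2 := by gcongr
        _ = _ := by ring
    calc _ ≤ ∑ i ∈ Finset.range (j + 1), (4 * Cc * (M * (2 * D ^ 2))) := by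
          refine Finset.sum_le_sum fun i hi => ?_
          have hi' : i ≤ j := by simpa [Nat.lt_succ_iff] using hi
          have a0 : ((j.choose i : ℕ) : ℝ) ≤ 4 := by
            have : j.choose i ≤ 2 ^ j := Nat.choose_le_two_pow j i
            have h4 : 2 ^ j ≤ 2 ^ 2 := Nat.pow_le_pow_right (by norm_num) hj
            exact_mod_cast this.trans h4
          have a1 := hCc i (hi'.trans hj) z
          have a2 := h1 (j - i) (by omega)
          gcongr
      _ = (j + 1) * (4 * Cc * (M * (2 * D ^ 2))) := by simp
      _ ≤ 3 * (4 * Cc * (M * (2 * D ^ 2))) := by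
          have : (j : ℝ) ≤ 2 := by exact_mod_cast hj
          gcongr
          linarith
      _ = _ := by ring
  · rw [Finset.sum_eq_zero]
    · positivity
    · intro i _
      have : iteratedFDeriv ℝ i c z = 0 := by
        by_contra h0
        exact hz (support_iteratedFDeriv_subset i h0)
      rw [this]; simp

variable {ι : Type*} [Fintype ι]

/-- The transfer operator `f ↦ ∑ s, c s · (f ∘ G s)`. -/
def Uop (c : ι → ℝ × ℝ → X →L[ℝ] X) (G : ι → ℝ × ℝ → ℝ × ℝ) (f : ℝ × ℝ → X) : ℝ × ℝ → X :=
  fun z => ∑ s, c s z (f (G s z))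

lemma Uop_contDiff {c : ι → ℝ × ℝ → X →L[ℝ] X} {G : ι → ℝ × ℝ → ℝ × ℝ}
    (hc : ∀ s, ContDiff ℝ (⊤ : ℕ∞) (c s)) (hG : ∀ s, ContDiff ℝ (⊤ : ℕ∞) (G s))
    {f : ℝ × ℝ → X} (hf : ContDiff ℝ (⊤ : ℕ∞) f) : ContDiff ℝ (⊤ : ℕ∞) (Uop c G f) :=
  ContDiff.sum fun s _ => (hc s).clm_apply (hf.comp (hG s))

/-- One application of the transfer operator multiplies `C²` bounds by at most a constant `B`, and
only the points `G s z` with `z` in the support of `c s` matter. -/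
lemma Uop_step {c : ι → ℝ × ℝ → X →L[ℝ] X} {G : ι → ℝ × ℝ → ℝ × ℝ}
    (hc : ∀ s, ContDiff ℝ (⊤ : ℕ∞) (c s)) (hcp : ∀ s, DP (c s))
    (hG : ∀ s, ContDiff ℝ (⊤ : ℕ∞) (G s)) (hGp : ∀ s, DP (fderiv ℝ (G s))) :
    ∃ B, 0 < B ∧ ∀ (f : ℝ × ℝ → X), ContDiff ℝ (⊤ : ℕ∞) f → ∀ (z : ℝ × ℝ) (M : ℝ), 0 ≤ M →
      (∀ s, z ∈ tsupport (c s) → ∀ l ≤ 2, ‖iteratedFDeriv ℝ l f (G s z)‖ ≤ M) →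
      ∀ j ≤ 2, ‖iteratedFDeriv ℝ j (Uop c G f) z‖ ≤ B * M := by
  choose B h0 hB using fun s => one_term (hc s) (hcp s) (hG s) (hGp s)
  refine ⟨∑ s, B s + 1, by have := Finset.sum_nonneg fun s (_ : s ∈ Finset.univ) => h0 s; linarith,
    fun f hf z M hM h j hj => ?_⟩
  have hcd : ∀ s ∈ Finset.univ, ContDiff ℝ j (fun z => c s z (f (G s z))) := fun s _ =>
    ((hc s).clm_apply (hf.comp (hG s))).of_le (by exact_mod_cast le_top)
  have e := iteratedFDeriv_sum (𝕜 := ℝ) hcd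
  have : iteratedFDeriv ℝ j (Uop c G f) z =
      ∑ s, iteratedFDeriv ℝ j (fun z => c s z (f (G s z))) z := by
    have := congrFun e z
    rw [Finset.sum_apply] at this
    exact this
  rw [this]
  calc _ ≤ ∑ s, ‖iteratedFDeriv ℝ j (fun z => c s z (f (G s z))) z‖ := norm_sum_le _ _
    _ ≤ ∑ s, B s * M := Finset.sum_le_sum fun s _ => hB s f hf z M hM (h s) j hj
    _ = (∑ s, B s) * M := by rw [Finset.sum_mul]
    _ ≤ _ := by gcongr; linarith

end

/-- A series whose derivatives up to order two are bounded by a summable sequence on an open set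
has a `C²` sum there. This follows from the corresponding global statement after multiplication by
a bump function. -/
lemma contDiffOn_tsum_two {X : Type*} [NormedAddCommGroup X] [NormedSpace ℝ X] [CompleteSpace X]
    {f : ℕ → ℝ × ℝ → X} (hf : ∀ n, ContDiff ℝ (⊤ : ℕ∞) (f n)) {O : Set (ℝ × ℝ)} (hO : IsOpen O)
    {v : ℕ → ℝ} (hv : Summable v) (hb : ∀ n, ∀ z ∈ O, ∀ j ≤ 2, ‖iteratedFDeriv ℝ j (f n) z‖ ≤ v n) :
    ContDiffOn ℝ 2 (fun z => ∑' n, f n z) O := by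
  intro z₀ hz₀
  apply ContDiffAt.contDiffWithinAt
  obtain ⟨χ, hχO, hχc, hχ, -, hχ1⟩ := exists_contDiff_tsupport_subset (n := ⊤) (hO.mem_nhds hz₀)
  have hbd : ∀ i, ∃ C, ∀ z, ‖iteratedFDeriv ℝ i χ z‖ ≤ C := fun i =>
    (hχ.continuous_iteratedFDeriv (m := i) (by exact_mod_cast le_top)).bounded_above_of_compact_support
      (hχc.iteratedFDeriv i)
  choose C hC using hbd
  have hv0 : ∀ n, 0 ≤ v n := fun n => (norm_nonneg _).trans (hb n z₀ hz₀ 0 (by norm_num))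
  have hC0 : ∀ i, 0 ≤ C i := fun i => (norm_nonneg _).trans (hC i z₀)
  have key : ContDiff ℝ ((2 : ℕ∞) : WithTop ℕ∞) fun z => ∑' n, χ z • f n z := by
    refine contDiff_tsum (v := fun k n =>
        (∑ i ∈ Finset.range (k + 1), (k.choose i : ℝ) * C i) * v n)
      (fun n => (hχ.smul (hf n)).of_le (by exact_mod_cast le_top))
      (fun k _ => hv.mul_left _) ?_
    intro k n z hk
    have hk2 : k ≤ 2 := by exact_mod_cast hk
    refine (norm_iteratedFDeriv_smul_le hχ (hf n) z (by exact_mod_cast le_top)).trans ?_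
    rw [Finset.sum_mul]
    refine Finset.sum_le_sum fun i _ => ?_
    by_cases hz : z ∈ tsupport χ
    · have h1 := hb n z (hχO hz) (k - i) (by omega)
      have h2 := hC i z
      have := hC0 i
      gcongr
    · have : iteratedFDeriv ℝ i χ z = 0 := by
        by_contra h0
        exact hz (support_iteratedFDeriv_subset i h0)
      rw [this]
      simp only [norm_zero, mul_zero, zero_mul]
      have := hC0 i
      have := hv0 n
      positivity
  have h2 : (fun z => ∑' n, f n z) =ᶠ[nhds z₀] fun z => (χ z)⁻¹ • ∑' n, χ z • f n z := by
    have : ∀ᶠ z in nhds z₀, χ z ≠ 0 :=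
      hχ.continuous.continuousAt.eventually_ne (by rw [hχ1]; norm_num)
    filter_upwards [this] with z hz
    rw [tsum_const_smul'', smul_smul, inv_mul_cancel₀ hz, one_smul]
  refine ContDiffAt.congr_of_eventuallyEq ?_ h2
  refine ContDiffAt.smul ?_ key.contDiffAt
  have hle : ((2 : ℕ∞) : WithTop ℕ∞) ≤ ((⊤ : ℕ∞) : WithTop ℕ∞) := by exact_mod_cast le_top
  refine ContDiffAt.inv (hχ.of_le hle).contDiffAt (by rw [hχ1]; norm_num)

/-! ### The circle and Möbius maps in the angular coordinate -/

lemma para_eq_iff (a b : ℝ) : para a = para b ↔ sin (π * (a - b)) = 0 := by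
  have hs : sin (π * (a - b)) = sin (π * a) * cos (π * b) - cos (π * a) * sin (π * b) := by
    rw [← sin_sub]; ring_nf
  unfold para
  rw [Projectivization.mk_eq_mk_iff']
  constructor
  · rintro ⟨r, hr⟩
    have h0 : r * cos (π * b) = cos (π * a) := by simpa using congrFun hr 0
    have h1 : r * sin (π * b) = sin (π * a) := by simpa using congrFun hr 1
    rw [hs, ← h0, ← h1]; ring
  · intro h
    rw [hs] at h
    have h2 := sin_sq_add_cos_sq (π * b)
    refine ⟨cos (π * a) * cos (π * b) + sin (π * a) * sin (π * b), ?_⟩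
    ext i; fin_cases i
    · simp; linear_combination cos (π * a) * h2 + (-sin (π * b)) * (-h)
    · simp; linear_combination sin (π * a) * h2 - cos (π * b) * h

lemma para_eq_iff_int (a b : ℝ) : para a = para b ↔ ∃ n : ℤ, a = b + n := by
  rw [para_eq_iff, sin_eq_zero_iff]
  constructor
  · rintro ⟨n, hn⟩
    refine ⟨n, ?_⟩
    have : π * (a - b - n) = 0 := by rw [mul_sub, ← hn]; ring
    have := (mul_eq_zero.1 this).resolve_left pi_ne_zero
    linarith
  · rintro ⟨n, rfl⟩
    exact ⟨n, by ring⟩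

lemma para_add_int (t : ℝ) (n : ℤ) : para (t + n) = para t := (para_eq_iff_int _ _).2 ⟨n, rfl⟩
lemma para_add_one (t : ℝ) : para (t + 1) = para t := by simpa using para_add_int t 1

/-- Lifts of a common point of the circle give the same vector up to sign. -/
lemma sign_of_para_eq {a b : ℝ} (h : para a = para b) :
    ∃ ε : ℝ, ε ^ 2 = 1 ∧ cos (π * a) = ε * cos (π * b) ∧ sin (π * a) = ε * sin (π * b) := by
  obtain ⟨n, rfl⟩ := (para_eq_iff_int _ _).1 h
  have hsn : sin (π * n) = 0 := by rw [mul_comm]; exact sin_int_mul_pi n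
  refine ⟨cos (π * n), ?_, ?_, ?_⟩
  · have := sin_sq_add_cos_sq (π * n); rw [hsn] at this; linarith
  · rw [mul_add, cos_add, hsn]; ring
  · rw [mul_add, sin_add, hsn]; ring

lemma para_surj : Surjective para := by
  intro x
  induction x using Projectivization.ind with
  | h v hv =>
    set z : ℂ := ⟨v 0, v 1⟩ with hz
    have hz0 : z ≠ 0 := by
      intro h
      apply hv
      ext i; fin_cases i
      · simpa using congrArg Complex.re h
      · simpa using congrArg Complex.im h
    refine ⟨z.arg / π, ?_⟩
    unfold para
    rw [Projectivization.mk_eq_mk_iff']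
    have hn : ‖z‖ ≠ 0 := norm_ne_zero_iff.2 hz0
    refine ⟨‖z‖⁻¹, ?_⟩
    have hp : π * (z.arg / π) = z.arg := by field_simp
    ext i; fin_cases i
    · simp [hp, Complex.cos_arg hz0]; field_simp; simp [z]
    · simp [hp, Complex.sin_arg]; field_simp; simp [z]

lemma para_inv (x : RP1) : para (invFun para x) = x := invFun_eq (para_surj x)

/-- First coordinate of the image under `A` of the unit vector of angle `π t`. -/
def uu (A : SL2) (t : ℝ) : ℝ := A 0 0 * cos (π * t) + A 0 1 * sin (π * t)
/-- Second coordinate of the image under `A` of the unit vector of angle `π t`. -/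
def ww (A : SL2) (t : ℝ) : ℝ := A 1 0 * cos (π * t) + A 1 1 * sin (π * t)
/-- Squared norm of the image under `A` of the unit vector of angle `π t`; its inverse is the
derivative of `mobius A` at `para t` in the angular coordinate. -/
def NA (A : SL2) (t : ℝ) : ℝ := uu A t ^ 2 + ww A t ^ 2
/-- `NA` as a function on the circle. The preimage under `para` is unique up to an integer, which
does not affect `NA`. -/
def NN (A : SL2) (x : RP1) : ℝ := NA A (invFun para x)
/-- Squared Frobenius norm. -/
def Fr (A : SL2) : ℝ := A 0 0 ^ 2 + A 0 1 ^ 2 + A 1 0 ^ 2 + A 1 1 ^ 2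
/-- Squared chordal distance on the circle, `sin²` of the angle between two lines. -/
def sqc (x y : RP1) : ℝ := sin (π * (invFun para x - invFun para y)) ^ 2

lemma sl2_det (A : SL2) : A 0 0 * A 1 1 - A 0 1 * A 1 0 = 1 := by
  have := A.det_coe; rwa [Matrix.det_fin_two] at this

lemma uw_sign {a b : ℝ} (h : para a = para b) (A : SL2) :
    ∃ ε : ℝ, ε ^ 2 = 1 ∧ uu A a = ε * uu A b ∧ ww A a = ε * ww A b := by
  obtain ⟨ε, h1, h2, h3⟩ := sign_of_para_eq h
  refine ⟨ε, h1, ?_, ?_⟩ <;> simp only [uu, ww, h2, h3] <;> ring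

lemma NA_congr {a b : ℝ} (h : para a = para b) (A : SL2) : NA A a = NA A b := by
  obtain ⟨ε, h1, h2, h3⟩ := uw_sign h A
  simp only [NA, h2, h3]; linear_combination (uu A b ^ 2 + ww A b ^ 2) * h1

lemma NN_para (A : SL2) (t : ℝ) : NN A (para t) = NA A t := NA_congr (para_inv _) A

lemma sqc_para (a b : ℝ) : sqc (para a) (para b) = sin (π * (a - b)) ^ 2 := by
  have hs : ∀ a b, sin (π * (a - b)) = sin (π * a) * cos (π * b) - cos (π * a) * sin (π * b) := by
    intro a b; rw [← sin_sub]; ring_nf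
  obtain ⟨ε, h1, h2, h3⟩ := sign_of_para_eq (para_inv (para a))
  obtain ⟨δ, k1, k2, k3⟩ := sign_of_para_eq (para_inv (para b))
  rw [sqc, hs, hs, h2, h3, k2, k3]
  linear_combination (sin (π * a) * cos (π * b) - cos (π * a) * sin (π * b))^2 * (δ^2 * h1 + k1)

lemma sqc_comm (x y : RP1) : sqc x y = sqc y x := by
  rw [sqc, sqc, ← neg_sub, mul_neg, sin_neg, neg_sq]
lemma sqc_nonneg (x y : RP1) : 0 ≤ sqc x y := sq_nonneg _
lemma sqc_le_one (x y : RP1) : sqc x y ≤ 1 := sin_sq_le_one _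
lemma sqc_eq_zero {x y : RP1} : sqc x y = 0 ↔ x = y := by
  obtain ⟨a, rfl⟩ := para_surj x
  obtain ⟨b, rfl⟩ := para_surj y
  rw [sqc_para, para_eq_iff]; simp
lemma sqc_pos {x y : RP1} (h : x ≠ y) : 0 < sqc x y :=
  lt_of_le_of_ne (sqc_nonneg _ _) fun h' => h (sqc_eq_zero.1 h'.symm)

lemma NA_pos (A : SL2) (t : ℝ) : 0 < NA A t := by
  have h := sin_sq_add_cos_sq (π * t)
  have hd := sl2_det A
  by_contra hn
  have h1 : uu A t = 0 := by unfold NA at hn; nlinarith [sq_nonneg (uu A t), sq_nonneg (ww A t)]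
  have h2 : ww A t = 0 := by unfold NA at hn; nlinarith [sq_nonneg (uu A t), sq_nonneg (ww A t)]
  have e1 : cos (π * t) = A 1 1 * uu A t - A 0 1 * ww A t := by
    unfold uu ww; linear_combination -cos (π * t) * hd
  have e2 : sin (π * t) = A 0 0 * ww A t - A 1 0 * uu A t := by
    unfold uu ww; linear_combination -sin (π * t) * hd
  rw [h1, h2] at e1 e2
  rw [e1, e2] at h
  norm_num at h

lemma NN_pos (A : SL2) (x : RP1) : 0 < NN A x := NA_pos _ _

lemma mobius_mk (A : SL2) (v : Fin 2 → ℝ) (hv : v ≠ 0) (hv' : (A : Matrix (Fin 2) (Fin 2) ℝ).mulVec v ≠ 0) :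
    mobius A (Projectivization.mk ℝ v hv) = Projectivization.mk ℝ ((A : Matrix (Fin 2) (Fin 2) ℝ).mulVec v) hv' := by
  rw [mobius, Projectivization.map_mk]
  rfl

/-- The image of the unit vector of angle `π a` is `±√(NA A a)` times the unit vector of angle `π
b`. -/
lemma mobius_para_vec (A : SL2) {a b : ℝ} (h : mobius A (para a) = para b) :
    ∃ r : ℝ, r ^ 2 = NA A a ∧ uu A a = r * cos (π * b) ∧ ww A a = r * sin (π * b) := by
  unfold para at h
  rw [mobius, Projectivization.map_mk, Projectivization.mk_eq_mk_iff'] at h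
  obtain ⟨r, hr⟩ := h
  have h0 : r * cos (π * b) = uu A a := by
    have := congrFun hr 0
    simp [Matrix.SpecialLinearGroup.toLin'_apply, Matrix.mulVec, dotProduct, Fin.sum_univ_two] at this
    exact this
  have h1 : r * sin (π * b) = ww A a := by
    have := congrFun hr 1
    simp [Matrix.SpecialLinearGroup.toLin'_apply, Matrix.mulVec, dotProduct, Fin.sum_univ_two] at this
    exact this
  refine ⟨r, ?_, h0.symm, h1.symm⟩
  rw [NA, ← h0, ← h1]
  linear_combination -r ^ 2 * sin_sq_add_cos_sq (π * b)

lemma mobius_para_of_vec (A : SL2) {a b r : ℝ}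
    (h0 : uu A a = r * cos (π * b)) (h1 : ww A a = r * sin (π * b)) : mobius A (para a) = para b := by
  unfold para
  rw [mobius, Projectivization.map_mk, Projectivization.mk_eq_mk_iff']
  refine ⟨r, ?_⟩
  ext i; fin_cases i
  · simp [Matrix.SpecialLinearGroup.toLin'_apply, Matrix.mulVec, dotProduct, Fin.sum_univ_two]
    exact h0.symm
  · simp [Matrix.SpecialLinearGroup.toLin'_apply, Matrix.mulVec, dotProduct, Fin.sum_univ_two]
    exact h1.symm

/-- A Möbius map scales squared chordal distances by the product of its
derivatives at the two points. -/
lemma sqc_mobius (A : SL2) (x y : RP1) :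
    sqc (mobius A x) (mobius A y) * NN A x * NN A y = sqc x y := by
  obtain ⟨a, rfl⟩ := para_surj x
  obtain ⟨b, rfl⟩ := para_surj y
  obtain ⟨a', ha⟩ := para_surj (mobius A (para a))
  obtain ⟨b', hb⟩ := para_surj (mobius A (para b))
  obtain ⟨r, r1, r2, r3⟩ := mobius_para_vec A ha.symm
  obtain ⟨s, s1, s2, s3⟩ := mobius_para_vec A hb.symm
  have hs : ∀ a b, sin (π * (a - b)) = sin (π * a) * cos (π * b) - cos (π * a) * sin (π * b) := by
    intro a b; rw [← sin_sub]; ring_nf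
  rw [← ha, ← hb, sqc_para, sqc_para, NN_para, NN_para, ← r1, ← s1]
  have key : r * s * sin (π * (a' - b')) = sin (π * (a - b)) := by
    have e : r * s * sin (π * (a' - b')) = ww A a * uu A b - uu A a * ww A b := by
      rw [hs, r2, r3, s2, s3]; ring
    rw [e, hs]; unfold uu ww
    linear_combination (sin (π * a) * cos (π * b) - cos (π * a) * sin (π * b)) * sl2_det A
  rw [← key]; ring

lemma mobius_mul (A B : SL2) (x : RP1) : mobius (A * B) x = mobius A (mobius B x) := by
  induction x using Projectivization.ind with
  | h v hv =>
    simp only [mobius, Projectivization.map_mk]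
    congr 1
    simp [Matrix.SpecialLinearGroup.toLin'_apply]

lemma mobius_one (x : RP1) : mobius 1 x = x := by
  induction x using Projectivization.ind with
  | h v hv => simp [mobius, Projectivization.map_mk]

lemma mul_entries (A B : SL2) (i j : Fin 2) : (A * B) i j = A i 0 * B 0 j + A i 1 * B 1 j := by
  rw [Matrix.SpecialLinearGroup.coe_mul, Matrix.mul_apply, Fin.sum_univ_two]

/-- Chain rule for the inverse derivatives of Möbius maps. -/
lemma NN_mul (A B : SL2) (x : RP1) : NN (A * B) x = NN A (mobius B x) * NN B x := by
  obtain ⟨a, rfl⟩ := para_surj x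
  obtain ⟨a', ha⟩ := para_surj (mobius B (para a))
  obtain ⟨r, r1, r2, r3⟩ := mobius_para_vec B ha.symm
  rw [← ha, NN_para, NN_para, NN_para, ← r1]
  have e1 : uu (A * B) a = r * uu A a' := by
    have : uu (A * B) a = A 0 0 * uu B a + A 0 1 * ww B a := by
      simp only [uu, ww, mul_entries]; ring
    rw [this, r2, r3]; unfold uu; ring
  have e2 : ww (A * B) a = r * ww A a' := by
    have : ww (A * B) a = A 1 0 * uu B a + A 1 1 * ww B a := by
      simp only [uu, ww, mul_entries]; ring
    rw [this, r2, r3]; unfold ww; ring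
  rw [NA, e1, e2, NA]; ring

/-- Matrices of the same Möbius map agree up to sign. -/
lemma mobius_sign {A B : SL2} (h : mobius A = mobius B) :
    ∃ ε : ℝ, ε ^ 2 = 1 ∧ ∀ i j, B i j = ε * A i j := by
  have key : ∀ t, uu A t * ww B t - ww A t * uu B t = 0 := by
    intro t
    obtain ⟨b, hb⟩ := para_surj (mobius A (para t))
    obtain ⟨r, r1, r2, r3⟩ := mobius_para_vec A hb.symm
    rw [h] at hb
    obtain ⟨s, s1, s2, s3⟩ := mobius_para_vec B hb.symm
    rw [r2, r3, s2, s3]; ring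
  have k0 := key 0
  have k1 := key (1/2)
  have k2 := key (1/4)
  have c2 : π * (1/2) = π / 2 := by ring
  have c4 : π * (1/4) = π / 4 := by ring
  simp only [uu, ww, mul_zero, cos_zero, sin_zero, c2, c4, cos_pi_div_two, sin_pi_div_two,
    cos_pi_div_four, sin_pi_div_four, mul_one, add_zero, zero_add] at k0 k1 k2
  have hA := sl2_det A
  have hB := sl2_det B
  have h2 : (√2 / 2) * (√2 / 2) = 1 / 2 := by
    have := Real.mul_self_sqrt (show (0:ℝ) ≤ 2 by norm_num); linarith
  have k2' : A 0 0 * B 1 1 + A 0 1 * B 1 0 - A 1 0 * B 0 1 - A 1 1 * B 0 0 = 0 := by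
    have : (A 0 0 + A 0 1) * (B 1 0 + B 1 1) - (A 1 0 + A 1 1) * (B 0 0 + B 0 1) = 0 := by
      linear_combination 2 * k2 - 2 * ((A 0 0 + A 0 1) * (B 1 0 + B 1 1) - (A 1 0 + A 1 1) * (B 0 0 + B 0 1)) * h2
    linarith
  -- the common ratio is `tr (A⁻¹ B) / 2`, i.e. `B = ε A`
  set ε := A 1 1 * B 0 0 - A 0 1 * B 1 0 with hε
  have e' : ε = A 0 0 * B 1 1 - A 1 0 * B 0 1 := by rw [hε]; linarith
  have b00 : B 0 0 = ε * A 0 0 := by rw [hε]; linear_combination -B 0 0 * hA + A 0 1 * k0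
  have b10 : B 1 0 = ε * A 1 0 := by rw [hε]; linear_combination -B 1 0 * hA + A 1 1 * k0
  have b01 : B 0 1 = ε * A 0 1 := by rw [e']; linear_combination -B 0 1 * hA - A 0 0 * k1
  have b11 : B 1 1 = ε * A 1 1 := by rw [e']; linear_combination -B 1 1 * hA - A 1 0 * k1
  refine ⟨ε, ?_, ?_⟩
  · rw [b00, b01, b10, b11] at hB; linear_combination hB - ε^2 * hA
  · intro i j; fin_cases i <;> fin_cases j <;> assumption

lemma NN_sign {A B : SL2} (h : mobius A = mobius B) (x : RP1) : NN A x = NN B x := by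
  obtain ⟨ε, h1, h2⟩ := mobius_sign h
  simp only [NN, NA, uu, ww, h2]
  linear_combination -((A 0 0 * cos (π * invFun para x) + A 0 1 * sin (π * invFun para x)) ^ 2 +
    (A 1 0 * cos (π * invFun para x) + A 1 1 * sin (π * invFun para x)) ^ 2) * h1
lemma Fr_sign {A B : SL2} (h : mobius A = mobius B) : Fr A = Fr B := by
  obtain ⟨ε, h1, h2⟩ := mobius_sign h
  simp only [Fr, h2]
  linear_combination -(A 0 0 ^ 2 + A 0 1 ^ 2 + A 1 0 ^ 2 + A 1 1 ^ 2) * h1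

/-! ### Topology of the circle -/

lemma para_cont : Continuous para := by
  have h1 : Continuous fun t : ℝ => (⟨![cos (π * t), sin (π * t)], cossin_ne_zero t⟩ :
      {v : Fin 2 → ℝ // v ≠ 0}) := by
    refine Continuous.subtype_mk ?_ _
    refine continuous_pi fun i => ?_
    fin_cases i <;> simp <;> fun_prop
  exact (continuous_quotient_mk' (s := projectivizationSetoid ℝ (Fin 2 → ℝ))).comp h1

/-- The double-angle embedding of the projective line in the plane. -/
def dbl : RP1 → ℝ × ℝ :=
  Projectivization.lift (fun v : {v : Fin 2 → ℝ // v ≠ 0} =>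
    (((v.1 0) ^ 2 - (v.1 1) ^ 2) / ((v.1 0) ^ 2 + (v.1 1) ^ 2),
      (2 * v.1 0 * v.1 1) / ((v.1 0) ^ 2 + (v.1 1) ^ 2))) (by
    rintro ⟨a, ha⟩ ⟨b, hb⟩ t h
    change a = t • b at h
    have h0 : a 0 = t * b 0 := by rw [h]; rfl
    have h1 : a 1 = t * b 1 := by rw [h]; rfl
    have ht : t ≠ 0 := by
      rintro rfl; apply ha; rw [h]; simp
    simp only [h0, h1]
    have e : (t * b 0) ^ 2 + (t * b 1) ^ 2 = t ^ 2 * (b 0 ^ 2 + b 1 ^ 2) := by ring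
    have e1 : (t * b 0) ^ 2 - (t * b 1) ^ 2 = t ^ 2 * (b 0 ^ 2 - b 1 ^ 2) := by ring
    have e2 : 2 * (t * b 0) * (t * b 1) = t ^ 2 * (2 * b 0 * b 1) := by ring
    rw [e, e1, e2, mul_div_mul_left _ _ (pow_ne_zero 2 ht), mul_div_mul_left _ _ (pow_ne_zero 2 ht)])

lemma sq_sum_ne {v : Fin 2 → ℝ} (hv : v ≠ 0) : v 0 ^ 2 + v 1 ^ 2 ≠ 0 := by
  intro h
  apply hv
  ext i; fin_cases i
  · simp; nlinarith [sq_nonneg (v 0), sq_nonneg (v 1)]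
  · simp; nlinarith [sq_nonneg (v 0), sq_nonneg (v 1)]

lemma dbl_cont : Continuous dbl := by
  have : Continuous (fun v : {v : Fin 2 → ℝ // v ≠ 0} =>
    (((v.1 0) ^ 2 - (v.1 1) ^ 2) / ((v.1 0) ^ 2 + (v.1 1) ^ 2),
      (2 * v.1 0 * v.1 1) / ((v.1 0) ^ 2 + (v.1 1) ^ 2))) := by
    have c0 : Continuous fun v : {v : Fin 2 → ℝ // v ≠ 0} => v.1 0 :=
      (continuous_apply 0).comp continuous_subtype_val
    have c1 : Continuous fun v : {v : Fin 2 → ℝ // v ≠ 0} => v.1 1 :=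
      (continuous_apply 1).comp continuous_subtype_val
    refine Continuous.prodMk ?_ ?_
    · exact ((c0.pow 2).sub (c1.pow 2)).div ((c0.pow 2).add (c1.pow 2)) fun v => sq_sum_ne v.2
    · exact ((continuous_const.mul c0).mul c1).div ((c0.pow 2).add (c1.pow 2)) fun v => sq_sum_ne v.2
  exact Continuous.quotient_lift (s := projectivizationSetoid ℝ (Fin 2 → ℝ)) this _

lemma dbl_para (t : ℝ) : dbl (para t) = (cos (2 * (π * t)), sin (2 * (π * t))) := by
  unfold para dbl
  rw [Projectivization.lift_mk]
  have h := cos_sq_add_sin_sq (π * t)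
  simp only [Matrix.cons_val_zero, Matrix.cons_val_one, h, div_one, cos_two_mul', sin_two_mul]
  refine Prod.ext rfl ?_
  simp only; ring

lemma dbl_inj : Injective dbl := by
  intro x y h
  obtain ⟨a, rfl⟩ := para_surj x
  obtain ⟨b, rfl⟩ := para_surj y
  rw [dbl_para, dbl_para, Prod.mk.injEq] at h
  rw [para_eq_iff]
  have : cos (2 * (π * a) - 2 * (π * b)) = 1 := by
    rw [cos_sub, h.1, h.2]; linarith [cos_sq_add_sin_sq (2 * (π * b))]
  have h2 : 2 * (π * a) - 2 * (π * b) = 2 * (π * (a - b)) := by ring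
  rw [h2, cos_two_mul', ] at this
  nlinarith [cos_sq_add_sin_sq (π * (a - b))]

instance : T2Space RP1 := T2Space.of_injective_continuous dbl_inj dbl_cont

lemma para_image_Icc (x : RP1) : ∃ t ∈ Icc (0:ℝ) 1, para t = x := by
  obtain ⟨t, rfl⟩ := para_surj x
  refine ⟨Int.fract t, ⟨Int.fract_nonneg t, (Int.fract_lt_one t).le⟩, ?_⟩
  rw [para_eq_iff_int]
  exact ⟨-⌊t⌋, by push_cast; rw [Int.fract]; ring⟩

instance : CompactSpace RP1 := by
  constructor
  have : (univ : Set RP1) = para '' Icc 0 1 := by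
    ext x; simp only [mem_univ, true_iff]; exact para_image_Icc x
  rw [this]
  exact isCompact_Icc.image para_cont

/-- `para` is a topological quotient map, being a continuous surjection from a compact interval. -/
lemma cont_of_para {Y : Type*} [TopologicalSpace Y] {f : RP1 → Y} (h : Continuous (f ∘ para)) :
    Continuous f := by
  let q : Icc (0:ℝ) 1 → RP1 := fun t => para t
  have hq : Continuous q := para_cont.comp continuous_subtype_val
  have : Topology.IsQuotientMap q := hq.isClosedMap.isQuotientMap hq fun x => by
    obtain ⟨t, ht, h⟩ := para_image_Icc x; exact ⟨⟨t, ht⟩, h⟩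
  exact this.continuous_iff.2 (h.comp continuous_subtype_val)

lemma cont_of_para2 {Y : Type*} [TopologicalSpace Y] {f : RP1 × RP1 → Y}
    (h : Continuous fun z : ℝ × ℝ => f (para z.1, para z.2)) : Continuous f := by
  let q : Icc (0:ℝ) 1 × Icc (0:ℝ) 1 → RP1 × RP1 := fun t => (para t.1, para t.2)
  have hq : Continuous q := by
    refine Continuous.prodMk (para_cont.comp ?_) (para_cont.comp ?_) <;> fun_prop
  have : Topology.IsQuotientMap q := hq.isClosedMap.isQuotientMap hq fun x => by
    obtain ⟨t, ht, h⟩ := para_image_Icc x.1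
    obtain ⟨s, hs, k⟩ := para_image_Icc x.2
    exact ⟨(⟨t, ht⟩, ⟨s, hs⟩), Prod.ext h k⟩
  rw [this.continuous_iff]
  exact h.comp (g := fun z : ℝ × ℝ => f (para z.1, para z.2))
    (f := fun t : Icc (0:ℝ) 1 × Icc (0:ℝ) 1 => ((t.1 : ℝ), (t.2 : ℝ))) (by fun_prop)

lemma sqc_cont : Continuous fun z : RP1 × RP1 => sqc z.1 z.2 := by
  apply cont_of_para2
  simp only [sqc_para]
  fun_prop

lemma NA_smooth (A : SL2) : ContDiff ℝ (⊤ : ℕ∞) (NA A) := by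
  unfold NA uu ww; fun_prop

lemma NN_cont (A : SL2) : Continuous (NN A) := by
  apply cont_of_para
  have : NN A ∘ para = NA A := by funext t; exact NN_para A t
  rw [this]; exact (NA_smooth A).continuous

lemma mobius_cont (A : SL2) : Continuous (mobius A) := by
  apply cont_of_para
  have h1 : Continuous fun t : ℝ => (⟨![uu A t, ww A t], by
      intro h
      have h0 : uu A t = 0 := by simpa using congrFun h 0
      have h1 : ww A t = 0 := by simpa using congrFun h 1
      have := NA_pos A t
      rw [NA, h0, h1] at this; norm_num at this⟩ : {v : Fin 2 → ℝ // v ≠ 0}) := by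
    refine Continuous.subtype_mk ?_ _
    refine continuous_pi fun i => ?_
    unfold uu ww
    fin_cases i <;> simp <;> fun_prop
  have h2 := (continuous_quotient_mk' (s := projectivizationSetoid ℝ (Fin 2 → ℝ))).comp h1
  refine (continuous_congr fun t => ?_).2 h2
  change mobius A (para t) = Projectivization.mk ℝ ![uu A t, ww A t] _
  unfold para mobius
  rw [Projectivization.map_mk]
  congr 1
  ext i
  fin_cases i <;> simp [Matrix.SpecialLinearGroup.toLin'_apply, Matrix.mulVec, dotProduct, Fin.sum_univ_two, uu, ww]

/-- Uniform continuity with respect to the chordal distance. -/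
lemma sqc_unif {h : RP1 → RP1} (hc : Continuous h) {κ : ℝ} (hκ : 0 < κ) :
    ∃ η > 0, ∀ x y, sqc x y ≤ η → sqc (h x) (h y) < κ := by
  by_contra hcon
  push Not at hcon
  let K : Set (RP1 × RP1) := {z | κ ≤ sqc (h z.1) (h z.2)}
  have hK : IsCompact K := by
    apply IsClosed.isCompact
    exact isClosed_le continuous_const (sqc_cont.comp (f := fun z : RP1 × RP1 => (h z.1, h z.2))
      (by fun_prop))
  have hne : K.Nonempty := by
    obtain ⟨x, y, -, h⟩ := hcon 1 one_pos
    exact ⟨(x, y), h⟩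
  obtain ⟨z, hz, hmin⟩ := hK.exists_isMinOn hne sqc_cont.continuousOn
  have hpos : 0 < sqc z.1 z.2 := by
    apply sqc_pos
    intro he
    have : κ ≤ sqc (h z.1) (h z.2) := hz
    rw [he, sqc_eq_zero.2 rfl] at this
    linarith
  obtain ⟨x, y, h1, h2⟩ := hcon (sqc z.1 z.2 / 2) (by linarith)
  have := hmin (show (x, y) ∈ K from h2)
  simp only [mem_ofPred_eq] at this
  linarith

/-- A smooth nonnegative `1`-periodic function positive exactly over a given open set. -/
lemma exists_bump {V : Set RP1} (hV : IsOpen V) :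
    ∃ φ : ℝ → ℝ, ContDiff ℝ (⊤ : ℕ∞) φ ∧ (∀ t, φ (t + 1) = φ t) ∧ (∀ t, 0 ≤ φ t) ∧
      ∀ t, 0 < φ t ↔ para t ∈ V := by
  let O : Set (ℝ × ℝ) := {z | ∃ (_ : ![z.1, z.2] ≠ 0), Projectivization.mk ℝ ![z.1, z.2] ‹_› ∈ V}
  have hO : IsOpen O := by
    have hop : IsOpen {z : ℝ × ℝ | ![z.1, z.2] ≠ 0} := by
      apply isOpen_ne_fun
      · refine continuous_pi fun i => ?_
        fin_cases i <;> simp <;> fun_prop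
      · exact continuous_const
    have hc : Continuous fun z : {z : ℝ × ℝ | ![z.1, z.2] ≠ 0} =>
        (⟨![z.1.1, z.1.2], z.2⟩ : {v : Fin 2 → ℝ // v ≠ 0}) := by
      refine Continuous.subtype_mk ?_ _
      refine continuous_pi fun i => ?_
      fin_cases i <;> simp <;> fun_prop
    have := hV.preimage ((continuous_quotient_mk' (s := projectivizationSetoid ℝ (Fin 2 → ℝ))).comp hc)
    have h2 := hop.isOpenMap_subtype_val _ this
    convert h2 using 1
    ext z
    constructor
    · rintro ⟨h, h'⟩; exact ⟨⟨z, h⟩, h', rfl⟩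
    · rintro ⟨⟨z', h⟩, h', rfl⟩; exact ⟨h, h'⟩
  obtain ⟨f, hf, hfs, hr⟩ := hO.exists_contDiff_support_eq (n := ⊤)
  have hf0 : ∀ z, 0 ≤ f z := fun z => (hr (mem_range_self z)).1
  have hpos : ∀ z, 0 < f z ↔ z ∈ O := fun z => by
    rw [← hf, mem_support]
    exact ⟨fun h => h.ne', fun h => lt_of_le_of_ne (hf0 z) h.symm⟩
  have hpara : ∀ t, (cos (π * t), sin (π * t)) ∈ O ↔ para t ∈ V := fun t =>
    ⟨fun ⟨_, h⟩ => h, fun h => ⟨cossin_ne_zero t, h⟩⟩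
  have hshift : ∀ t, (cos (π * (t + 1)), sin (π * (t + 1))) = (-cos (π * t), -sin (π * t)) := by
    intro t; rw [mul_add, mul_one, cos_add_pi, sin_add_pi]
  refine ⟨fun t => f (cos (π * t), sin (π * t)) + f (-cos (π * t), -sin (π * t)), ?_, ?_, ?_, ?_⟩
  · apply ContDiff.add <;> exact hfs.comp (by fun_prop)
  · intro t
    have := hshift t
    simp only [Prod.mk.injEq] at this
    simp only [this.1, this.2]
    rw [neg_neg, neg_neg, add_comm]
  · intro t; exact add_nonneg (hf0 _) (hf0 _)
  · intro t
    have h1 : 0 < f (-cos (π * t), -sin (π * t)) ↔ para t ∈ V := by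
      rw [← hshift, hpos, hpara, para_add_one]
    have h2 : 0 < f (cos (π * t), sin (π * t)) ↔ para t ∈ V := by rw [hpos, hpara]
    constructor
    · intro h
      by_contra hn
      have a := le_antisymm (not_lt.1 (mt h1.1 hn)) (hf0 _)
      have b := le_antisymm (not_lt.1 (mt h2.1 hn)) (hf0 _)
      simp only [a, b] at h; norm_num at h
    · intro h; exact add_pos (h2.2 h) (h1.2 h)

/-! ### Norm estimates and the dynamical system -/

lemma sin_pi_diff (a b : ℝ) :
    sin (π * (a - b)) = sin (π * a) * cos (π * b) - cos (π * a) * sin (π * b) := by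
  rw [← sin_sub]; ring_nf
lemma cos_pi_diff (a b : ℝ) :
    cos (π * (a - b)) = cos (π * a) * cos (π * b) + sin (π * a) * sin (π * b) := by
  rw [← cos_sub]; ring_nf

/-- The norm of a matrix is controlled by its values on two transverse directions. -/
lemma Fr_bound (A : SL2) (a b : ℝ) :
    Fr A * sin (π * (a - b)) ^ 2 ≤ 2 * (NA A a + NA A b) := by
  set D := sin (π * (a - b)) with hD
  have ha := sin_sq_add_cos_sq (π * a)
  have hb := sin_sq_add_cos_sq (π * b)
  have e00 : A 0 0 * D = sin (π * a) * uu A b - sin (π * b) * uu A a := by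
    rw [hD, sin_pi_diff]; unfold uu; ring
  have e01 : A 0 1 * D = cos (π * b) * uu A a - cos (π * a) * uu A b := by
    rw [hD, sin_pi_diff]; unfold uu; ring
  have e10 : A 1 0 * D = sin (π * a) * ww A b - sin (π * b) * ww A a := by
    rw [hD, sin_pi_diff]; unfold ww; ring
  have e11 : A 1 1 * D = cos (π * b) * ww A a - cos (π * a) * ww A b := by
    rw [hD, sin_pi_diff]; unfold ww; ring
  have : Fr A * D ^ 2 = (A 0 0 * D)^2 + (A 0 1 * D)^2 + (A 1 0 * D)^2 + (A 1 1 * D)^2 := by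
    unfold Fr; ring
  rw [this, e00, e01, e10, e11]
  have key : ∀ p q : ℝ, (sin (π * a) * p - sin (π * b) * q)^2 + (cos (π * b) * q - cos (π * a) * p)^2
      ≤ 2 * (p^2 + q^2) := by
    intro p q
    have : 2 * (p^2 + q^2) = 2 * (p^2 * (sin (π * a) ^ 2 + cos (π * a) ^ 2) +
      q^2 * (sin (π * b) ^ 2 + cos (π * b) ^ 2)) := by rw [ha, hb]; ring
    rw [this]
    nlinarith [sq_nonneg (sin (π * a) * p + sin (π * b) * q), sq_nonneg (cos (π * b) * q + cos (π * a) * p)]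
  have k1 := key (uu A b) (uu A a)
  have k2 := key (ww A b) (ww A a)
  unfold NA
  linarith

/-- If `A` is small on the direction `b`, it is small on nearby directions. -/
lemma NA_compare (A : SL2) (a b : ℝ) :
    NA A a ≤ 2 * cos (π * (a - b)) ^ 2 * NA A b + 2 * sin (π * (a - b)) ^ 2 * Fr A := by
  have ha := sin_sq_add_cos_sq (π * a)
  have hb := sin_sq_add_cos_sq (π * b)
  set C := cos (π * (a - b)) with hC
  set D := sin (π * (a - b)) with hD
  have c1 : cos (π * a) = C * cos (π * b) - D * sin (π * b) := by
    rw [hC, hD, sin_pi_diff, cos_pi_diff]; linear_combination -cos (π * a) * hb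
  have c2 : sin (π * a) = C * sin (π * b) + D * cos (π * b) := by
    rw [hC, hD, sin_pi_diff, cos_pi_diff]; linear_combination -sin (π * a) * hb
  have e1 : uu A a = C * uu A b + D * (A 0 1 * cos (π * b) - A 0 0 * sin (π * b)) := by
    unfold uu; rw [c1, c2]; ring
  have e2 : ww A a = C * ww A b + D * (A 1 1 * cos (π * b) - A 1 0 * sin (π * b)) := by
    unfold ww; rw [c1, c2]; ring
  have cs : ∀ p q : ℝ, (p * cos (π * b) - q * sin (π * b)) ^ 2 ≤ p ^ 2 + q ^ 2 := by
    intro p q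
    nlinarith [sq_nonneg (p * sin (π * b) + q * cos (π * b))]
  have f1 := cs (A 0 1) (A 0 0)
  have f2 := cs (A 1 1) (A 1 0)
  have : ∀ x y : ℝ, (C * x + D * y) ^ 2 ≤ 2 * C ^ 2 * x ^ 2 + 2 * D ^ 2 * y ^ 2 := by
    intro x y; nlinarith [sq_nonneg (C * x - D * y)]
  have g1 := this (uu A b) (A 0 1 * cos (π * b) - A 0 0 * sin (π * b))
  have g2 := this (ww A b) (A 1 1 * cos (π * b) - A 1 0 * sin (π * b))
  have hh : 2 * D ^ 2 * ((A 0 1 * cos (π * b) - A 0 0 * sin (π * b))^2 +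
      (A 1 1 * cos (π * b) - A 1 0 * sin (π * b)) ^ 2) ≤ 2 * D ^ 2 * Fr A := by
    apply mul_le_mul_of_nonneg_left _ (by positivity)
    unfold Fr; linarith
  unfold NA
  rw [e1, e2]
  linarith

lemma NA_le_Fr (A : SL2) (a : ℝ) : NA A a ≤ Fr A := by
  have ha := sin_sq_add_cos_sq (π * a)
  unfold NA uu ww Fr
  nlinarith [sq_nonneg (A 0 0 * sin (π * a) - A 0 1 * cos (π * a)),
    sq_nonneg (A 1 0 * sin (π * a) - A 1 1 * cos (π * a))]

/-- On a set without isolated points where a smooth circle map agrees with a Möbius map, their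
derivatives agree too. -/
lemma deriv_eq_on {A : SL2} {F : ℝ → ℝ} {Lt : Set ℝ} (hL : NoIsol Lt) (hF : Differentiable ℝ F)
    (h : ∀ t ∈ Lt, mobius A (para t) = para (F t)) : ∀ t ∈ Lt, deriv F t * NA A t = 1 := by
  intro t ht
  have hπ : ∀ t, HasDerivAt (fun s : ℝ => π * s) π t := fun t => by
    simpa using (hasDerivAt_id t).const_mul π
  have hu : HasDerivAt (uu A) (A 0 0 * (-sin (π * t) * π) + A 0 1 * (cos (π * t) * π)) t :=
    ((hπ t).cos.const_mul _).add ((hπ t).sin.const_mul _)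
  have hw : HasDerivAt (ww A) (A 1 0 * (-sin (π * t) * π) + A 1 1 * (cos (π * t) * π)) t :=
    ((hπ t).cos.const_mul _).add ((hπ t).sin.const_mul _)
  have hf : HasDerivAt (fun s => π * F s) (π * deriv F t) t := (hF t).hasDerivAt.const_mul π
  have hm := (hu.mul hf.sin).sub (hw.mul hf.cos)
  have h0 := deriv_zero_of_frequently hm hL ht (fun s hs => by
    obtain ⟨r, -, r2, r3⟩ := mobius_para_vec A (h s hs)
    simp [r2, r3]; ring)
  obtain ⟨r, r1, r2, r3⟩ := mobius_para_vec A (h t ht)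
  have hd := sl2_det A
  have hb := sin_sq_add_cos_sq (π * F t)
  have ha := sin_sq_add_cos_sq (π * t)
  rw [← r1]
  set c := cos (π * F t)
  set s := sin (π * F t)
  have r2' := r2
  have r3' := r3
  unfold uu at r2'
  unfold ww at r3'
  rw [r2, r3] at h0
  have key : π * (deriv F t * r ^ 2 - 1) = 0 := by
    have h1 : r * ((A 0 0 * (-sin (π * t) * π) + A 0 1 * (cos (π * t) * π)) * s -
      (A 1 0 * (-sin (π * t) * π) + A 1 1 * (cos (π * t) * π)) * c + r * (π * deriv F t)) = 0 := by
      linear_combination r * h0 - r * r * π * deriv F t * hb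
    have h2 : r * ((A 0 0 * (-sin (π * t) * π) + A 0 1 * (cos (π * t) * π)) * s -
      (A 1 0 * (-sin (π * t) * π) + A 1 1 * (cos (π * t) * π)) * c) = -π := by
      have : r * ((A 0 0 * (-sin (π * t) * π) + A 0 1 * (cos (π * t) * π)) * s -
      (A 1 0 * (-sin (π * t) * π) + A 1 1 * (cos (π * t) * π)) * c) = 
        (A 0 0 * (-sin (π * t) * π) + A 0 1 * (cos (π * t) * π)) * (r * s) -
      (A 1 0 * (-sin (π * t) * π) + A 1 1 * (cos (π * t) * π)) * (r * c) := by ring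
      rw [this, ← r2', ← r3']
      linear_combination (-π) * (sin (π * t) ^ 2 + cos (π * t) ^ 2) * hd - π * ha
    linear_combination h1 - h2
  have := (mul_eq_zero.1 key).resolve_left pi_ne_zero
  linarith

/-- A group `ρ` of smooth circle diffeomorphisms conjugated by the homeomorphism `k` into
`PSL(2,ℝ)`, with the dynamical properties used below: `L` is a closed invariant set without
isolated points and with dense complement, fixed pointwise by `k`, along which the group expands
(`exp`), and the linear group is discrete (`fin`). -/
structure Sys (Γ : Type*) [Group Γ] where
  ρ : Γ →* Equiv.Perm RP1
  L : Set RP1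
  k : RP1 ≃ₜ RP1
  A : Γ → SL2
  F : Γ → ℝ → ℝ
  kid : ∀ x ∈ L, k x = x
  conj : ∀ γ x, k (ρ γ x) = mobius (A γ) (k x)
  lift : ∀ γ t, ρ γ (para t) = para (F γ t)
  smooth : ∀ γ, ContDiff ℝ (⊤ : ℕ∞) (F γ)
  dpos : ∀ γ t, 0 < deriv (F γ) t
  per : ∀ γ t, F γ (t + 1) = F γ t + 1
  Lcl : IsClosed L
  Linv : ∀ γ, ∀ x ∈ L, ρ γ x ∈ L
  acc : NoIsol (para ⁻¹' L)
  dense : Dense (para ⁻¹' L)ᶜ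
  pt : ∃ a ∈ L, ∃ b ∈ L, a ≠ b
  fin : ∀ R : ℝ, {γ | Fr (A γ) ≤ R}.Finite
  exp : ∀ x ∈ L, ∃ γ, NN (A γ) x < 1 / 2

namespace Sys
variable {Γ : Type*} [Group Γ] (S : Sys Γ)

/-- Inverse of the derivative of the conjugated (Möbius) action, at the point `k y`. -/
def N (γ : Γ) (y : RP1) : ℝ := NN (S.A γ) (S.k y)
/-- The squared chordal distance transported by the conjugacy. -/
def d (x y : RP1) : ℝ := sqc (S.k x) (S.k y)

lemma N_pos (γ : Γ) (y : RP1) : 0 < S.N γ y := NN_pos _ _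
lemma N_cont (γ : Γ) : Continuous (S.N γ) := (NN_cont _).comp S.k.continuous
lemma d_cont : Continuous fun z : RP1 × RP1 => S.d z.1 z.2 :=
  sqc_cont.comp (f := fun z : RP1 × RP1 => (S.k z.1, S.k z.2)) (by fun_prop)
lemma d_nonneg (x y : RP1) : 0 ≤ S.d x y := sqc_nonneg _ _
lemma d_le_one (x y : RP1) : S.d x y ≤ 1 := sqc_le_one _ _
lemma d_comm (x y : RP1) : S.d x y = S.d y x := sqc_comm _ _
lemma d_pos {x y : RP1} (h : x ≠ y) : 0 < S.d x y := sqc_pos (S.k.injective.ne h)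
lemma d_act (γ : Γ) (x y : RP1) :
    S.d (S.ρ γ x) (S.ρ γ y) * S.N γ x * S.N γ y = S.d x y := by
  unfold d N; rw [S.conj, S.conj]; exact sqc_mobius _ _ _

lemma mobius_A_mul (γ δ : Γ) : mobius (S.A (γ * δ)) = mobius (S.A γ * S.A δ) := by
  funext x
  obtain ⟨y, rfl⟩ := S.k.surjective x
  rw [mobius_mul, ← S.conj, ← S.conj, ← S.conj, map_mul]; rfl

lemma N_mul (γ δ : Γ) (y : RP1) : S.N (γ * δ) y = S.N γ (S.ρ δ y) * S.N δ y := by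
  unfold N
  rw [NN_sign (S.mobius_A_mul γ δ), NN_mul, S.conj]

lemma mobius_A_one : mobius (S.A 1) = mobius 1 := by
  funext x
  obtain ⟨y, rfl⟩ := S.k.surjective x
  rw [← S.conj, mobius_one, map_one]; rfl

lemma N_one (y : RP1) : S.N 1 y = 1 := by
  unfold N
  rw [NN_sign S.mobius_A_one]
  obtain ⟨t, ht⟩ := para_surj (S.k y)
  rw [← ht, NN_para]
  simp [NA, uu, ww]

lemma ρ_inv (γ : Γ) (y : RP1) : S.ρ γ (S.ρ γ⁻¹ y) = y := by
  rw [← Equiv.Perm.mul_apply, ← map_mul]; simp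
lemma ρ_inv' (γ : Γ) (y : RP1) : S.ρ γ⁻¹ (S.ρ γ y) = y := by
  rw [← Equiv.Perm.mul_apply, ← map_mul]; simp

lemma N_inv (γ : Γ) (y : RP1) : S.N γ⁻¹ (S.ρ γ y) * S.N γ y = 1 := by
  rw [← S.N_mul, inv_mul_cancel, S.N_one]

lemma Linv_iff (γ : Γ) (x : RP1) : S.ρ γ x ∈ S.L ↔ x ∈ S.L :=
  ⟨fun h => by simpa [S.ρ_inv'] using S.Linv γ⁻¹ _ h, S.Linv γ x⟩

lemma exists_c : ∃ a ∈ S.L, ∃ b ∈ S.L, 0 < S.d a b := by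
  obtain ⟨a, ha, b, hb, h⟩ := S.pt
  exact ⟨a, ha, b, hb, S.d_pos h⟩

/-- Points at which some group element expands strongly are close to `L`. -/
lemma near_L : ∃ c > 0, ∀ γ y, ∃ l ∈ S.L, c * S.d l y ≤ S.N γ y := by
  obtain ⟨a, ha, b, hb, hc⟩ := S.exists_c
  refine ⟨S.d a b, hc, fun γ y => ?_⟩
  set la := S.ρ γ⁻¹ a
  set lb := S.ρ γ⁻¹ b
  have h1 := S.d_act γ la lb
  rw [S.ρ_inv, S.ρ_inv] at h1
  have h2 := S.d_le_one la lb
  have hc1 := S.d_le_one a b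
  have pa := S.N_pos γ la
  have pb := S.N_pos γ lb
  have py := S.N_pos γ y
  have key : ∀ l, S.d a b * S.N γ l ≤ 1 → S.d a b * S.d l y ≤ S.N γ y := by
    intro l hl
    rw [← S.d_act γ l y]
    have := S.d_le_one (S.ρ γ l) (S.ρ γ y)
    have := S.d_nonneg (S.ρ γ l) (S.ρ γ y)
    calc _ = S.d (S.ρ γ l) (S.ρ γ y) * (S.d a b * S.N γ l) * S.N γ y := by ring
      _ ≤ 1 * 1 * S.N γ y := by
        have := S.N_pos γ l
        gcongr
      _ = _ := by ring
  by_cases h : S.d a b * S.N γ la ≤ 1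
  · exact ⟨la, S.Linv _ _ ha, key la h⟩
  · refine ⟨lb, S.Linv _ _ hb, key lb ?_⟩
    push Not at h
    by_contra h'
    push Not at h'
    nlinarith

/-- Compact subsets of the complement of `L` lie at positive distance from `L`. -/
lemma exists_sep {K : Set RP1} (hK : IsCompact K) (hKL : K ⊆ S.Lᶜ) :
    ∃ m > 0, ∀ l ∈ S.L, ∀ y ∈ K, m ≤ S.d l y := by
  by_cases hne : (S.L ×ˢ K).Nonempty
  · obtain ⟨z, hz, hmin⟩ := (S.Lcl.isCompact.prod hK).exists_isMinOn hne
      (f := fun z : RP1 × RP1 => S.d z.1 z.2) S.d_cont.continuousOn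
    refine ⟨S.d z.1 z.2, S.d_pos fun h => hKL hz.2 (h ▸ hz.1), fun l hl y hy => ?_⟩
    exact isMinOn_iff.1 hmin (l, y) ⟨hl, hy⟩
  · exact ⟨1, one_pos, fun l hl y hy => (hne ⟨(l, y), hl, hy⟩).elim⟩

/-- Over a compact subset of the domain of discontinuity the group expands by a bounded factor
only. -/
lemma N_lower {K : Set RP1} (hK : IsCompact K) (hKL : K ⊆ S.Lᶜ) :
    ∃ m > 0, ∀ γ, ∀ y ∈ K, m ≤ S.N γ y := by
  obtain ⟨c, hc, h⟩ := S.near_L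
  obtain ⟨m, hm, h'⟩ := S.exists_sep hK hKL
  refine ⟨c * m, by positivity, fun γ y hy => ?_⟩
  obtain ⟨l, hl, hle⟩ := h γ y
  exact le_trans (by gcongr; exact h' l hl y hy) hle

/-- The group acts properly discontinuously on the complement of `L`: an element returning a point
of `K` to `K` neither expands nor contracts much at that point, which together with a point of `L`
bounds its norm. -/
lemma fin_return {K : Set RP1} (hK : IsCompact K) (hKL : K ⊆ S.Lᶜ) :
    {γ | ∃ y ∈ K, S.ρ γ y ∈ K}.Finite := by
  obtain ⟨a, ha, -⟩ := S.exists_c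
  obtain ⟨c, hc, h⟩ := S.N_lower hK hKL
  obtain ⟨m, hm, h'⟩ := S.exists_sep hK hKL
  refine (S.fin (2 * (c⁻¹ + (m * c)⁻¹) / m)).subset ?_
  rintro γ ⟨y, hy, hy'⟩
  have n1 : S.N γ y ≤ c⁻¹ := by
    have e := S.N_inv γ y
    have := h γ⁻¹ _ hy'
    have := S.N_pos γ y
    rw [← one_div, le_div_iff₀ hc]
    nlinarith
  set l := S.ρ γ⁻¹ a
  have hl : l ∈ S.L := S.Linv _ _ ha
  have n2 : S.N γ l ≤ (m * c)⁻¹ := by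
    have e := S.d_act γ l y
    rw [S.ρ_inv] at e
    have h1 := h' a ha _ hy'
    have h2 := h γ _ hy
    have h3 := S.d_le_one l y
    have h4 := S.N_pos γ l
    rw [← one_div, le_div_iff₀ (by positivity)]
    calc S.N γ l * (m * c) ≤ S.N γ l * (S.d a (S.ρ γ y) * S.N γ y) := by
          have := S.d_nonneg a (S.ρ γ y)
          gcongr
      _ = _ := by rw [← e]; ring
      _ ≤ 1 := h3
  obtain ⟨s, hs⟩ := para_surj (S.k l)
  obtain ⟨t, ht⟩ := para_surj (S.k y)
  have hb := Fr_bound (S.A γ) s t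
  have hd : S.d l y = sin (π * (s - t)) ^ 2 := by rw [d, ← hs, ← ht, sqc_para]
  have e1 : S.N γ l = NA (S.A γ) s := by rw [N, ← hs, NN_para]
  have e2 : S.N γ y = NA (S.A γ) t := by rw [N, ← ht, NN_para]
  rw [← hd, ← e1, ← e2] at hb
  have hfr : 0 ≤ Fr (S.A γ) := by unfold Fr; positivity
  change Fr (S.A γ) ≤ _
  rw [le_div_iff₀ hm]
  calc Fr (S.A γ) * m ≤ Fr (S.A γ) * S.d l y := by gcongr; exact h' l hl y hy
    _ ≤ _ := hb
    _ ≤ _ := by linarith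

/-- If `γ` expands by at least `2` at `y` then it cannot bring a point at distance more than `ε`
within distance `ε` of `y`, as soon as `ε` is small compared with the norm of `γ`. -/
lemma d_nonexp {Λ ε : ℝ} {γ : Γ} (hΛ : Fr (S.A γ) ≤ Λ) (hε : 0 < ε) (hεΛ : 2 * ε * Λ ≤ 1)
    {x y : RP1} (hx : ε < S.d x y) (hy : S.N γ y ≤ 1 / 2) : ε < S.d (S.ρ γ x) (S.ρ γ y) := by
  obtain ⟨s, hs⟩ := para_surj (S.k x)
  obtain ⟨t, ht⟩ := para_surj (S.k y)
  have hb := NA_compare (S.A γ) s t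
  have hd : S.d x y = sin (π * (s - t)) ^ 2 := by rw [d, ← hs, ← ht, sqc_para]
  have e1 : S.N γ x = NA (S.A γ) s := by rw [N, ← hs, NN_para]
  have e2 : S.N γ y = NA (S.A γ) t := by rw [N, ← ht, NN_para]
  have hcs := sin_sq_add_cos_sq (π * (s - t))
  rw [← hd, ← e1, ← e2] at hb
  have hc : cos (π * (s - t)) ^ 2 ≤ 1 := by nlinarith [sq_nonneg (sin (π * (s - t)))]
  have hact := S.d_act γ x y
  set D := S.d x y
  set D' := S.d (S.ρ γ x) (S.ρ γ y)
  have px := S.N_pos γ x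
  have py := S.N_pos γ y
  have hD0 : 0 < D := hε.trans hx
  have hfr : 0 ≤ Fr (S.A γ) := by unfold Fr; positivity
  have nx : S.N γ x ≤ 1 + 2 * D * Λ := by
    have : 2 * cos (π * (s - t)) ^ 2 * S.N γ y ≤ 2 * 1 * (1/2) := by gcongr
    have : 2 * D * Fr (S.A γ) ≤ 2 * D * Λ := by gcongr
    linarith
  by_contra hcon
  push Not at hcon
  have hD' : 0 ≤ D' := S.d_nonneg _ _
  have hle : D ≤ ε * (1 + 2 * D * Λ) * (1 / 2) := by
    calc D = D' * S.N γ x * S.N γ y := hact.symm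
      _ ≤ ε * (1 + 2 * D * Λ) * (1 / 2) :=
        mul_le_mul (mul_le_mul hcon nx px.le hε.le) hy py.le
          (mul_nonneg hε.le (px.le.trans nx))
  nlinarith

/-- `Reach T τ n γ Φ`: the element `γ`, with lift `Φ`, is a word of length `n` in `T` each of whose
letters, applied successively to the orbit of `τ`, expands by at least `2` at the point reached so
far. -/
inductive Reach (T : Finset Γ) (τ : ℝ) : ℕ → Γ → (ℝ → ℝ) → Prop
  | zero : Reach T τ 0 1 id
  | succ {n γ Φ s} : Reach T τ n γ Φ → s ∈ T → S.N s (para (Φ τ)) ≤ 1 / 2 →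
      Reach T τ (n + 1) (s * γ) (S.F s ∘ Φ)

variable {S} {T : Finset Γ} {τ : ℝ}

/-- Words can also be extended by a new first letter. -/
lemma Reach.cons {s : Γ} (hs : s ∈ T) (h0 : S.N s (para τ) ≤ 1 / 2) {n γ Φ}
    (h : S.Reach T (S.F s τ) n γ Φ) : S.Reach T τ (n + 1) (γ * s) (Φ ∘ S.F s) := by
  induction h with
  | zero => simpa using Reach.succ (Reach.zero) hs (by simpa using h0)
  | succ h h1 h2 ih => rw [mul_assoc]; exact Reach.succ ih h1 h2

lemma Reach.trans {m δ Ψ n γ Φ} (h : S.Reach T τ n γ Φ) (h' : S.Reach T (Φ τ) m δ Ψ) :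
    S.Reach T τ (n + m) (δ * γ) (Ψ ∘ Φ) := by
  induction h' with
  | zero => simpa using h
  | succ h' h1 h2 ih => rw [mul_assoc]; exact Reach.succ ih h1 h2

lemma Reach.lift {n γ Φ} (h : S.Reach T τ n γ Φ) (t : ℝ) : S.ρ γ (para t) = para (Φ t) := by
  induction h with
  | zero => simp
  | succ h h1 h2 ih => rw [map_mul, Equiv.Perm.mul_apply, ih, S.lift]; rfl

lemma Reach.smooth {n γ Φ} (h : S.Reach T τ n γ Φ) : ContDiff ℝ (⊤ : ℕ∞) Φ := by
  induction h with
  | zero => exact contDiff_id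
  | succ h h1 h2 ih => exact (S.smooth _).comp ih

lemma Reach.per {n γ Φ} (h : S.Reach T τ n γ Φ) (t : ℝ) : Φ (t + 1) = Φ t + 1 := by
  induction h with
  | zero => rfl
  | succ h h1 h2 ih => simp only [comp_apply, ih, S.per]

lemma F_mono (γ : Γ) : StrictMono (S.F γ) := strictMono_of_deriv_pos (S.dpos γ)

lemma Reach.mono {n γ Φ} (h : S.Reach T τ n γ Φ) : StrictMono Φ := by
  induction h with
  | zero => exact strictMono_id
  | succ h h1 h2 ih => exact (F_mono _).comp ih

lemma Reach.N_le {n γ Φ} (h : S.Reach T τ n γ Φ) : S.N γ (para τ) ≤ (1 / 2) ^ n := by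
  induction h with
  | zero => simp [S.N_one]
  | succ h h1 h2 ih =>
    rw [S.N_mul, h.lift, pow_succ']
    exact mul_le_mul h2 ih (S.N_pos _ _).le (by norm_num)

lemma Reach.d_lt {Λ ε : ℝ} (hΛ : ∀ s ∈ T, Fr (S.A s) ≤ Λ) (hε : 0 < ε) (hεΛ : 2 * ε * Λ ≤ 1)
    {n γ Φ} (h : S.Reach T τ n γ Φ) {t : ℝ} (ht : ε < S.d (para t) (para τ)) :
    ε < S.d (para (Φ t)) (para (Φ τ)) := by
  induction h with
  | zero => exact ht
  | succ h h1 h2 ih =>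
    simp only [comp_apply]
    rw [← S.lift, ← S.lift]
    exact S.d_nonexp (hΛ _ h1) hε hεΛ ih h2

/-- Along `L` the action has the derivative of the Möbius action. -/
lemma deriv_F_L (γ : Γ) {p : ℝ} (hp : para p ∈ S.L) : deriv (S.F γ) p * NA (S.A γ) p = 1 := by
  refine deriv_eq_on S.acc ((S.smooth γ).differentiable (by simp)) ?_ p hp
  intro t ht
  rw [← S.lift, ← S.kid _ ht, ← S.conj, S.kid _ ht, S.kid _ (S.Linv _ _ ht)]

lemma N_L (γ : Γ) {p : ℝ} (hp : para p ∈ S.L) : S.N γ (para p) = NA (S.A γ) p := by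
  rw [N, S.kid _ hp, NN_para]

lemma F_L (γ : Γ) {p : ℝ} (hp : para p ∈ S.L) : para (S.F γ p) ∈ S.L := by
  rw [← S.lift]; exact S.Linv _ _ hp

end Sys

/-! ### Contraction along expanding words -/

lemma per_int {Φ : ℝ → ℝ} (h : ∀ t, Φ (t + 1) = Φ t + 1) (m : ℤ) (t : ℝ) :
    Φ (t + m) = Φ t + m := by
  have hp : Periodic (fun t => Φ t - t) 1 := fun t => by simp only [h]; ring
  have := hp.int_mul m t
  simp only [mul_one] at this
  linarith

lemma per_bound {g : ℝ → ℝ} (hc : Continuous g) (hp : ∀ t, g (t + 1) = g t) :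
    ∃ C > 0, ∀ t, |g t| ≤ C := by
  obtain ⟨C, hC⟩ := isCompact_Icc.exists_bound_of_continuousOn (s := Icc (0:ℝ) 1) hc.continuousOn
  refine ⟨max C 1, by positivity, fun t => ?_⟩
  obtain ⟨y, hy, e⟩ := (show Periodic g 1 from hp).exists_mem_Ico₀ one_pos t
  rw [e]
  exact (hC y ⟨hy.1, hy.2.le⟩).trans (le_max_left _ _)

lemma exists_shift (u τ : ℝ) : ∃ m : ℤ, u + m ∈ Ico τ (τ + 1) := by
  refine ⟨-⌊u - τ⌋, ?_, ?_⟩ <;> push_cast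
  · linarith [Int.floor_le (u - τ)]
  · linarith [Int.lt_floor_add_one (u - τ)]

namespace Sys
variable {Γ : Type*} [Group Γ] (S : Sys Γ)

lemma smooth_deriv (γ : Γ) : ContDiff ℝ (⊤ : ℕ∞) (deriv (S.F γ)) :=
  (contDiff_infty_iff_deriv.1 (S.smooth γ)).2

lemma deriv_per {Φ : ℝ → ℝ} (h : ∀ t, Φ (t + 1) = Φ t + 1) (t : ℝ) :
    deriv Φ (t + 1) = deriv Φ t := by
  have : (fun t => Φ (t + 1)) = fun t => Φ t + 1 := funext h
  rw [← deriv_comp_add_const Φ 1 t, this, deriv_add_const]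

/-- Distortion estimate for one generator. -/
lemma distort (γ : Γ) : ∃ C > 0, ∀ x p, |S.F γ x - S.F γ p| ≤
    deriv (S.F γ) p * (1 + C * |x - p|) * |x - p| := by
  have h1 := S.smooth_deriv γ
  have h2 : ContDiff ℝ (⊤ : ℕ∞) (deriv (deriv (S.F γ))) := (contDiff_infty_iff_deriv.1 h1).2
  have p1 := deriv_per (S.per γ)
  have p2 : ∀ t, deriv (deriv (S.F γ)) (t + 1) = deriv (deriv (S.F γ)) t := fun t => by
    rw [← deriv_comp_add_const (deriv (S.F γ)) 1 t, show (fun t => deriv (S.F γ) (t + 1)) = _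
      from funext p1]
  obtain ⟨C1, hC1, b1⟩ := per_bound h2.continuous p2
  obtain ⟨C2, hC2, b2⟩ := per_bound (g := fun t => (deriv (S.F γ) t)⁻¹)
    (h1.continuous.inv₀ fun t => (S.dpos γ t).ne') (fun t => by simp only [p1])
  refine ⟨C1 * C2, by positivity, fun x p => ?_⟩
  have lip : ∀ u v, |deriv (S.F γ) u - deriv (S.F γ) v| ≤ C1 * |u - v| := fun u v =>
    convex_univ.norm_image_sub_le_of_norm_deriv_le (f := deriv (S.F γ))
      (fun z _ => (h1.differentiable (by simp)) z) (fun z _ => b1 z) (mem_univ v) (mem_univ u)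
  have hseg : ∀ w ∈ uIcc p x, ‖deriv (S.F γ) w‖ ≤ deriv (S.F γ) p * (1 + C1 * C2 * |x - p|) := by
    intro w hw
    have hpp := S.dpos γ p
    have hw' : |w - p| ≤ |x - p| := abs_sub_left_of_mem_uIcc hw
    have a1 := lip w p
    have a2 : 1 ≤ deriv (S.F γ) p * C2 := by
      have := b2 p
      rw [abs_of_pos (by positivity)] at this
      calc (1:ℝ) = deriv (S.F γ) p * (deriv (S.F γ) p)⁻¹ := (mul_inv_cancel₀ hpp.ne').symm
        _ ≤ _ := by gcongr
    rw [Real.norm_of_nonneg (S.dpos γ w).le]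
    have a3 : C1 * |w - p| ≤ C1 * |x - p| * (deriv (S.F γ) p * C2) := by
      calc C1 * |w - p| ≤ C1 * |x - p| * 1 := by rw [mul_one]; gcongr
        _ ≤ _ := by gcongr
    have := le_abs_self (deriv (S.F γ) w - deriv (S.F γ) p)
    nlinarith
  exact (convex_uIcc p x).norm_image_sub_le_of_norm_deriv_le
    (fun z _ => ((S.smooth γ).differentiable (by simp)) z) hseg left_mem_uIcc right_mem_uIcc

/-- Every point of the circle is definitely separated from some point of `L`. -/
lemma exists_pt : ∃ ε > 0, ∀ y : RP1, ∃ p ∈ S.L, ε ≤ sqc p y := by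
  obtain ⟨a, ha, b, hb, h⟩ := S.pt
  have hc : Continuous fun y : RP1 => max (sqc a y) (sqc b y) := by
    refine Continuous.max ?_ ?_
    · exact sqc_cont.comp (f := fun y : RP1 => (a, y)) (by fun_prop)
    · exact sqc_cont.comp (f := fun y : RP1 => (b, y)) (by fun_prop)
  obtain ⟨z, -, hz⟩ := isCompact_univ.exists_isMinOn (s := (univ : Set RP1)) ⟨a, mem_univ a⟩
    hc.continuousOn
  refine ⟨max (sqc a z) (sqc b z), ?_, fun y => ?_⟩
  · by_cases e : a = z
    · exact lt_max_of_lt_right (sqc_pos (by rw [← e]; exact h.symm))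
    · exact lt_max_of_lt_left (sqc_pos e)
  · have := isMinOn_iff.1 hz y (mem_univ y)
    rcases le_max_iff.1 this with h' | h'
    · exact ⟨a, ha, h'⟩
    · exact ⟨b, hb, h'⟩

lemma sqc_of_d {κ : ℝ} (hκ : 0 < κ) : ∃ η > 0, ∀ x y, S.d x y ≤ η → sqc x y < κ := by
  obtain ⟨η, hη, h⟩ := sqc_unif S.k.symm.continuous hκ
  exact ⟨η, hη, fun x y hxy => by simpa using h _ _ hxy⟩

lemma d_of_sqc {κ : ℝ} (hκ : 0 < κ) : ∃ η > 0, ∀ x y, sqc x y ≤ η → S.d x y < κ :=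
  sqc_unif S.k.continuous hκ

variable {S}

/-- If the second coordinate of a pair of separated points is expanded `n` times by a factor two,
the first one ends up exponentially close to the lift of `L`. The arc joining the first point to a
point `p` of `L` and avoiding the second one is contracted by the Möbius action; since `ρ` has the
Möbius derivatives at the orbit of `p`, bounded distortion transfers the rate of contraction to
`ρ`. -/
lemma Reach.contract (S : Sys Γ) (T : Finset Γ) {ε : ℝ} (hε : 0 < ε) :
    ∃ C > 0, ∀ t τ, ε < S.d (para t) (para τ) → ∀ n γ Φ, S.Reach T τ n γ Φ →
      ∃ q, para q ∈ S.L ∧ |Φ t - q| ≤ C * (3 / 4) ^ n := by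
  obtain ⟨εa, hεa, hpt⟩ := S.exists_pt
  obtain ⟨εb, hεb, hb⟩ := S.d_of_sqc hε
  set ε1 := min (min εa εb) 1 with hε1
  have hep1 : 0 < ε1 := by positivity
  obtain ⟨ε2, hε2, h2⟩ := S.sqc_of_d hep1
  choose Cf hCf hdist using S.distort
  set Lc : ℝ := ∑ s ∈ T, Cf s with hLc
  have hLc0 : 0 ≤ Lc := Finset.sum_nonneg fun s _ => (hCf s).le
  have hLcs : ∀ s ∈ T, Cf s ≤ Lc := fun s hs =>
    Finset.single_le_sum (f := Cf) (fun i _ => (hCf i).le) hs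
  set κ : ℝ := min (1 / 4) (1 / (2 * (Lc + 1))) with hκ
  have hκp : 0 < κ := by positivity
  have hκL : Lc * κ ≤ 1 / 2 := by
    calc Lc * κ ≤ (Lc + 1) * (1 / (2 * (Lc + 1))) := by
          gcongr
          · linarith
          · exact min_le_right _ _
      _ = 1 / 2 := by field_simp
  have hsinκ : 0 < sin (π * κ) := by
    apply sin_pos_of_pos_of_lt_pi (by positivity)
    have : κ ≤ 1 / 4 := min_le_left _ _
    nlinarith [pi_pos]
  obtain ⟨η, hη, hη'⟩ := S.sqc_of_d (κ := sin (π * κ) ^ 2) (by positivity)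
  obtain ⟨n0, hn0⟩ : ∃ n0 : ℕ, ∀ n ≥ n0, ((1 / 2 : ℝ) ^ n / ε2) ^ 2 ≤ η := by
    have : Filter.Tendsto (fun n : ℕ => ((1 / 2 : ℝ) ^ n / ε2) ^ 2) Filter.atTop (nhds 0) := by
      have := ((tendsto_pow_atTop_nhds_zero_of_lt_one (by norm_num : (0:ℝ) ≤ 1/2)
        (by norm_num)).div_const ε2).pow 2
      simpa using this
    exact Filter.eventually_atTop.1 (this.eventually (ge_mem_nhds hη))
  refine ⟨(1 + Lc) ^ n0 / ε2, by positivity, fun t τ ht => ?_⟩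
  obtain ⟨m, hm⟩ := exists_shift t τ
  obtain ⟨p1, hp1, hp1'⟩ := hpt (para τ)
  obtain ⟨p0, rfl⟩ := para_surj p1
  obtain ⟨m', hm'⟩ := exists_shift p0 τ
  set t' := t + m
  set p := p0 + m' with hpdef
  have hpL : para p ∈ S.L := by rw [hpdef, para_add_int]; exact hp1
  have hst : ε1 ≤ sin (π * (t' - τ)) ^ 2 := by
    rw [← sqc_para, para_add_int]
    have : εb ≤ sqc (para t) (para τ) := by
      by_contra hcon
      exact (hb _ _ (not_le.1 hcon).le).not_gt ht
    exact le_trans ((min_le_left _ _).trans (min_le_right _ _)) this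
  have hsp : ε1 ≤ sin (π * (p - τ)) ^ 2 := by
    rw [← sqc_para, para_add_int]
    exact le_trans ((min_le_left _ _).trans (min_le_left _ _)) hp1'
  have nn : ∀ w ∈ Icc τ (τ + 1), π * (w - τ) ∈ Icc 0 π := fun w hw => by
    constructor
    · exact mul_nonneg pi_pos.le (by linarith [hw.1])
    · nlinarith [hw.2, pi_pos]
  -- the arc between `p` and `t'` stays away from `τ`
  have harc : ∀ w ∈ uIcc p t', ε2 < S.d (para w) (para τ) := by
    intro w hw
    by_contra hcon
    have hlt := h2 _ _ (not_lt.1 hcon)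
    rw [sqc_para] at hlt
    have conc := strictConcaveOn_sin_Icc.concaveOn
    have q1 := nn p ⟨hm'.1, hm'.2.le⟩
    have q2 := nn t' ⟨hm.1, hm.2.le⟩
    have s1 := sin_nonneg_of_mem_Icc q1
    have s2 := sin_nonneg_of_mem_Icc q2
    have hmin : min (sin (π * (p - τ))) (sin (π * (t' - τ))) ≤ sin (π * (w - τ)) := by
      have hseg : π * (w - τ) ∈ uIcc (π * (p - τ)) (π * (t' - τ)) := by
        rcases mem_uIcc.1 hw with h | h
        · refine mem_uIcc.2 (Or.inl ⟨?_, ?_⟩) <;> gcongr <;> linarith [h.1, h.2]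
        · refine mem_uIcc.2 (Or.inr ⟨?_, ?_⟩) <;> gcongr <;> linarith [h.1, h.2]
      rw [← segment_eq_uIcc] at hseg
      exact conc.min_le_of_mem_segment q1 q2 hseg
    have : ε1 ≤ sin (π * (w - τ)) ^ 2 := by
      rcases min_le_iff.1 hmin with h | h
      · exact hsp.trans (pow_le_pow_left₀ s1 h 2)
      · exact hst.trans (pow_le_pow_left₀ s2 h 2)
    linarith
  have hNw : ∀ {n γ Φ}, S.Reach T τ n γ Φ → ∀ w ∈ uIcc p t', ε2 ≤ S.N γ (para w) * (1/2) ^ n := by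
    intro n γ Φ hR w hw
    have e := S.d_act γ (para w) (para τ)
    have h1 := S.d_le_one (S.ρ γ (para w)) (S.ρ γ (para τ))
    have h0 := S.d_nonneg (S.ρ γ (para w)) (S.ρ γ (para τ))
    have pw := S.N_pos γ (para w)
    have pτ := S.N_pos γ (para τ)
    have hle := hR.N_le
    calc ε2 ≤ S.d (para w) (para τ) := (harc w hw).le
      _ = _ := e.symm
      _ ≤ 1 * S.N γ (para w) * (1 / 2) ^ n := by gcongr
      _ = _ := by ring
  have hbig : ∀ {n γ Φ}, S.Reach T τ n γ Φ → |Φ t' - Φ p| ≤ 1 := by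
    intro n γ Φ hR
    have a1 := hR.mono.monotone hm.1
    have a2 := hR.mono.monotone hm.2.le
    have a3 := hR.mono.monotone hm'.1
    have a4 := hR.mono.monotone hm'.2.le
    rw [hR.per] at a2 a4
    rw [abs_le]; constructor <;> linarith
  have hsmall : ∀ {n γ Φ}, S.Reach T τ n γ Φ → n0 ≤ n → |Φ t' - Φ p| ≤ κ := by
    intro n γ Φ hR hn
    by_contra hcon
    push Not at hcon
    -- an intermediate point at distance exactly `κ`
    obtain ⟨w, hw, e⟩ : ∃ w ∈ uIcc p t', |Φ w - Φ p| = κ := by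
      have hc : ContinuousOn (fun w => |Φ w - Φ p|) (uIcc p t') :=
        ((hR.smooth.continuous.sub continuous_const).abs).continuousOn
      have := intermediate_value_uIcc hc
      have hmem : κ ∈ uIcc |Φ p - Φ p| |Φ t' - Φ p| := by
        simp only [sub_self, abs_zero]
        exact mem_uIcc.2 (Or.inl ⟨hκp.le, hcon.le⟩)
      obtain ⟨w, hw, e⟩ := this hmem
      exact ⟨w, hw, e⟩
    have hd : S.d (S.ρ γ (para w)) (S.ρ γ (para p)) ≤ η := by
      refine le_trans ?_ (hn0 n hn)
      have e := S.d_act γ (para w) (para p)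
      have h1 := S.d_le_one (para w) (para p)
      have h0 := S.d_nonneg (S.ρ γ (para w)) (S.ρ γ (para p))
      have k1 := hNw hR w hw
      have k2 := hNw hR p left_mem_uIcc
      set D := S.d (S.ρ γ (para w)) (S.ρ γ (para p))
      rw [div_pow, le_div_iff₀ (by positivity)]
      have k3 : ε2 ^ 2 ≤ (S.N γ (para w) * (1/2) ^ n) * (S.N γ (para p) * (1/2) ^ n) := by
        rw [sq]; exact mul_le_mul k1 k2 hε2.le (hε2.le.trans k1)
      calc D * ε2 ^ 2 ≤ D * ((S.N γ (para w) * (1/2) ^ n) * (S.N γ (para p) * (1/2) ^ n)) := by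
            gcongr
        _ = (D * S.N γ (para w) * S.N γ (para p)) * ((1/2) ^ n) ^ 2 := by ring
        _ ≤ 1 * ((1/2) ^ n) ^ 2 := by rw [e]; gcongr
        _ = _ := one_mul _
    have := hη' _ _ hd
    rw [hR.lift, hR.lift, sqc_para, ← sq_abs (sin (π * (Φ w - Φ p)))] at this
    have hs : |sin (π * (Φ w - Φ p))| = sin (π * κ) := by
      rcases (abs_eq hκp.le).1 e with h | h
      · rw [h, abs_of_pos hsinκ]
      · rw [h, mul_neg, sin_neg, abs_neg, abs_of_pos hsinκ]
    rw [hs] at this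
    exact lt_irrefl _ this
  have main : ∀ {n γ Φ}, S.Reach T τ n γ Φ →
      |Φ t' - Φ p| * S.N γ (para p) ≤ (1 + Lc) ^ (min n n0) * (3 / 2) ^ n := by
    intro n γ Φ hR
    induction hR with
    | zero => simpa [S.N_one] using hbig (Reach.zero (S := S) (T := T) (τ := τ))
    | @succ n γ Φ s hR hs hN ih =>
      have hΦL : para (Φ p) ∈ S.L := by rw [← hR.lift]; exact S.Linv _ _ hpL
      rw [S.N_mul, hR.lift, N_L s hΦL]
      have hd := hdist s (Φ t') (Φ p)
      have hF := deriv_F_L s hΦL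
      have hNs : 0 < NA (S.A s) (Φ p) := NA_pos _ _
      have hNg := S.N_pos γ (para p)
      set δ := |Φ t' - Φ p|
      have hδ : 0 ≤ δ := abs_nonneg _
      have e1 : |(S.F s ∘ Φ) t' - (S.F s ∘ Φ) p| * (NA (S.A s) (Φ p) * S.N γ (para p)) ≤
          (1 + Cf s * δ) * (δ * S.N γ (para p)) := by
        calc _ ≤ (deriv (S.F s) (Φ p) * (1 + Cf s * δ) * δ) * (NA (S.A s) (Φ p) * S.N γ (para p)) := by
              gcongr; exact hd
          _ = (deriv (S.F s) (Φ p) * NA (S.A s) (Φ p)) * ((1 + Cf s * δ) * (δ * S.N γ (para p))) := by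
              ring
          _ = _ := by rw [hF, one_mul]
      refine e1.trans ?_
      have hCs := hLcs s hs
      have hCs0 := hCf s
      by_cases hn : n < n0
      · have f1 : min (n + 1) n0 = min n n0 + 1 := by omega
        have f2 : 1 + Cf s * δ ≤ 1 + Lc := by
          have := hbig hR
          have : Cf s * δ ≤ Lc * 1 := by gcongr
          linarith
        rw [f1]
        calc _ ≤ (1 + Lc) * ((1 + Lc) ^ (min n n0) * (3 / 2) ^ n) := by gcongr
          _ = (1 + Lc) ^ (min n n0 + 1) * (3/2)^n := by ring
          _ ≤ _ := by gcongr <;> norm_num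
      · have f1 : min (n + 1) n0 = min n n0 := by omega
        have f2 : 1 + Cf s * δ ≤ 3 / 2 := by
          have := hsmall hR (by omega)
          have : Cf s * δ ≤ Lc * κ := by gcongr
          linarith
        rw [f1]
        calc _ ≤ (3 / 2) * ((1 + Lc) ^ (min n n0) * (3 / 2) ^ n) := by gcongr
          _ = _ := by ring
  intro n γ Φ hR
  refine ⟨Φ p - m, ?_, ?_⟩
  · have := para_add_int (Φ p) (-m)
    push_cast at this
    rw [sub_eq_add_neg, this, ← hR.lift]; exact S.Linv _ _ hpL
  · have e : Φ t' = Φ t + m := per_int hR.per m t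
    rw [show Φ t - (Φ p - m) = Φ t' - Φ p by rw [e]; ring]
    have h1 := main hR
    have h2 := hNw hR p left_mem_uIcc
    have h3 : (1 + Lc) ^ (min n n0) ≤ (1 + Lc) ^ n0 :=
      pow_le_pow_right₀ (by linarith) (min_le_right _ _)
    rw [div_mul_eq_mul_div, le_div_iff₀ hε2]
    calc |Φ t' - Φ p| * ε2 ≤ |Φ t' - Φ p| * (S.N γ (para p) * (1/2) ^ n) := by gcongr
      _ = (|Φ t' - Φ p| * S.N γ (para p)) * (1/2) ^ n := by ring
      _ ≤ ((1 + Lc) ^ n0 * (3 / 2) ^ n) * (1/2)^n :=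
        mul_le_mul_of_nonneg_right (h1.trans (by gcongr)) (by positivity)
      _ = (1 + Lc) ^ n0 * ((3/2) ^ n * (1/2)^n) := by ring
      _ = _ := by rw [← mul_pow]; norm_num

end Sys

/-! ### The adapted cover of the circle -/

lemma per_congr {X : Type*} {g : ℝ → X} (hp : ∀ t, g (t + 1) = g t) {a b : ℝ}
    (h : para a = para b) : g a = g b := by
  obtain ⟨n, rfl⟩ := (para_eq_iff_int a b).1 h
  simpa using (show Periodic g 1 from hp).int_mul n b

/-- Two differentiable lifts of the same circle map have the same derivative. -/
lemma lift_deriv {F G : ℝ → ℝ} (hF : Differentiable ℝ F) (hG : Differentiable ℝ G)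
    (h : ∀ t, para (F t) = para (G t)) (t : ℝ) : deriv F t = deriv G t := by
  have h0 : ∀ t, sin (π * (F t - G t)) = 0 := fun t => (para_eq_iff _ _).1 (h t)
  have hd : HasDerivAt (fun t => π * (F t - G t)) (π * (deriv F t - deriv G t)) t :=
    ((hF t).hasDerivAt.sub (hG t).hasDerivAt).const_mul π
  have h1 := hd.sin
  have h2 : HasDerivAt (fun t => sin (π * (F t - G t))) 0 t := by
    rw [show (fun t => sin (π * (F t - G t))) = fun _ => 0 from funext h0]
    exact hasDerivAt_const t 0
  have e := h1.unique h2
  have hc : cos (π * (F t - G t)) ≠ 0 := by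
    intro hc
    have := sin_sq_add_cos_sq (π * (F t - G t))
    rw [h0 t, hc] at this
    norm_num at this
  have := (mul_eq_zero.1 ((mul_eq_zero.1 e).resolve_left hc)).resolve_left pi_ne_zero
  linarith

namespace Sys
variable {Γ : Type*} [Group Γ] (S : Sys Γ)

/-- A partition of unity on the circle: `p s` (`s ∈ T`) lives where `s` expands by at least `2`,
and `p0` is supported in a compact subset `K` of the domain of discontinuity; together with a
nonnegative function `κ` vanishing exactly on the lift of `L`. -/
structure Cov where
  T : Finset Γ
  p : Γ → ℝ → ℝ
  p0 : ℝ → ℝ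
  K : Set RP1
  psm : ∀ s, ContDiff ℝ (⊤ : ℕ∞) (p s)
  pper : ∀ s t, p s (t + 1) = p s t
  pN : ∀ s t, p s t ≠ 0 → S.N s (para t) ≤ 1 / 2
  p0sm : ContDiff ℝ (⊤ : ℕ∞) p0
  p0per : ∀ t, p0 (t + 1) = p0 t
  p0nn : ∀ t, 0 ≤ p0 t
  p0K : ∀ t, p0 t ≠ 0 → para t ∈ K
  Kcpt : IsCompact K
  KL : K ⊆ S.Lᶜ
  sum : ∀ t, p0 t + ∑ s ∈ T, p s t = 1
  κ : ℝ → ℝ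
  κsm : ContDiff ℝ (⊤ : ℕ∞) κ
  κper : ∀ t, κ (t + 1) = κ t
  κnn : ∀ t, 0 ≤ κ t
  κpos : ∀ t, 0 < κ t ↔ para t ∈ S.Lᶜ

/-- By `Sys.exp`, compactness of `L` and continuity, finitely many elements suffice to expand near
every point of `L`. -/
lemma exists_cov : Nonempty S.Cov := by
  let V : Γ → Set RP1 := fun γ => {y | S.N γ y < 1 / 2}
  have hVo : ∀ γ, IsOpen (V γ) := fun γ => isOpen_lt (S.N_cont γ) continuous_const
  have hcov : S.L ⊆ ⋃ γ, V γ := fun x hx => by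
    obtain ⟨γ, h⟩ := S.exp x hx
    refine mem_iUnion.2 ⟨γ, ?_⟩
    change S.N γ x < 1 / 2
    rwa [N, S.kid x hx]
  obtain ⟨T, hT⟩ := S.Lcl.isCompact.elim_finite_subcover V hVo hcov
  obtain ⟨W, hWo, hLW, hWV⟩ := normal_exists_closure_subset S.Lcl
    (isOpen_biUnion fun γ (_ : γ ∈ T) => hVo γ) hT
  choose φ φsm φper φnn φpos using fun γ => exists_bump (hVo γ)
  obtain ⟨φ0, phi0_sm, phi0_per, phi0_nn, phi0_pos⟩ := exists_bump (V := (closure W)ᶜ) isClosed_closure.isOpen_compl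
  let Ψ : ℝ → ℝ := fun t => φ0 t + ∑ s ∈ T, φ s t
  have hΨ : ∀ t, 0 < Ψ t := by
    intro t
    have hs : 0 ≤ ∑ s ∈ T, φ s t := Finset.sum_nonneg fun s _ => φnn s t
    by_cases h : para t ∈ closure W
    · obtain ⟨s, hs, hst⟩ := mem_iUnion₂.1 (hWV h)
      have h1 : 0 < φ s t := (φpos s t).2 hst
      have h2 : φ s t ≤ ∑ s ∈ T, φ s t :=
        Finset.single_le_sum (f := fun s => φ s t) (fun i _ => φnn i t) hs
      have := phi0_nn t
      change 0 < φ0 t + _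
      linarith
    · have := (phi0_pos t).2 h
      change 0 < φ0 t + _
      linarith
  have hΨsm : ContDiff ℝ (⊤ : ℕ∞) Ψ := phi0_sm.add (ContDiff.sum fun s _ => φsm s)
  have hΨper : ∀ t, Ψ (t + 1) = Ψ t := fun t => by simp only [Ψ, phi0_per, φper]
  obtain ⟨κ, κsm, κper, κnn, κpos⟩ := exists_bump (V := S.Lᶜ) S.Lcl.isOpen_compl
  refine ⟨⟨T, fun s t => φ s t / Ψ t, fun t => φ0 t / Ψ t, closure (closure W)ᶜ, fun s =>
    (φsm s).div hΨsm fun t => (hΨ t).ne', fun s t => by simp only [φper, hΨper], fun s t h => ?_,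
    phi0_sm.div hΨsm fun t => (hΨ t).ne', fun t => by simp only [phi0_per, hΨper],
    fun t => div_nonneg (phi0_nn t) (hΨ t).le, fun t h => ?_, isClosed_closure.isCompact, ?_, fun t => ?_,
    κ, κsm, κper, κnn, κpos⟩⟩
  · have h1 : φ s t ≠ 0 := fun h0 => h (by simp [h0])
    have := (φpos s t).1 (lt_of_le_of_ne (φnn s t) h1.symm)
    exact le_of_lt this
  · have h1 : φ0 t ≠ 0 := fun h0 => h (by simp [h0])
    exact subset_closure ((phi0_pos t).1 (lt_of_le_of_ne (phi0_nn t) h1.symm))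
  · have : closure (closure W)ᶜ ⊆ Wᶜ :=
      closure_minimal (compl_subset_compl.2 subset_closure) hWo.isClosed_compl
    exact this.trans (compl_subset_compl.2 hLW)
  · rw [← Finset.sum_div, ← add_div]; exact div_self (hΨ t).ne'

variable {S}

namespace Cov
variable (c : S.Cov)

lemma exists_step {t : ℝ} (h : c.p0 t = 0) : ∃ s ∈ c.T, S.N s (para t) ≤ 1 / 2 := by
  have hs := c.sum t
  rw [h, zero_add] at hs
  obtain ⟨s, hs, h1⟩ := Finset.exists_ne_zero_of_sum_ne_zero (hs.trans_ne one_ne_zero)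
  exact ⟨s, hs, c.pN s t h1⟩

lemma p0_L {t : ℝ} (h : para t ∈ S.L) : c.p0 t = 0 := by
  by_contra h0
  exact c.KL (c.p0K t h0) h

lemma exists_reach {τ : ℝ} (h : ∀ g, c.p0 (S.F g τ) = 0) (n : ℕ) :
    ∃ γ Φ, S.Reach c.T τ n γ Φ := by
  induction n with
  | zero => exact ⟨_, _, Reach.zero⟩
  | succ n ih =>
    obtain ⟨γ, Φ, hR⟩ := ih
    have : c.p0 (Φ τ) = 0 := by
      rw [← h γ]
      refine per_congr c.p0per ?_
      rw [← hR.lift, S.lift]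
    obtain ⟨s, hs, h1⟩ := c.exists_step this
    exact ⟨_, _, hR.succ hs h1⟩

/-- Expanding words at a point off `L` have bounded length. -/
lemma no_reach {τ : ℝ} (h : para τ ∉ S.L) : ∃ m, ∀ n ≥ m, ∀ γ Φ, ¬ S.Reach c.T τ n γ Φ := by
  obtain ⟨m, hm, h'⟩ := S.N_lower (K := {para τ}) isCompact_singleton
    (by simpa using h)
  obtain ⟨k, hk⟩ := exists_pow_lt_of_lt_one hm (by norm_num : (1 / 2 : ℝ) < 1)
  refine ⟨k, fun n hn γ Φ hR => ?_⟩
  have h1 := hR.N_le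
  have h2 := h' γ _ rfl
  have h3 : (1 / 2 : ℝ) ^ n ≤ (1 / 2) ^ k :=
    pow_le_pow_of_le_one (by norm_num) (by norm_num) hn
  linarith

/-- Every orbit off `L` meets the region where `p0` is positive: otherwise there would be
arbitrarily long expanding words. -/
lemma exists_hit {τ : ℝ} (h : para τ ∉ S.L) : ∃ g, 0 < c.p0 (S.F g τ) := by
  by_contra! hcon
  have h0 : ∀ g, c.p0 (S.F g τ) = 0 := fun g => le_antisymm (hcon g) (c.p0nn _)
  obtain ⟨m, hm⟩ := c.no_reach h
  obtain ⟨γ, Φ, hR⟩ := c.exists_reach h0 m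
  exact hm m le_rfl γ Φ hR

/-- The finitely many elements moving some point of `K` into `K`. -/
def G : Finset Γ := (S.fin_return c.Kcpt c.KL).toFinset

lemma mem_G {g : Γ} {τ : ℝ} (h : para τ ∈ c.K) (h' : c.p0 (S.F g τ) ≠ 0) : g ∈ c.G := by
  simp only [G, Finite.mem_toFinset]
  exact ⟨_, h, by rw [S.lift]; exact c.p0K _ h'⟩

lemma finite_hit {τ : ℝ} (h : para τ ∉ S.L) : {g | c.p0 (S.F g τ) ≠ 0}.Finite := by
  have hK : IsCompact (c.K ∪ {para τ}) := c.Kcpt.union isCompact_singleton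
  refine (S.fin_return hK (union_subset c.KL (by simpa using h))).subset fun g hg => ?_
  exact ⟨para τ, Or.inr rfl, Or.inl (by rw [S.lift]; exact c.p0K _ hg)⟩

/-- The weights `p0 · (p0 ∘ F g) / ∑_{g ∈ G} p0 ∘ F g`; where the denominator may vanish so does
the factor `p0`. -/
def a (g : Γ) (τ : ℝ) : ℝ := c.p0 τ * (c.p0 (S.F g τ) / ∑ g ∈ c.G, c.p0 (S.F g τ))

lemma sum_pos {τ : ℝ} (h : para τ ∈ c.K) : 0 < ∑ g ∈ c.G, c.p0 (S.F g τ) := by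
  obtain ⟨g, hg⟩ := c.exists_hit (c.KL h)
  exact Finset.sum_pos' (fun g _ => c.p0nn _) ⟨g, c.mem_G h hg.ne', hg⟩

lemma a_smooth (g : Γ) : ContDiff ℝ (⊤ : ℕ∞) (c.a g) := by
  rw [contDiff_iff_contDiffAt]
  intro τ
  by_cases h : para τ ∈ c.K
  · have h1 : ∀ g, ContDiff ℝ (⊤ : ℕ∞) fun τ => c.p0 (S.F g τ) := fun g => c.p0sm.comp (S.smooth g)
    exact c.p0sm.contDiffAt.mul ((h1 g).contDiffAt.div (ContDiff.sum fun g _ => h1 g).contDiffAt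
      (c.sum_pos h).ne')
  · have : c.a g =ᶠ[nhds τ] fun _ => 0 := by
      have ho : IsOpen (para ⁻¹' c.Kᶜ) := c.Kcpt.isClosed.isOpen_compl.preimage para_cont
      filter_upwards [ho.mem_nhds h] with u hu
      have : c.p0 u = 0 := by
        by_contra h0
        exact hu (c.p0K u h0)
      simp [a, this]
    exact contDiffAt_const.congr_of_eventuallyEq this

lemma a_per (g : Γ) (τ : ℝ) : c.a g (τ + 1) = c.a g τ := by
  simp only [a, S.per, c.p0per]

end Cov
end Sys

/-! ### The correction series -/

/-- Symmetric `2 × 2` matrices, as triples `(P₀₀, P₀₁, P₁₁)`. -/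
abbrev Wt : Type := ℝ × ℝ × ℝ

/-- The action `P ↦ M P Mᵀ` of the matrix `M` with rows `(a, b)` and `(c, d)` on symmetric matrices. -/
def sym (a b c d : ℝ) : Wt →L[ℝ] Wt :=
  LinearMap.toContinuousLinearMap
    { toFun := fun P => (a ^ 2 * P.1 + 2 * a * b * P.2.1 + b ^ 2 * P.2.2,
        a * c * P.1 + (a * d + b * c) * P.2.1 + b * d * P.2.2,
        c ^ 2 * P.1 + 2 * c * d * P.2.1 + d ^ 2 * P.2.2)
      map_add' := fun P Q => by ext <;> simp <;> ring
      map_smul' := fun r P => by ext <;> simp <;> ring }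

lemma sym_apply (a b c d : ℝ) (P : Wt) : sym a b c d P =
    (a ^ 2 * P.1 + 2 * a * b * P.2.1 + b ^ 2 * P.2.2,
        a * c * P.1 + (a * d + b * c) * P.2.1 + b * d * P.2.2,
        c ^ 2 * P.1 + 2 * c * d * P.2.1 + d ^ 2 * P.2.2) := rfl

/-- The action of `A` on symmetric matrices. -/
def σ (A : SL2) : Wt →L[ℝ] Wt := sym (A 0 0) (A 0 1) (A 1 0) (A 1 1)
/-- The action of `A⁻¹` on symmetric matrices. -/
def σ' (A : SL2) : Wt →L[ℝ] Wt := sym (A 1 1) (-A 0 1) (-A 1 0) (A 0 0)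

lemma sym_sym (a b c d a' b' c' d' : ℝ) (P : Wt) : sym a b c d (sym a' b' c' d' P) =
    sym (a * a' + b * c') (a * b' + b * d') (c * a' + d * c') (c * b' + d * d') P := by
  simp only [sym_apply]; ext <;> simp only <;> ring

lemma σ'_σ (A : SL2) (P : Wt) : σ' A (σ A P) = P := by
  have h := sl2_det A
  rw [σ, σ', sym_sym, show A 1 1 * A 0 0 + -A 0 1 * A 1 0 = 1 by linarith,
    show A 1 1 * A 0 1 + -A 0 1 * A 1 1 = 0 by ring, show -A 1 0 * A 0 0 + A 0 0 * A 1 0 = 0 by ring,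
    show -A 1 0 * A 0 1 + A 0 0 * A 1 1 = 1 by linarith, sym_apply]
  ext <;> simp

lemma σ_σ' (A : SL2) (P : Wt) : σ A (σ' A P) = P := by
  have h := sl2_det A
  rw [σ, σ', sym_sym, show A 0 0 * A 1 1 + A 0 1 * -A 1 0 = 1 by linarith,
    show A 0 0 * -A 0 1 + A 0 1 * A 0 0 = 0 by ring, show A 1 0 * A 1 1 + A 1 1 * -A 1 0 = 0 by ring,
    show A 1 0 * -A 0 1 + A 1 1 * A 0 0 = 1 by linarith, sym_apply]
  ext <;> simp

lemma σ'_sign {A B : SL2} (h : mobius A = mobius B) (P : Wt) : σ' A P = σ' B P := by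
  obtain ⟨ε, h1, h2⟩ := mobius_sign h
  simp only [σ', h2, sym_apply]
  ext <;> simp only
  · linear_combination -(A 1 1 ^ 2 * P.1 - 2 * A 1 1 * A 0 1 * P.2.1 + A 0 1 ^ 2 * P.2.2) * h1
  · linear_combination -(-A 1 1 * A 1 0 * P.1 + (A 1 1 * A 0 0 + A 0 1 * A 1 0) * P.2.1 -
      A 0 1 * A 0 0 * P.2.2) * h1
  · linear_combination -(A 1 0 ^ 2 * P.1 - 2 * A 1 0 * A 0 0 * P.2.1 + A 0 0 ^ 2 * P.2.2) * h1

lemma σ'_mul (A B : SL2) (P : Wt) : σ' (A * B) P = σ' B (σ' A P) := by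
  simp only [σ', sym_sym, mul_entries]
  congr 1
  congr 1 <;> ring

/-- The rank one symmetric matrix of the unit vector of angle `π t`. -/
def EE (t : ℝ) : Wt := (cos (π * t) ^ 2, cos (π * t) * sin (π * t), sin (π * t) ^ 2)

lemma EE_smooth : ContDiff ℝ (⊤ : ℕ∞) EE := by unfold EE; fun_prop

lemma EE_per (t : ℝ) : EE (t + 1) = EE t := by
  unfold EE
  rw [mul_add, mul_one, cos_add_pi, sin_add_pi]
  ext <;> simp

lemma offDiag_open : IsOpen offDiag2 := by
  have : offDiag2 = {q : ℝ × ℝ | sqc (para q.1) (para q.2) ≠ 0} := by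
    ext q
    exact not_congr sqc_eq_zero.symm
  rw [this]
  exact isOpen_ne_fun (sqc_cont.comp (f := fun q : ℝ × ℝ => (para q.1, para q.2))
      ((para_cont.comp continuous_fst).prodMk (para_cont.comp continuous_snd))) continuous_const

namespace Sys
variable {Γ : Type*} [Group Γ] {S : Sys Γ}

/-- Along `L` the rank one field `EE` is equivariant, as the derivative there is the Möbius one. -/
lemma EE_equiv (γ : Γ) {t : ℝ} (h : para t ∈ S.L) :
    EE (S.F γ t) = deriv (S.F γ) t • σ (S.A γ) (EE t) := by
  have h1 := deriv_F_L γ h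
  obtain ⟨r, r1, r2, r3⟩ := mobius_para_vec (S.A γ) (a := t) (b := S.F γ t) (by
    rw [← S.lift, ← S.kid _ h, ← S.conj, S.kid _ h, S.kid _ (S.Linv _ _ h)])
  rw [← r1] at h1
  have e : σ (S.A γ) (EE t) = (uu (S.A γ) t ^ 2, uu (S.A γ) t * ww (S.A γ) t, ww (S.A γ) t ^ 2) := by
    simp only [σ, EE, sym_apply, uu, ww]
    ext <;> simp only <;> ring
  rw [e, r2, r3]
  simp only [EE]
  ext <;> simp only [Prod.smul_fst, Prod.smul_snd, smul_eq_mul]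
  · linear_combination -cos (π * S.F γ t) ^ 2 * h1
  · linear_combination -cos (π * S.F γ t) * sin (π * S.F γ t) * h1
  · linear_combination -sin (π * S.F γ t) ^ 2 * h1

lemma deriv_F_mul (g γ : Γ) (t : ℝ) :
    deriv (S.F (g * γ)) t = deriv (S.F g) (S.F γ t) * deriv (S.F γ) t := by
  have hd : ∀ g, Differentiable ℝ (S.F g) := fun g => (S.smooth g).differentiable (by simp)
  rw [lift_deriv (hd _) ((hd g).comp (hd γ)) (fun t => ?_), deriv_comp t (hd g _) (hd γ t)]
  rw [← S.lift, map_mul, Equiv.Perm.mul_apply, S.lift, S.lift]; rfl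

lemma para_F_mul (g γ : Γ) (t : ℝ) : para (S.F (g * γ) t) = para (S.F g (S.F γ t)) := by
  rw [← S.lift, map_mul, Equiv.Perm.mul_apply, S.lift, S.lift]

namespace Cov
variable (c : S.Cov)

/-- The reference field of symmetric matrices, of rank one along `L` and positive definite
elsewhere. -/
def Q0 (t : ℝ) : Wt := EE t + c.κ t • (1, 0, 1)
lemma Q0_smooth : ContDiff ℝ (⊤ : ℕ∞) c.Q0 := EE_smooth.add (c.κsm.smul contDiff_const)
lemma Q0_per (t : ℝ) : c.Q0 (t + 1) = c.Q0 t := by simp only [Q0, EE_per, c.κper]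
lemma Q0_L {t : ℝ} (h : para t ∈ S.L) : c.Q0 t = EE t := by
  have : c.κ t = 0 := by
    by_contra h0
    exact (c.κpos t).1 (lt_of_le_of_ne (c.κnn t) (Ne.symm h0)) h
  simp [Q0, this]

/-- The pullback of `Q0` by `g`. -/
def q (g : Γ) (t : ℝ) : Wt := (deriv (S.F g) t)⁻¹ • σ' (S.A g) (c.Q0 (S.F g t))
/-- The defect of invariance of `Q0`, which vanishes along `L`. -/
def D (g : Γ) (t : ℝ) : Wt := c.q g t - c.Q0 t

lemma inv_deriv_smooth (g : Γ) : ContDiff ℝ (⊤ : ℕ∞) fun t => (deriv (S.F g) t)⁻¹ :=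
  (S.smooth_deriv g).inv fun t => (S.dpos g t).ne'

lemma q_smooth (g : Γ) : ContDiff ℝ (⊤ : ℕ∞) (c.q g) :=
  (inv_deriv_smooth g).smul ((σ' (S.A g)).contDiff.comp (c.Q0_smooth.comp (S.smooth g)))
lemma q_per (g : Γ) (t : ℝ) : c.q g (t + 1) = c.q g t := by
  simp only [q, deriv_per (S.per g), S.per, c.Q0_per]
lemma D_smooth (g : Γ) : ContDiff ℝ (⊤ : ℕ∞) (c.D g) := (c.q_smooth g).sub c.Q0_smooth
lemma D_per (g : Γ) (t : ℝ) : c.D g (t + 1) = c.D g t := by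
  simp only [D, q_per, Q0_per]
lemma D_L (g : Γ) {t : ℝ} (h : para t ∈ S.L) : c.D g t = 0 := by
  rw [D, q, c.Q0_L h, c.Q0_L (F_L g h), EE_equiv g h, map_smul, σ'_σ, smul_smul,
    inv_mul_cancel₀ (S.dpos g t).ne', one_smul, sub_self]

/-- Functoriality of pullbacks. -/
lemma q_mul (g γ : Γ) (t : ℝ) :
    c.q (g * γ) t = (deriv (S.F γ) t)⁻¹ • σ' (S.A γ) (c.q g (S.F γ t)) := by
  rw [q, q, σ'_sign (S.mobius_A_mul g γ), σ'_mul, per_congr c.Q0_per (para_F_mul g γ t), deriv_F_mul,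
    map_smul, smul_smul, mul_inv, mul_comm]

/-- Coefficients of the transfer operator: the pullback by `s` weighted by `p s` in the second
variable. -/
def cf (s : {s // s ∈ c.T}) (z : ℝ × ℝ) : Wt →L[ℝ] Wt :=
  (c.p s z.2 * (deriv (S.F s) z.1)⁻¹) • σ' (S.A s)
/-- The diagonal action on the plane. -/
def FF (_ : S.Cov) (s : Γ) (z : ℝ × ℝ) : ℝ × ℝ := (S.F s z.1, S.F s z.2)
/-- The transfer operator of the system: `U f` is the sum over `s ∈ T` of the pullbacks of `f` by
`s`, weighted by `p s` in the second variable. -/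
def U (f : ℝ × ℝ → Wt) : ℝ × ℝ → Wt := Uop c.cf (fun s => c.FF s) f

lemma U_apply (f : ℝ × ℝ → Wt) (z : ℝ × ℝ) : c.U f z = ∑ s ∈ c.T,
    (c.p s z.2 * (deriv (S.F s) z.1)⁻¹) • σ' (S.A s) (f (S.F s z.1, S.F s z.2)) := by
  rw [← Finset.sum_coe_sort]; rfl

lemma cf_smooth (s) : ContDiff ℝ (⊤ : ℕ∞) (c.cf s) :=
  (((c.psm s).comp contDiff_snd).mul ((inv_deriv_smooth (S := S) s).comp contDiff_fst)).smul
    contDiff_const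
lemma FF_smooth (s : Γ) : ContDiff ℝ (⊤ : ℕ∞) (c.FF s) :=
  ((S.smooth s).comp contDiff_fst).prodMk ((S.smooth s).comp contDiff_snd)
lemma cf_DP (s) : DP (c.cf s) := by
  constructor <;> intro z <;> simp [cf, deriv_per (S.per s), c.pper]
lemma FF_DP (s : Γ) : DP (fderiv ℝ (c.FF s)) := by
  constructor <;> intro z
  · rw [← fderiv_comp_add_right, show (fun x => c.FF s (x + (1, 0))) = fun x => c.FF s x + (1, 0) from
      funext fun x => by simp [FF, S.per], fderiv_add_const]
  · rw [← fderiv_comp_add_right, show (fun x => c.FF s (x + (0, 1))) = fun x => c.FF s x + (0, 1) from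
      funext fun x => by simp [FF, S.per], fderiv_add_const]
lemma cf_supp (s) {z : ℝ × ℝ} (h : z ∈ tsupport (c.cf s)) : S.N s (para z.2) ≤ 1 / 2 := by
  have hcl : IsClosed {z : ℝ × ℝ | S.N s (para z.2) ≤ 1 / 2} :=
    isClosed_le ((S.N_cont s).comp (para_cont.comp continuous_snd)) continuous_const
  refine closure_minimal (fun w hw => ?_) hcl h
  apply c.pN s
  intro h0
  exact hw (by simp [cf, h0])

lemma U_smooth {f : ℝ × ℝ → Wt} (hf : ContDiff ℝ (⊤ : ℕ∞) f) : ContDiff ℝ (⊤ : ℕ∞) (c.U f) :=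
  Uop_contDiff c.cf_smooth (fun s => c.FF_smooth s) hf

lemma U_DP {f : ℝ × ℝ → Wt} (hf : DP f) : DP (c.U f) := by
  have h1 : ∀ t τ, f (t + 1, τ) = f (t, τ) := fun t τ => by simpa using hf.1 (t, τ)
  have h2 : ∀ t τ, f (t, τ + 1) = f (t, τ) := fun t τ => by simpa using hf.2 (t, τ)
  constructor <;> intro z <;> simp [U_apply, S.per, h1, h2, deriv_per (S.per _), c.pper]

lemma U_add (f g : ℝ × ℝ → Wt) : c.U (f + g) = c.U f + c.U g := by
  funext z
  simp only [U_apply, Pi.add_apply, map_add, smul_add, Finset.sum_add_distrib]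

lemma U_zero : c.U 0 = 0 := by
  funext z
  simp [U_apply]

/-- The source term of the transfer equation. -/
def f0 (z : ℝ × ℝ) : Wt := ∑ g ∈ c.G, c.a g z.2 • c.D g z.1 + ∑ s ∈ c.T, c.p s z.2 • c.D s z.1

lemma f0_smooth : ContDiff ℝ (⊤ : ℕ∞) c.f0 :=
  (ContDiff.sum fun g _ => ((c.a_smooth g).comp contDiff_snd).smul ((c.D_smooth g).comp contDiff_fst)).add
  (ContDiff.sum fun g _ => ((c.psm g).comp contDiff_snd).smul ((c.D_smooth g).comp contDiff_fst))
lemma f0_DP : DP c.f0 := by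
  constructor <;> intro z <;> simp [f0, c.pper, c.D_per, c.a_per]
lemma f0_L {t : ℝ} (h : para t ∈ S.L) (τ : ℝ) : c.f0 (t, τ) = 0 := by
  simp [f0, c.D_L _ h]

/-- Iterates of the transfer operator on the source term. -/
def f (n : ℕ) : ℝ × ℝ → Wt := c.U^[n] c.f0

lemma f_succ (n : ℕ) : c.f (n + 1) = c.U (c.f n) := by simp only [f, iterate_succ_apply']
lemma f_smooth (n : ℕ) : ContDiff ℝ (⊤ : ℕ∞) (c.f n) := by
  induction n with
  | zero => exact c.f0_smooth
  | succ n ih => rw [f_succ]; exact c.U_smooth ih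
lemma f_DP (n : ℕ) : DP (c.f n) := by
  induction n with
  | zero => exact c.f0_DP
  | succ n ih => rw [f_succ]; exact c.U_DP ih
lemma f_L (n : ℕ) {t : ℝ} (h : para t ∈ S.L) (τ : ℝ) : c.f n (t, τ) = 0 := by
  induction n generalizing t τ with
  | zero => exact c.f0_L h τ
  | succ n ih => rw [f_succ, U_apply]; simp [ih (F_L _ h)]

/-- The size at `z` of the `n`-th iterate is governed by the source term at the images of `z` under
the expanding words of length `n` at `z.2`. -/
lemma f_bound : ∃ B > 0, ∀ n (z : ℝ × ℝ) (M : ℝ), 0 ≤ M →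
    (∀ γ Φ, S.Reach c.T z.2 n γ Φ → ∀ l ≤ 2, ‖iteratedFDeriv ℝ l c.f0 (Φ z.1, Φ z.2)‖ ≤ M) →
    ∀ j ≤ 2, ‖iteratedFDeriv ℝ j (c.f n) z‖ ≤ B ^ n * M := by
  obtain ⟨B, hB, h⟩ := Uop_step c.cf_smooth c.cf_DP (fun s => c.FF_smooth s) (fun s => c.FF_DP s)
  refine ⟨B, hB, fun n => ?_⟩
  induction n with
  | zero =>
    intro z M hM hr j hj
    simpa [f] using hr 1 id Reach.zero j hj
  | succ n ih =>
    intro z M hM hr j hj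
    rw [f_succ, pow_succ', mul_assoc]
    refine h (c.f n) (c.f_smooth n) z _ (by positivity) (fun s hs l hl => ?_) j hj
    refine ih _ M hM (fun γ Φ hR l hl => ?_) l hl
    exact hr _ _ (Reach.cons s.2 (c.cf_supp s hs) hR) l hl

/-- Exponential decay of the iterates, uniformly away from the diagonal and along expanding words.
Applying `U` costs a factor `B`, but the source term is flat along `L` and expanding words bring
the first coordinate exponentially close to `L`: vanishing to a high enough order `N + 1` beats
`B`. -/
lemma f_decay {ε : ℝ} (hε : 0 < ε) : ∃ v : ℕ → ℝ, Summable v ∧ (∀ k, 0 ≤ v k) ∧ ∀ t τ,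
    ε < S.d (para t) (para τ) → ∀ n γ Φ, S.Reach c.T τ n γ Φ → ∀ k, ∀ j ≤ 2,
      ‖iteratedFDeriv ℝ j (c.f k) (Φ t, Φ τ)‖ ≤ (3 / 4) ^ n * v k := by
  obtain ⟨B, hB, h⟩ := c.f_bound
  obtain ⟨C, hC, hcon⟩ := Reach.contract S c.T hε
  obtain ⟨N, hN⟩ := exists_pow_lt_of_lt_one (show 0 < B⁻¹ by positivity)
    (by norm_num : (3 / 4 : ℝ) < 1)
  obtain ⟨A, hA, hfl⟩ := flat_iter S.acc (N + 1) 2 c.f0_smooth c.f0_DP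
    (fun p hp τ => c.f0_L hp τ)
  have hr1 : B * (3 / 4) ^ (N + 1) < 1 := by
    have : B * (3 / 4) ^ N < 1 := by
      calc B * (3 / 4) ^ N < B * B⁻¹ := by gcongr
        _ = 1 := mul_inv_cancel₀ hB.ne'
    rw [pow_succ]
    nlinarith [show (0:ℝ) < B * (3/4) ^ N by positivity]
  refine ⟨fun k => A * C ^ (N + 1) * (B * (3 / 4) ^ (N + 1)) ^ k,
    (summable_geometric_of_lt_one (by positivity) hr1).mul_left _, fun k => by positivity, ?_⟩
  intro t τ ht n γ Φ hR k j hj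
  have := h k (Φ t, Φ τ) (A * (C * (3 / 4) ^ (n + k)) ^ (N + 1)) (by positivity) ?_ j hj
  · refine this.trans ?_
    have h34 : ((3 / 4 : ℝ) ^ n) ^ (N + 1) ≤ (3 / 4) ^ n := by
      rw [← pow_mul]
      exact pow_le_pow_of_le_one (by norm_num) (by norm_num) (by nlinarith)
    calc B ^ k * (A * (C * (3 / 4) ^ (n + k)) ^ (N + 1))
        = ((3 / 4 : ℝ) ^ n) ^ (N + 1) * (A * C ^ (N + 1) * (B * (3 / 4) ^ (N + 1)) ^ k) := by
          rw [pow_add (3 / 4 : ℝ) n k]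
          simp only [mul_pow]
          rw [pow_right_comm (3 / 4 : ℝ) k (N + 1)]; ring
      _ ≤ _ := by gcongr
  · intro δ Ψ hR' l hl
    have hR'' := hR.trans hR'
    obtain ⟨q, hq, hqb⟩ := hcon t τ ht _ _ _ hR''
    refine (hfl l hl q hq _ _).trans ?_
    gcongr
    exact hqb

/-- The sum of the iterates, solution of the transfer equation `R = f0 + U R`. -/
def R (z : ℝ × ℝ) : Wt := ∑' n, c.f n z

lemma R_DP : DP c.R := by
  constructor <;> intro z <;> simp only [R, (c.f_DP _).1, (c.f_DP _).2]

lemma R_L {t : ℝ} (h : para t ∈ S.L) (τ : ℝ) : c.R (t, τ) = 0 := by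
  simp [R, c.f_L _ h]

lemma R_smooth {z : ℝ × ℝ} (hz : z ∈ offDiag2) : ContDiffAt ℝ 2 c.R z := by
  have hd : 0 < S.d (para z.1) (para z.2) := S.d_pos hz
  set ε := S.d (para z.1) (para z.2) / 2 with hε
  have hlt : ε < S.d (para z.1) (para z.2) := half_lt_self hd
  obtain ⟨v, hv, -, hb⟩ := c.f_decay (half_pos hd)
  have hc : Continuous fun q : ℝ × ℝ => S.d (para q.1) (para q.2) :=
    S.d_cont.comp (f := fun q : ℝ × ℝ => (para q.1, para q.2))
      ((para_cont.comp continuous_fst).prodMk (para_cont.comp continuous_snd))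
  have hO : IsOpen {q : ℝ × ℝ | ε < S.d (para q.1) (para q.2)} := isOpen_lt continuous_const hc
  have := contDiffOn_tsum_two (f := c.f) c.f_smooth hO hv (fun n w hw j hj => by
    simpa using hb w.1 w.2 hw 0 1 id Reach.zero n j hj)
  have hm : {q : ℝ × ℝ | ε < S.d (para q.1) (para q.2)} ∈ nhds z := hO.mem_nhds hlt
  exact this.contDiffAt hm

lemma R_decay {ε : ℝ} (hε : 0 < ε) : ∃ C ≥ 0, ∀ t τ, ε < S.d (para t) (para τ) →
    ∀ n γ Φ, S.Reach c.T τ n γ Φ → ‖c.R (Φ t, Φ τ)‖ ≤ (3 / 4) ^ n * C := by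
  obtain ⟨v, hv, hv0, hb⟩ := c.f_decay hε
  refine ⟨∑' k, v k, tsum_nonneg hv0, fun t τ ht n γ Φ hR => ?_⟩
  rw [← tsum_mul_left]
  refine tsum_of_norm_bounded (hv.mul_left _).hasSum fun k => ?_
  simpa using hb t τ ht n γ Φ hR k 0 (by norm_num)

end Cov
end Sys

/-! ### The invariant field of quadratic forms and the invariant area form -/

/-- The polarized determinant `P₀₀ Q₁₁ + P₁₁ Q₀₀ - 2 P₀₁ Q₀₁`, an `SL(2,ℝ)`-invariant bilinear
form. -/
def pair (P Q : Wt) : ℝ := P.1 * Q.2.2 + P.2.2 * Q.1 - 2 * P.2.1 * Q.2.1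

lemma pair_comm (P Q : Wt) : pair P Q = pair Q P := by unfold pair; ring

lemma pair_EE (a b : ℝ) : pair (EE a) (EE b) = sin (π * (a - b)) ^ 2 := by
  rw [sin_pi_diff]; unfold pair EE; ring

lemma pair_σ (A : SL2) (P Q : Wt) : pair (σ A P) (σ A Q) = pair P Q := by
  have h := sl2_det A
  have : pair (σ A P) (σ A Q) = (A 0 0 * A 1 1 - A 0 1 * A 1 0) ^ 2 * pair P Q := by
    simp only [pair, σ, sym_apply]; ring
  rw [this, h]; ring

/-- The quadratic form of a symmetric matrix. -/
def qf (P : Wt) (x y : ℝ) : ℝ := P.1 * x ^ 2 + 2 * P.2.1 * x * y + P.2.2 * y ^ 2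

/-- Positive definite symmetric matrices. -/
def PDef (P : Wt) : Prop := ∀ x y, (x ≠ 0 ∨ y ≠ 0) → 0 < qf P x y

lemma pair_pos {P Q : Wt} (hP : PDef P) (hQ : PDef Q) : 0 < pair P Q := by
  have key : ∀ {P : Wt}, PDef P → 0 < P.1 ∧ 0 < P.2.2 ∧ P.2.1 ^ 2 < P.1 * P.2.2 := by
    intro P hP
    have h1 : 0 < P.1 := by simpa [qf] using hP 1 0 (by simp)
    have h2 : 0 < P.2.2 := by simpa [qf] using hP 0 1 (by simp)
    have h3 : 0 < P.1 * (P.1 * P.2.2 - P.2.1 ^ 2) := by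
      have := hP (-P.2.1) P.1 (Or.inr h1.ne')
      unfold qf at this
      nlinarith
    refine ⟨h1, h2, ?_⟩
    have := (mul_pos_iff_of_pos_left h1).1 h3
    linarith
  obtain ⟨p1, p2, p3⟩ := key hP
  obtain ⟨q1, q2, q3⟩ := key hQ
  unfold pair
  have h1 : (2 * P.2.1 * Q.2.1) ^ 2 < (P.1 * Q.2.2 + P.2.2 * Q.1) ^ 2 := by
    have a : P.2.1 ^ 2 * Q.2.1 ^ 2 < (P.1 * P.2.2) * (Q.1 * Q.2.2) :=
      mul_lt_mul'' p3 q3 (sq_nonneg _) (sq_nonneg _)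
    nlinarith [sq_nonneg (P.1 * Q.2.2 - P.2.2 * Q.1)]
  have h2 := abs_lt_of_sq_lt_sq h1 (by positivity)
  linarith [le_abs_self (2 * P.2.1 * Q.2.1)]

lemma PDef.σ' {P : Wt} (h : PDef P) (A : SL2) : PDef (σ' A P) := by
  intro x y hxy
  have hd := sl2_det A
  have e : qf (_root_.σ' A P) x y = qf P (A 1 1 * x - A 1 0 * y) (-A 0 1 * x + A 0 0 * y) := by
    simp only [qf, _root_.σ', sym_apply]; ring
  rw [e]
  apply h
  by_contra! hcon
  have e1 : x = A 0 0 * (A 1 1 * x - A 1 0 * y) + A 1 0 * (-A 0 1 * x + A 0 0 * y) := by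
    linear_combination (-x) * hd
  have e2 : y = A 0 1 * (A 1 1 * x - A 1 0 * y) + A 1 1 * (-A 0 1 * x + A 0 0 * y) := by
    linear_combination (-y) * hd
  rw [hcon.1, hcon.2] at e1 e2
  rcases hxy with h | h
  · exact h (by simpa using e1)
  · exact h (by simpa using e2)

lemma PDef.smul {P : Wt} (h : PDef P) {r : ℝ} (hr : 0 < r) : PDef (r • P) := by
  intro x y hxy
  have : qf (r • P) x y = r * qf P x y := by simp [qf]; ring
  rw [this]; exact mul_pos hr (h x y hxy)

lemma qf_sum {ι : Type*} (H : Finset ι) (w : ι → ℝ) (q : ι → Wt) (x y : ℝ) :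
    qf (∑ g ∈ H, w g • q g) x y = ∑ g ∈ H, w g * qf (q g) x y := by
  induction H using Finset.induction_on with
  | empty => simp [qf]
  | insert a H ha ih =>
    rw [Finset.sum_insert ha, Finset.sum_insert ha, ← ih]
    simp only [qf, Prod.fst_add, Prod.snd_add, Prod.smul_fst, Prod.smul_snd, smul_eq_mul]; ring

lemma pair_norm_le (P : Wt) (b : ℝ) : -(4 * ‖P‖) ≤ pair P (EE b) := by
  have h1 : |P.1| ≤ ‖P‖ := norm_fst_le P
  have h2 : |P.2.1| ≤ ‖P‖ := (norm_fst_le P.2).trans (norm_snd_le P)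
  have h3 : |P.2.2| ≤ ‖P‖ := (norm_snd_le P.2).trans (norm_snd_le P)
  have hs := sin_sq_add_cos_sq (π * b)
  rw [abs_le] at h1 h2 h3
  simp only [pair, EE]
  set s := sin (π * b)
  set d := cos (π * b)
  have a1 : -‖P‖ ≤ P.1 * s ^ 2 := by nlinarith [sq_nonneg s, sq_nonneg d, norm_nonneg P]
  have a2 : -‖P‖ ≤ P.2.2 * d ^ 2 := by nlinarith [sq_nonneg s, sq_nonneg d, norm_nonneg P]
  have a3 : P.2.1 * (2 * (d * s)) ≤ ‖P‖ := by
    have h4 : |2 * (d * s)| ≤ 1 := by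
      rw [abs_le]; constructor <;> nlinarith [sq_nonneg (s - d), sq_nonneg (s + d)]
    calc _ ≤ |P.2.1 * (2 * (d * s))| := le_abs_self _
      _ = |P.2.1| * |2 * (d * s)| := abs_mul _ _
      _ ≤ ‖P‖ * 1 := by gcongr; rw [abs_le]; exact h2
      _ = _ := mul_one _
  nlinarith [norm_nonneg P]

namespace Sys
variable {Γ : Type*} [Group Γ] {S : Sys Γ}
namespace Cov
variable (c : S.Cov)

/-- The invariant field over the domain of discontinuity: the average of the pullbacks of `Q0` by
the elements of the group with weights `p0 ∘ F g` in the second variable. The sums are finite when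
the second variable lies off the lift of `L`. -/
def QΩ (z : ℝ × ℝ) : Wt :=
  (∑ᶠ g, c.p0 (S.F g z.2))⁻¹ • ∑ᶠ g, c.p0 (S.F g z.2) • c.q g z.1

lemma QΩ_sum {τ : ℝ} {H : Finset Γ} (hH : ∀ g, c.p0 (S.F g τ) ≠ 0 → g ∈ H) (t : ℝ) :
    c.QΩ (t, τ) = (∑ g ∈ H, c.p0 (S.F g τ))⁻¹ • ∑ g ∈ H, c.p0 (S.F g τ) • c.q g t := by
  rw [QΩ, finsum_eq_sum_of_support_subset (s := H), finsum_eq_sum_of_support_subset (s := H)]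
  · intro g hg
    exact hH g fun h0 => hg (by simp [h0])
  · intro g hg
    exact hH g hg

lemma QΩ_sum' {τ : ℝ} (h : para τ ∉ S.L) : ∃ H : Finset Γ, 0 < ∑ g ∈ H, c.p0 (S.F g τ) ∧
    ∀ t, c.QΩ (t, τ) = (∑ g ∈ H, c.p0 (S.F g τ))⁻¹ • ∑ g ∈ H, c.p0 (S.F g τ) • c.q g t := by
  refine ⟨(c.finite_hit h).toFinset, ?_, fun t => c.QΩ_sum (fun g hg => by simpa using hg) t⟩
  obtain ⟨g, hg⟩ := c.exists_hit h
  exact Finset.sum_pos' (fun g _ => c.p0nn _) ⟨g, by simpa using hg.ne', hg⟩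

lemma QΩ_equiv (γ : Γ) {τ : ℝ} (h : para τ ∉ S.L) (t : ℝ) :
    c.QΩ (t, τ) = (deriv (S.F γ) t)⁻¹ • σ' (S.A γ) (c.QΩ (S.F γ t, S.F γ τ)) := by
  have e0 : ∀ g, c.p0 (S.F g (S.F γ τ)) = c.p0 (S.F (g * γ) τ) := fun g =>
    per_congr c.p0per (para_F_mul g γ τ).symm
  have h' : para (S.F γ τ) ∉ S.L := by rw [← S.lift, S.Linv_iff]; exact h
  have hfin : (support fun g => c.p0 (S.F g (S.F γ τ)) • c.q g (S.F γ t)).Finite :=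
    (c.finite_hit h').subset fun g hg h0 => hg (by simp [h0])
  have e1 : ∑ᶠ g, c.p0 (S.F g (S.F γ τ)) = ∑ᶠ g, c.p0 (S.F g τ) := by
    simp only [e0]
    exact finsum_comp_equiv (Equiv.mulRight γ) (f := fun g => c.p0 (S.F g τ))
  have e2 : ∑ᶠ g, c.p0 (S.F g τ) • c.q g t =
      (deriv (S.F γ) t)⁻¹ • σ' (S.A γ) (∑ᶠ g, c.p0 (S.F g (S.F γ τ)) • c.q g (S.F γ t)) := by
    have := map_finsum ((deriv (S.F γ) t)⁻¹ • σ' (S.A γ)) hfin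
    simp only [_root_.smul_apply, map_smul] at this
    rw [this, ← finsum_comp_equiv (Equiv.mulRight γ) (f := fun g => c.p0 (S.F g τ) • c.q g t)]
    refine finsum_congr fun g => ?_
    rw [e0, Equiv.coe_mulRight, q_mul, smul_comm]
  rw [QΩ, QΩ]
  simp only
  rw [e2, e1, map_smul, smul_comm]

/-- Off `L` the difference `QΩ - Q0` solves the transfer equation. -/
lemma QΩ_eq {t τ : ℝ} (h : para τ ∉ S.L) : c.QΩ (t, τ) - c.Q0 t =
    c.f0 (t, τ) + c.U (fun z => c.QΩ z - c.Q0 z.1) (t, τ) := by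
  have hU : c.U (fun z => c.QΩ z - c.Q0 z.1) (t, τ) =
      ∑ s ∈ c.T, c.p s τ • (c.QΩ (t, τ) - c.q s t) := by
    rw [U_apply]
    refine Finset.sum_congr rfl fun s _ => ?_
    rw [c.QΩ_equiv s h t, q, ← smul_sub, ← map_sub, smul_smul]
  have hG : ∑ g ∈ c.G, c.a g τ • c.D g t = c.p0 τ • (c.QΩ (t, τ) - c.Q0 t) := by
    by_cases h0 : c.p0 τ = 0
    · simp [a, h0]
    · have hK := c.p0K τ h0
      have hpos := c.sum_pos hK
      rw [c.QΩ_sum (H := c.G) (fun g hg => c.mem_G hK hg) t]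
      simp only [a, D, mul_smul, ← Finset.smul_sum]
      congr 1
      simp only [div_eq_inv_mul, mul_smul, ← Finset.smul_sum, smul_sub, Finset.sum_sub_distrib]
      congr 1
      rw [← Finset.sum_smul, smul_smul, inv_mul_cancel₀ hpos.ne', one_smul]
  rw [hU, f0]
  simp only
  rw [hG, add_assoc, ← Finset.sum_add_distrib]
  simp only [D, ← smul_add]
  have e : ∀ s, c.q s t - c.Q0 t + (c.QΩ (t, τ) - c.q s t) = c.QΩ (t, τ) - c.Q0 t := fun s => by abel
  simp only [e]
  rw [← Finset.sum_smul, ← add_smul, c.sum, one_smul]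

lemma sum_f (m : ℕ) : (∑ n ∈ Finset.range (m + 1), c.f n) =
    c.f0 + c.U (∑ n ∈ Finset.range m, c.f n) := by
  induction m with
  | zero => rw [Finset.sum_range_zero, U_zero]; simp [f]
  | succ m ih =>
    rw [Finset.sum_range_succ _ (m + 1), f_succ, Finset.sum_range_succ _ m, U_add, ← add_assoc, ← ih,
      Finset.sum_range_succ _ m]

/-- Unfolding the transfer equation `m` times leaves no remainder at a point without expanding
words of length `m`. -/
lemma err_zero (m : ℕ) {t τ : ℝ} (h : para τ ∉ S.L) (hR : ∀ γ Φ, ¬ S.Reach c.T τ m γ Φ) :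
    c.QΩ (t, τ) - c.Q0 t = (∑ n ∈ Finset.range m, c.f n) (t, τ) := by
  induction m generalizing t τ with
  | zero => exact (hR _ _ Reach.zero).elim
  | succ m ih =>
    rw [sum_f, c.QΩ_eq h, Pi.add_apply, U_apply, U_apply]
    congr 1
    refine Finset.sum_congr rfl fun s hs => ?_
    by_cases h0 : c.p s τ = 0
    · simp [h0]
    · simp only
      rw [ih (by rw [← S.lift, S.Linv_iff]; exact h)
        fun γ Φ hr => hR _ _ (Reach.cons hs (c.pN s τ h0) hr)]

/-- Off `L` the series has finitely many nonzero terms and its sum is the difference `QΩ - Q0`. -/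
lemma R_eq {t τ : ℝ} (h : para τ ∉ S.L) : c.R (t, τ) = c.QΩ (t, τ) - c.Q0 t := by
  obtain ⟨m, hm⟩ := c.no_reach h
  have h1 : ∀ n ≥ m, (∑ k ∈ Finset.range n, c.f k) (t, τ) = c.QΩ (t, τ) - c.Q0 t := fun n hn =>
    (c.err_zero n h (hm n hn)).symm
  rw [← h1 m le_rfl, R, tsum_eq_sum (s := Finset.range m), Finset.sum_apply]
  intro n hn
  have hn : m ≤ n := by simpa using hn
  have e := h1 (n + 1) (by omega)
  rw [Finset.sum_range_succ, Pi.add_apply, h1 n hn] at e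
  simpa using e

/-- The invariant field of symmetric matrices. -/
def Q (z : ℝ × ℝ) : Wt := c.Q0 z.1 + c.R z

lemma Q_Ω {t τ : ℝ} (h : para τ ∉ S.L) : c.Q (t, τ) = c.QΩ (t, τ) := by
  simp [Q, c.R_eq h]

lemma Q_L {t : ℝ} (h : para t ∈ S.L) (τ : ℝ) : c.Q (t, τ) = EE t := by
  simp [Q, c.R_L h, c.Q0_L h]

lemma Q_DP : DP c.Q := by
  have := c.R_DP
  constructor <;> intro z <;> simp only [Q, this.1, this.2] <;> simp [c.Q0_per]

lemma Q_smooth {z : ℝ × ℝ} (hz : z ∈ offDiag2) : ContDiffAt ℝ 2 c.Q z := by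
  have hle : ((2 : ℕ∞) : WithTop ℕ∞) ≤ ((⊤ : ℕ∞) : WithTop ℕ∞) := by exact_mod_cast le_top
  exact ((c.Q0_smooth.comp contDiff_fst).of_le hle).contDiffAt.add (c.R_smooth hz)

lemma off_F (γ : Γ) {t τ : ℝ} (h : (t, τ) ∈ offDiag2) : (S.F γ t, S.F γ τ) ∈ offDiag2 := by
  change para (S.F γ t) ≠ para (S.F γ τ)
  rw [← S.lift, ← S.lift]
  exact (S.ρ γ).injective.ne h

/-- Equivariance holds off `L` in the second variable by construction, and everywhere by continuity
and density. -/
lemma Q_equiv (γ : Γ) {t τ : ℝ} (h : (t, τ) ∈ offDiag2) :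
    c.Q (S.F γ t, S.F γ τ) = deriv (S.F γ) t • σ (S.A γ) (c.Q (t, τ)) := by
  have hc1 : ContinuousAt (fun u => c.Q (S.F γ t, S.F γ u)) τ := by
    have := (c.Q_smooth (off_F (S := S) γ h)).continuousAt
    exact ContinuousAt.comp (f := fun u => (S.F γ t, S.F γ u)) (g := c.Q) this
      (by have := (S.smooth γ).continuous; fun_prop)
  have hc2 : ContinuousAt (fun u => deriv (S.F γ) t • σ (S.A γ) (c.Q (t, u))) τ := by
    have := (c.Q_smooth h).continuousAt
    have := ContinuousAt.comp (f := fun u => (t, u)) (g := c.Q) this (by fun_prop)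
    have h3 : ContinuousAt (fun u => σ (S.A γ) (c.Q (t, u))) τ :=
      (σ (S.A γ)).continuous.continuousAt.comp this
    exact (continuousAt_const (y := deriv (S.F γ) t)).smul h3
  refine tendsto_nhds_unique_of_frequently_eq hc1.tendsto hc2.tendsto ?_
  refine (mem_closure_iff_frequently.1 (S.dense τ)).mono fun u hu => ?_
  have hu' : para (S.F γ u) ∉ S.L := by rw [← S.lift, S.Linv_iff]; exact hu
  rw [c.Q_Ω hu', c.Q_Ω hu, c.QΩ_equiv γ hu t, map_smul, smul_smul,
    mul_inv_cancel₀ (S.dpos γ t).ne', one_smul, σ_σ']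

/-- The reciprocal of the density of the invariant form. When both points lie in `L` it is the
squared chordal distance, the reciprocal of the standard `PSL(2,ℝ)`-invariant density. -/
def H (z : ℝ × ℝ) : ℝ := pair (c.Q z) (c.Q (z.2, z.1))

lemma H_comm (t τ : ℝ) : c.H (t, τ) = c.H (τ, t) := pair_comm _ _

lemma off_swap {t τ : ℝ} (h : (t, τ) ∈ offDiag2) : (τ, t) ∈ offDiag2 := Ne.symm h

lemma H_equiv (γ : Γ) {t τ : ℝ} (h : (t, τ) ∈ offDiag2) :
    c.H (S.F γ t, S.F γ τ) = deriv (S.F γ) t * deriv (S.F γ) τ * c.H (t, τ) := by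
  have hs : ∀ (a b : ℝ) (P Q : Wt), pair (a • P) (b • Q) = a * b * pair P Q := fun a b P Q => by
    simp [pair]; ring
  simp only [H]
  rw [c.Q_equiv γ h, c.Q_equiv γ (off_swap h), hs, pair_σ]

lemma H_DP : DP c.H := by
  have h := c.Q_DP
  have h1 : ∀ t τ, c.Q (t + 1, τ) = c.Q (t, τ) := fun t τ => by simpa using h.1 (t, τ)
  have h2 : ∀ t τ, c.Q (t, τ + 1) = c.Q (t, τ) := fun t τ => by simpa using h.2 (t, τ)
  constructor <;> rintro ⟨t, τ⟩ <;> simp [H, h1, h2]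

lemma H_congr {t τ t' τ' : ℝ} (h1 : para t = para t') (h2 : para τ = para τ') :
    c.H (t, τ) = c.H (t', τ') := by
  obtain ⟨m, rfl⟩ := (para_eq_iff_int _ _).1 h1
  obtain ⟨n, rfl⟩ := (para_eq_iff_int _ _).1 h2
  exact c.H_DP.int m n t' τ'

lemma Q0_pdef {t : ℝ} (h : para t ∉ S.L) : PDef (c.Q0 t) := by
  intro x y hxy
  have hκ := (c.κpos t).2 h
  have : qf (c.Q0 t) x y = (cos (π * t) * x + sin (π * t) * y) ^ 2 + c.κ t * (x ^ 2 + y ^ 2) := by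
    simp [qf, Q0, EE]; ring
  rw [this]
  have : 0 < x ^ 2 + y ^ 2 := by
    rcases hxy with h | h <;> positivity
  positivity

lemma QΩ_pdef {t τ : ℝ} (ht : para t ∉ S.L) (hτ : para τ ∉ S.L) : PDef (c.QΩ (t, τ)) := by
  obtain ⟨H, hH, e⟩ := c.QΩ_sum' hτ
  rw [e]
  refine PDef.smul ?_ (inv_pos.2 hH)
  intro x y hxy
  rw [qf_sum]
  obtain ⟨g, hg, hg'⟩ := Finset.exists_ne_zero_of_sum_ne_zero hH.ne'
  have hq : ∀ g, 0 < qf (c.q g t) x y := fun g => by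
    refine ((Q0_pdef c ?_).σ' (S.A g)).smul (inv_pos.2 (S.dpos g t)) x y hxy
    rw [← S.lift, S.Linv_iff]; exact ht
  exact Finset.sum_pos' (fun g _ => mul_nonneg (c.p0nn _) (hq g).le)
    ⟨g, hg, mul_pos (lt_of_le_of_ne (c.p0nn _) hg'.symm) (hq g)⟩

/-- Positivity may be checked after applying an expanding word at `τ`. Such a word keeps the two
points apart while making the correction `R` as small as desired, so that the chordal term
dominates. -/
lemma H_pos_L {t τ : ℝ} (h : (t, τ) ∈ offDiag2) (hτ : para τ ∈ S.L) : 0 < c.H (t, τ) := by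
  have hd : 0 < S.d (para t) (para τ) := S.d_pos h
  set Λ : ℝ := ∑ s ∈ c.T, Fr (S.A s)
  have hfr : ∀ s, 0 ≤ Fr (S.A s) := fun s => by unfold Fr; positivity
  have hΛ : ∀ s ∈ c.T, Fr (S.A s) ≤ Λ := fun s hs =>
    Finset.single_le_sum (f := fun s => Fr (S.A s)) (fun i _ => hfr i) hs
  have hΛ0 : 0 ≤ Λ := Finset.sum_nonneg fun s _ => hfr s
  set ε := min (S.d (para t) (para τ) / 2) (1 / (2 * (Λ + 1))) with hε
  have hεp : 0 < ε := by positivity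
  have hεd : ε < S.d (para t) (para τ) := (min_le_left _ _).trans_lt (half_lt_self hd)
  have hεΛ : 2 * ε * Λ ≤ 1 := by
    have h1 : ε ≤ 1 / (2 * (Λ + 1)) := min_le_right _ _
    rw [le_div_iff₀ (by positivity)] at h1
    nlinarith
  obtain ⟨η, hη, hηd⟩ := S.d_of_sqc hεp
  obtain ⟨C, hC, hdec⟩ := c.R_decay hεp
  obtain ⟨n, hn⟩ : ∃ n : ℕ, (3 / 4 : ℝ) ^ n * (4 * C) < η := by
    obtain ⟨n, hn⟩ := exists_pow_lt_of_lt_one (show 0 < η / (4 * C + 1) by positivity)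
      (by norm_num : (3 / 4 : ℝ) < 1)
    refine ⟨n, ?_⟩
    rw [lt_div_iff₀ (by positivity)] at hn
    have : (0:ℝ) < (3 / 4) ^ n := by positivity
    nlinarith
  obtain ⟨γ, Φ, hR⟩ := c.exists_reach (fun g => c.p0_L (F_L g hτ)) n
  have hb := hdec t τ hεd n γ Φ hR
  have hsq : η < sqc (para (Φ t)) (para (Φ τ)) := by
    by_contra hcon
    exact (hηd _ _ (not_lt.1 hcon)).not_gt (hR.d_lt hΛ hεp hεΛ hεd)
  have hΦL : para (Φ τ) ∈ S.L := by rw [← hR.lift]; exact S.Linv _ _ hτ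
  have hpos : 0 < c.H (Φ t, Φ τ) := by
    simp only [H]
    rw [c.Q_L hΦL]
    have e : pair (c.Q (Φ t, Φ τ)) (EE (Φ τ)) = pair (EE (Φ t)) (EE (Φ τ)) + c.κ (Φ t) +
        pair (c.R (Φ t, Φ τ)) (EE (Φ τ)) := by
      have hs := sin_sq_add_cos_sq (π * Φ τ)
      simp only [Q, Q0]
      simp only [pair, EE, Prod.fst_add, Prod.snd_add, Prod.smul_fst, Prod.smul_snd, smul_eq_mul]
      linear_combination c.κ (Φ t) * hs
    rw [e, pair_EE, ← sqc_para]
    have := pair_norm_le (c.R (Φ t, Φ τ)) (Φ τ)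
    have := c.κnn (Φ t)
    linarith
  have e1 := c.H_equiv γ h
  rw [c.H_congr (t' := Φ t) (τ' := Φ τ) (by rw [← S.lift, hR.lift]) (by rw [← S.lift, hR.lift])] at e1
  rw [e1] at hpos
  exact (mul_pos_iff_of_pos_left (mul_pos (S.dpos γ t) (S.dpos γ τ))).1 hpos

lemma H_pos {t τ : ℝ} (h : (t, τ) ∈ offDiag2) : 0 < c.H (t, τ) := by
  by_cases hτ : para τ ∈ S.L
  · exact c.H_pos_L h hτ
  by_cases ht : para t ∈ S.L
  · rw [H_comm]; exact c.H_pos_L (off_swap h) ht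
  simp only [H]
  rw [c.Q_Ω hτ, c.Q_Ω ht]
  exact pair_pos (c.QΩ_pdef ht hτ) (c.QΩ_pdef hτ ht)

lemma H_smooth {z : ℝ × ℝ} (hz : z ∈ offDiag2) : ContDiffAt ℝ 2 c.H z := by
  have h1 := c.Q_smooth hz
  have h2 : ContDiffAt ℝ 2 (fun w : ℝ × ℝ => c.Q (w.2, w.1)) z :=
    ContDiffAt.comp (f := fun w : ℝ × ℝ => (w.2, w.1)) z (c.Q_smooth (z := (z.2, z.1)) (off_swap hz))
      (contDiff_snd.prodMk contDiff_fst).contDiffAt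
  exact ((h1.fst.mul h2.snd.snd).add (h1.snd.snd.mul h2.fst)).sub
    ((contDiffAt_const.mul h1.snd.fst).mul h2.snd.fst)

end Cov

lemma circleDeriv_eq (γ : Γ) (t : ℝ) : circleDeriv (S.ρ γ) (para t) = deriv (S.F γ) t := by
  have hd : Differentiable ℝ (S.F γ) := (S.smooth γ).differentiable (by simp)
  have hex : ∃ F : ℝ → ℝ, IsLift F (S.ρ γ) ∧ Differentiable ℝ F := ⟨S.F γ, S.lift γ, hd⟩
  rw [circleDeriv, dif_pos hex]
  obtain ⟨h1, h2⟩ := hex.choose_spec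
  rw [lift_deriv h2 hd (fun t => by rw [← h1, S.lift])]
  exact per_congr (deriv_per (S.per γ)) (para_inv _)

theorem exists_form (S : Sys Γ) : ∃ ω : RP1 → RP1 → ℝ, IsVolumeForm 2 ω ∧
    ∀ γ, PreservesForm (S.ρ γ) ω := by
  obtain ⟨c⟩ := S.exists_cov
  refine ⟨fun x y => (c.H (invFun para x, invFun para y))⁻¹, ⟨fun x y hxy => ?_, ?_⟩, fun γ x y hxy => ?_⟩
  · refine inv_pos.2 (c.H_pos ?_)
    change para _ ≠ para _
    rwa [para_inv, para_inv]
  · intro z hz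
    have e : (chartDensity fun x y => (c.H (invFun para x, invFun para y))⁻¹) = fun z => (c.H z)⁻¹ := by
      funext z
      simp only [chartDensity]
      rw [c.H_congr (para_inv _) (para_inv _)]
    rw [e]
    exact ((c.H_smooth hz).inv (c.H_pos hz).ne').contDiffWithinAt
  · obtain ⟨t, rfl⟩ := para_surj x
    obtain ⟨τ, rfl⟩ := para_surj y
    have h : (t, τ) ∈ offDiag2 := hxy
    simp only
    rw [circleDeriv_eq, circleDeriv_eq, S.lift, S.lift, c.H_congr (para_inv _) (para_inv _),
      c.H_congr (para_inv (para t)) (para_inv (para τ)), c.H_equiv γ h]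
    have := S.dpos γ t
    have := S.dpos γ τ
    have := c.H_pos h
    field_simp

end Sys

/-! ### Hyperbolic geometry -/

lemma smul_im_mul (A : SL2) (z : UpperHalfPlane) :
    (A • z).im * ((A 1 0 * z.re + A 1 1) ^ 2 + (A 1 0 * z.im) ^ 2) = z.im := by
  have h := UpperHalfPlane.im_smul_eq_div_normSq (A : GL (Fin 2) ℝ) z
  have h0 : Complex.normSq (UpperHalfPlane.denom (A : GL (Fin 2) ℝ) z) =
      (A 1 0 * z.re + A 1 1) ^ 2 + (A 1 0 * z.im) ^ 2 := by
    change Complex.normSq ((A 1 0 : ℂ) * z + A 1 1) = _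
    rw [Complex.normSq_apply]
    simp
    ring
  have h1 : 0 < Complex.normSq (UpperHalfPlane.denom (A : GL (Fin 2) ℝ) z) :=
    UpperHalfPlane.normSq_denom_pos _ z.im_ne_zero
  have h2 : (A • z).im = z.im / Complex.normSq (UpperHalfPlane.denom (A : GL (Fin 2) ℝ) z) := by
    refine h.trans ?_
    simp
  rw [← h0, h2, div_mul_cancel₀ _ h1.ne']

lemma smul_abs_mul (A : SL2) (z : UpperHalfPlane) :
    ((A • z).re ^ 2 + (A • z).im ^ 2) * ((A 1 0 * z.re + A 1 1) ^ 2 + (A 1 0 * z.im) ^ 2) =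
      (A 0 0 * z.re + A 0 1) ^ 2 + (A 0 0 * z.im) ^ 2 := by
  have h := UpperHalfPlane.coe_specialLinearGroup_apply A z
  have e : ∀ a b : ℝ, (a * z.re + b) ^ 2 + (a * z.im) ^ 2 = Complex.normSq ((a : ℂ) * z + b) := by
    intro a b; rw [Complex.normSq_apply]; simp; ring
  have h1 : 0 < Complex.normSq ((A 1 0 : ℂ) * z + A 1 1) :=
    UpperHalfPlane.normSq_denom_pos (A : GL (Fin 2) ℝ) z.im_ne_zero
  have h2 : (A • z).re ^ 2 + (A • z).im ^ 2 = Complex.normSq ((A • z : UpperHalfPlane) : ℂ) := by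
    rw [Complex.normSq_apply]; simp; ring
  rw [e, e, h2, h, Complex.normSq_div]
  simp only [Algebra.algebraMap_self, RingHom.id_apply]
  rw [div_mul_cancel₀ _ h1.ne']

lemma inv_entries (A : SL2) : A⁻¹ 0 0 = A 1 1 ∧ A⁻¹ 0 1 = - A 0 1 ∧ A⁻¹ 1 0 = - A 1 0 ∧
    A⁻¹ 1 1 = A 0 0 := by
  simp [Matrix.SpecialLinearGroup.coe_inv, Matrix.adjugate_fin_two]

/-- The displacement of the base point `i` is governed by the Frobenius norm:
`cosh d(i, A i) = Fr A / 2`. -/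
lemma dist_I_le (A : SL2) : dist UpperHalfPlane.I (A • UpperHalfPlane.I) ≤ Fr A / 2 := by
  have h1 := smul_im_mul A UpperHalfPlane.I
  have h2 := smul_abs_mul A UpperHalfPlane.I
  have hp := (A • UpperHalfPlane.I).im_pos
  simp only [UpperHalfPlane.I_re, UpperHalfPlane.I_im, mul_zero, zero_add, mul_one] at h1 h2
  have hc : Real.cosh (dist UpperHalfPlane.I (A • UpperHalfPlane.I)) = Fr A / 2 := by
    rw [UpperHalfPlane.cosh_dist']
    simp only [UpperHalfPlane.I_re, UpperHalfPlane.I_im]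
    set u := (A • UpperHalfPlane.I).re
    set v := (A • UpperHalfPlane.I).im
    rw [div_eq_div_iff (by positivity) (by norm_num)]
    unfold Fr
    have e : (A 0 1 ^ 2 + A 0 0 ^ 2) * v = u ^ 2 + v ^ 2 := by
      rw [← h2]; linear_combination (u ^ 2 + v ^ 2) * h1
    linear_combination (-2) * h1 - 2 * e
  rw [← hc]
  have h0 : 0 ≤ dist UpperHalfPlane.I (A • UpperHalfPlane.I) := dist_nonneg
  exact (Real.self_le_sinh_iff.2 h0).trans (Real.sinh_lt_cosh _).le

/-- Additivity of the distance along the semicircle centred at `m` through `o` and `c`, at its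
top `z`. -/
lemma geodesic_top {o c z : UpperHalfPlane} {m : ℝ} (hz : z.re = m)
    (ho : (o.re - m) ^ 2 + o.im ^ 2 = z.im ^ 2) (hc : (c.re - m) ^ 2 + c.im ^ 2 = z.im ^ 2)
    (hm : 0 ≤ (m - o.re) * (c.re - m)) : dist o z + dist z c = dist o c := by
  have po := o.im_pos
  have pc := c.im_pos
  have pz := z.im_pos
  have key : ∀ w : UpperHalfPlane, (w.re - m) ^ 2 + w.im ^ 2 = z.im ^ 2 →
      Real.cosh (dist w z) = z.im / w.im ∧ Real.sinh (dist w z) = |w.re - m| / w.im := by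
    intro w hw
    have pw := w.im_pos
    have h1 : Real.cosh (dist w z) = z.im / w.im := by
      rw [UpperHalfPlane.cosh_dist', hz, hw]
      field_simp
      ring
    refine ⟨h1, ?_⟩
    have h2 : 0 ≤ Real.sinh (dist w z) := Real.sinh_nonneg_iff.2 dist_nonneg
    have h3 := Real.cosh_sq (dist w z)
    rw [← abs_of_nonneg h2]
    rw [← abs_of_nonneg (show 0 ≤ |w.re - m| / w.im by positivity), ← sq_eq_sq_iff_abs_eq_abs,
      div_pow, sq_abs]
    rw [h1] at h3
    have : Real.sinh (dist w z) ^ 2 = (z.im / w.im) ^ 2 - 1 := by linarith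
    rw [this]
    field_simp
    linarith
  obtain ⟨a1, a2⟩ := key o ho
  obtain ⟨b1, b2⟩ := key c hc
  rw [dist_comm z c]
  have hcosh : Real.cosh (dist o z + dist c z) = Real.cosh (dist o c) := by
    rw [Real.cosh_add, a1, a2, b1, b2, UpperHalfPlane.cosh_dist', div_mul_div_comm,
      div_mul_div_comm, ← abs_mul, show (o.re - m) * (c.re - m) = -((m - o.re) * (c.re - m)) by ring,
      abs_neg, abs_of_nonneg hm]
    field_simp
    linear_combination (-1) * ho - hc
  exact Real.cosh_strictMonoOn.injOn (add_nonneg dist_nonneg dist_nonneg) (mem_Ici.2 dist_nonneg) hcosh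

/-- Geodesic segments from a fixed point to points going to infinity reach arbitrary heights. -/
lemma exists_high (o c : UpperHalfPlane) {H : ℝ} (hH : 0 < H)
    (hc : (3 * H + o.im + |o.re|) ^ 2 ≤ c.re ^ 2 + c.im ^ 2) :
    ∃ z : UpperHalfPlane, dist o z + dist z c = dist o c ∧ H ≤ z.im := by
  have po := o.im_pos
  have pc := c.im_pos
  by_cases hcH : H ≤ c.im
  · exact ⟨c, by simp, hcH⟩
  push Not at hcH
  have hx : 2 * H + o.im + |o.re| ≤ |c.re| := by
    have h1 : (2 * H + o.im + |o.re|) ^ 2 ≤ c.re ^ 2 := by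
      nlinarith [abs_nonneg o.re]
    have := sq_le_sq.1 h1
    rwa [abs_of_nonneg (by positivity)] at this
  have hD : 2 * H + o.im ≤ |c.re - o.re| := by
    have := abs_sub_abs_le_abs_sub c.re o.re
    linarith
  set D := c.re - o.re with hDdef
  have hDpos : 0 < |D| := by linarith
  have hD0 : D ≠ 0 := abs_pos.1 hDpos
  have hD2 : |D| ^ 2 = D ^ 2 := sq_abs D
  set m := o.re + (D ^ 2 + c.im ^ 2 - o.im ^ 2) / (2 * D) with hm
  have e1 : (m - o.re) * (2 * D) = D ^ 2 + c.im ^ 2 - o.im ^ 2 := by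
    rw [hm]; field_simp; ring
  have e2 : (c.re - m) * (2 * D) = D ^ 2 - c.im ^ 2 + o.im ^ 2 := by
    have : c.re - m = D - (m - o.re) := by rw [hDdef]; ring
    rw [this]; linear_combination (-1) * e1
  have hr : 0 < (o.re - m) ^ 2 + o.im ^ 2 := by positivity
  refine ⟨⟨⟨m, √((o.re - m) ^ 2 + o.im ^ 2)⟩, Real.sqrt_pos.2 hr⟩, ?_, ?_⟩
  · refine geodesic_top (m := m) rfl ?_ ?_ ?_
    · change _ = √((o.re - m) ^ 2 + o.im ^ 2) ^ 2
      rw [Real.sq_sqrt hr.le]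
    · change _ = √((o.re - m) ^ 2 + o.im ^ 2) ^ 2
      rw [Real.sq_sqrt hr.le]
      have : c.re = o.re + D := by rw [hDdef]; ring
      rw [this]
      linear_combination (-1) * e1
    · have hp : 0 ≤ ((m - o.re) * (2 * D)) * ((c.re - m) * (2 * D)) := by
        rw [e1, e2]
        apply mul_nonneg <;> nlinarith
      have : 0 < (2 * D) ^ 2 := by positivity
      by_contra hcon
      push Not at hcon
      nlinarith
  · change H ≤ √((o.re - m) ^ 2 + o.im ^ 2)
    apply Real.le_sqrt_of_sq_le
    have h1 : H * (2 * |D|) ≤ |m - o.re| * (2 * |D|) := by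
      have : |m - o.re| * (2 * |D|) = |D ^ 2 + c.im ^ 2 - o.im ^ 2| := by
        rw [← e1, abs_mul, abs_mul, abs_two]
      rw [this]
      refine le_trans ?_ (le_abs_self _)
      nlinarith
    have h2 : H ≤ |m - o.re| := le_of_mul_le_mul_right h1 (by positivity)
    have h3 : H ^ 2 ≤ |m - o.re| ^ 2 := by gcongr
    rw [sq_abs] at h3
    nlinarith

/-! ### Limit points are conical -/

lemma rot_entries (t : ℝ) : rotSL (-t) 0 0 = cos (π * t) ∧ rotSL (-t) 0 1 = sin (π * t) ∧
    rotSL (-t) 1 0 = -sin (π * t) ∧ rotSL (-t) 1 1 = cos (π * t) := by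
  simp [rotSL]

/-- The rotation taking `para t` to the point at infinity turns `NA A⁻¹ t` into the squared
norm of a bottom row. -/
lemma bottom_row (A : SL2) (t : ℝ) :
    (rotSL (-t) * A) 1 0 ^ 2 + (rotSL (-t) * A) 1 1 ^ 2 = NA A⁻¹ t := by
  obtain ⟨-, -, h3, h4⟩ := rot_entries t
  obtain ⟨k1, k2, k3, k4⟩ := inv_entries A
  simp only [mul_entries, h3, h4, NA, uu, ww, k1, k2, k3, k4]
  ring

lemma top_row (A : SL2) (t : ℝ) :
    (rotSL (-t) * A) 0 0 ^ 2 + (rotSL (-t) * A) 0 1 ^ 2 = Fr A⁻¹ - NA A⁻¹ t := by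
  obtain ⟨h1, h2, -, -⟩ := rot_entries t
  obtain ⟨k1, k2, k3, k4⟩ := inv_entries A
  have hs := sin_sq_add_cos_sq (π * t)
  simp only [mul_entries, h1, h2, NA, uu, ww, Fr, k1, k2, k3, k4]
  linear_combination (A 0 0 ^ 2 + A 0 1 ^ 2 + A 1 0 ^ 2 + A 1 1 ^ 2) * hs

/-- A matrix whose bottom row is small compared with the top row moves `o` to a point of large
modulus. -/
lemma far_point (A : SL2) (o : UpperHalfPlane) {r M ε : ℝ} (hr : 0 ≤ r)
    (hM : M = (2 * o.re ^ 2 + 2 + o.im ^ 2) * (2 + (1 + 2 * o.re ^ 2) / o.im ^ 2))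
    (h : A 1 0 ^ 2 + A 1 1 ^ 2 ≤ ε * (A 0 0 ^ 2 + A 0 1 ^ 2)) (hε : ε * (r * M) ≤ 1) :
    r ≤ (A • o).re ^ 2 + (A • o).im ^ 2 := by
  have e := smul_abs_mul A o
  have hd := sl2_det A
  have po := o.im_pos
  set a := A 0 0
  set b := A 0 1
  set c := A 1 0
  set d := A 1 1
  set x := o.re
  set y := o.im
  set W := (A • o).re ^ 2 + (A • o).im ^ 2
  have hW : 0 ≤ W := by positivity
  have hcd : 0 < c ^ 2 + d ^ 2 := by
    by_contra hcon
    have hc : c = 0 := by nlinarith [sq_nonneg c, sq_nonneg d]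
    have hd' : d = 0 := by nlinarith [sq_nonneg c, sq_nonneg d]
    rw [hc, hd'] at hd; norm_num at hd
  have h1 : (c * x + d) ^ 2 + (c * y) ^ 2 ≤ (c ^ 2 + d ^ 2) * (2 * x ^ 2 + 2 + y ^ 2) := by
    nlinarith [sq_nonneg (c * x - d), sq_nonneg (d * x), sq_nonneg (d * y), sq_nonneg c, sq_nonneg d]
  have h2 : a ^ 2 + b ^ 2 ≤ ((a * x + b) ^ 2 + (a * y) ^ 2) * (2 + (1 + 2 * x ^ 2) / y ^ 2) := by
    have e1 : ((a * x + b) ^ 2 + (a * y) ^ 2) * (2 + (1 + 2 * x ^ 2) / y ^ 2) =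
        2 * (a * x + b) ^ 2 + 2 * (a * y) ^ 2 + a ^ 2 * (1 + 2 * x ^ 2) +
          (a * x + b) ^ 2 * ((1 + 2 * x ^ 2) / y ^ 2) := by
      field_simp; ring
    have : 0 ≤ (a * x + b) ^ 2 * ((1 + 2 * x ^ 2) / y ^ 2) := by positivity
    rw [e1]
    nlinarith [sq_nonneg (2 * a * x + b), sq_nonneg (a * y)]
  have hM2 : 0 < 2 + (1 + 2 * x ^ 2) / y ^ 2 := by positivity
  have hMp : 0 < M := by rw [hM]; positivity
  have h3 : a ^ 2 + b ^ 2 ≤ W * ((c ^ 2 + d ^ 2) * M) := by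
    refine h2.trans ?_
    rw [← e, hM]
    calc _ ≤ W * ((c ^ 2 + d ^ 2) * (2 * x ^ 2 + 2 + y ^ 2)) * (2 + (1 + 2 * x ^ 2) / y ^ 2) := by
          gcongr
      _ = _ := by ring
  have h4 : r * ((c ^ 2 + d ^ 2) * M) ≤ W * ((c ^ 2 + d ^ 2) * M) := by
    refine le_trans ?_ h3
    calc r * ((c ^ 2 + d ^ 2) * M) ≤ r * ((ε * (a ^ 2 + b ^ 2)) * M) := by gcongr
      _ = (ε * (r * M)) * (a ^ 2 + b ^ 2) := by ring
      _ ≤ 1 * (a ^ 2 + b ^ 2) := by gcongr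
      _ = _ := one_mul _
  exact le_of_mul_le_mul_right h4 (by positivity)

/-- A matrix with bottom row `(e, f)` taking `x + i y` to a point of height `v ≥ H` has a small
bottom row when `H` is large. -/
lemma high_bound {e f x y H v : ℝ} (hy : 0 < y) (hH : 0 < H) (hv : H ≤ v)
    (h : v * ((e * x + f) ^ 2 + (e * y) ^ 2) = y) :
    (e ^ 2 + f ^ 2) * H ≤ 2 * y + (2 * x ^ 2 + 1) / y := by
  have h1 : H * ((e * x + f) ^ 2 + (e * y) ^ 2) ≤ y := by
    calc _ ≤ v * ((e * x + f) ^ 2 + (e * y) ^ 2) := by gcongr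
      _ = y := h
  have h2 : H * e ^ 2 * y ≤ 1 := by
    have : (H * e ^ 2 * y) * y ≤ 1 * y := by nlinarith [mul_nonneg hH.le (sq_nonneg (e * x + f))]
    exact le_of_mul_le_mul_right this hy
  have h3 : H * e ^ 2 ≤ 1 / y := by rw [le_div_iff₀ hy]; exact h2
  have h4 : H * f ^ 2 ≤ 2 * y + 2 * x ^ 2 * (H * e ^ 2) := by
    nlinarith [mul_nonneg hH.le (sq_nonneg (2 * e * x + f)), mul_nonneg hH.le (sq_nonneg (e * y))]
  have h5 : 2 * x ^ 2 * (H * e ^ 2) ≤ 2 * x ^ 2 * (1 / y) := by gcongr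
  have : (2 * x ^ 2 + 1) / y = 2 * x ^ 2 * (1 / y) + 1 / y := by ring
  rw [this]
  linarith

/-- Points of the limit set of a convex cocompact group are conical: some element of the group
expands there by a factor larger than `2`. The geodesic from `o` to a point of its orbit close to
`para t` enters a high horoball based at `para t`, and cocompactness brings the point reached back
into `K`. -/
lemma conical {Γ : Type*} (A : Γ → SL2) {C K : Set UpperHalfPlane} (hC : C.Nonempty)
    (hconv : HypConvex C) (hinv : ∀ γ, ∀ z ∈ C, (A γ)⁻¹ • z ∈ C) (hK : IsCompact K)
    (hcov : ∀ z ∈ C, ∃ γ, ∃ k ∈ K, A γ • k = z) {t : ℝ}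
    (hx : ∀ ε > 0, ∃ γ, NA (A γ) t ≤ ε * Fr (A γ)) : ∃ γ, NA (A γ)⁻¹ t < 1 / 2 := by
  obtain ⟨o, ho⟩ := hC
  obtain ⟨M, hM⟩ : ∃ M : ℝ, ∀ k ∈ K, 2 * k.im + (2 * k.re ^ 2 + 1) / k.im ≤ M := by
    have hcont : Continuous fun k : UpperHalfPlane => 2 * k.im + (2 * k.re ^ 2 + 1) / k.im := by
      have h1 := UpperHalfPlane.continuous_re
      have h2 := UpperHalfPlane.continuous_im
      exact (continuous_const.mul h2).add (((continuous_const.mul (h1.pow 2)).add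
        continuous_const).div h2 fun k => k.im_ne_zero)
    obtain ⟨M, hM⟩ := (hK.image hcont).bddAbove
    exact ⟨M, fun k hk => hM ⟨k, hk, rfl⟩⟩
  set H := 2 * |M| + 1 with hHdef
  have hH : 0 < H := by positivity
  set N := rotSL (-t) with hN
  set o' := N • o with ho'
  set r := (3 * H + o'.im + |o'.re|) ^ 2 with hr
  set M' := (2 * o.re ^ 2 + 2 + o.im ^ 2) * (2 + (1 + 2 * o.re ^ 2) / o.im ^ 2) with hM'
  have po := o.im_pos
  have hM'p : 0 < M' := by positivity
  have hr0 : 0 ≤ r := by positivity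
  obtain ⟨γ, hγ⟩ := hx (1 / (2 * (r * M' + 1))) (by positivity)
  have hfar : r ≤ ((N * (A γ)⁻¹) • o).re ^ 2 + ((N * (A γ)⁻¹) • o).im ^ 2 := by
    refine far_point (N * (A γ)⁻¹) o (M := M') (ε := 1 / (r * M' + 1)) hr0 hM' ?_ ?_
    · rw [hN, bottom_row, top_row, inv_inv]
      have h1 : NA (A γ) t * (2 * (r * M' + 1)) ≤ Fr (A γ) := by
        have : 1 / (2 * (r * M' + 1)) * Fr (A γ) = Fr (A γ) / (2 * (r * M' + 1)) := by ring
        rw [this, le_div_iff₀ (by positivity)] at hγ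
        exact hγ
      have h2 : 1 / (r * M' + 1) * (Fr (A γ) - NA (A γ) t) = (Fr (A γ) - NA (A γ) t) / (r * M' + 1) := by ring
      rw [h2, le_div_iff₀ (by positivity)]
      have := NA_pos (A γ) t
      nlinarith [mul_nonneg hr0 hM'p.le, mul_nonneg this.le (mul_nonneg hr0 hM'p.le)]
    · rw [div_mul_eq_mul_div, one_mul, div_le_one (by positivity)]
      linarith
  obtain ⟨z, hz, hzH⟩ := exists_high o' ((N * (A γ)⁻¹) • o) hH hfar
  have hzC : N⁻¹ • z ∈ C := by
    refine hconv o ho ((A γ)⁻¹ • o) (hinv γ o ho) _ ?_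
    rw [← dist_smul N o, ← dist_smul N (N⁻¹ • z), ← dist_smul N o ((A γ)⁻¹ • o), smul_inv_smul,
      smul_smul]
    exact hz
  obtain ⟨δ, k, hk, hδ⟩ := hcov _ hzC
  have hz' : (N * A δ) • k = z := by rw [mul_smul, hδ, smul_inv_smul]
  have him := smul_im_mul (N * A δ) k
  rw [hz'] at him
  have hb := high_bound k.im_pos hH hzH him
  rw [hN, bottom_row] at hb
  refine ⟨δ, ?_⟩
  have := hM k hk
  have := le_abs_self M
  have := abs_nonneg M
  by_contra hcon
  push Not at hcon
  nlinarith

/-! ### The limit set of the linear group -/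

lemma NN_compare (A : SL2) (x y : RP1) : NN A x ≤ 2 * NN A y + 2 * sqc x y * Fr A := by
  obtain ⟨a, rfl⟩ := para_surj x
  obtain ⟨b, rfl⟩ := para_surj y
  rw [NN_para, NN_para, sqc_para]
  have h := NA_compare A a b
  have h1 := cos_sq_le_one (π * (a - b))
  have h2 := NA_pos A b
  nlinarith

lemma Fr_pos (A : SL2) : 0 < Fr A := (NA_pos A 0).trans_le (NA_le_Fr A 0)

lemma Fr_mul_le (A B : SL2) : Fr (A * B) ≤ Fr A * Fr B := by
  have key : ∀ a b c d : ℝ, (a * b + c * d) ^ 2 ≤ (a ^ 2 + c ^ 2) * (b ^ 2 + d ^ 2) := fun a b c d => by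
    nlinarith [sq_nonneg (a * d - b * c)]
  simp only [Fr, mul_entries]
  have h1 := key (A 0 0) (B 0 0) (A 0 1) (B 1 0)
  have h2 := key (A 0 0) (B 0 1) (A 0 1) (B 1 1)
  have h3 := key (A 1 0) (B 0 0) (A 1 1) (B 1 0)
  have h4 := key (A 1 0) (B 0 1) (A 1 1) (B 1 1)
  nlinarith

lemma NN_one (x : RP1) : NN 1 x = 1 := by
  have := sin_sq_add_cos_sq (π * invFun para x)
  simp only [NN, NA, uu, ww]
  simp

/-- A matrix of large norm contracts some direction strongly. -/
lemma exists_contracted (A : SL2) : ∃ x, NN A x * Fr A ≤ 2 := by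
  have key : ∀ y, NN A (mobius A⁻¹ y) * NN A⁻¹ y = 1 := fun y => by
    rw [← NN_mul, mul_inv_cancel, NN_one]
  have hsum : NN A⁻¹ (para 0) + NN A⁻¹ (para (1 / 2)) = Fr A := by
    obtain ⟨k1, k2, k3, k4⟩ := inv_entries A
    rw [NN_para, NN_para]
    have h1 : π * (1 / 2) = π / 2 := by ring
    simp only [NA, uu, ww, k1, k2, k3, k4, h1, Fr]
    simp
    ring
  have : ∃ y, Fr A ≤ 2 * NN A⁻¹ y := by
    by_contra! hcon
    have h1 := hcon (para 0)
    have h2 := hcon (para (1 / 2))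
    linarith
  obtain ⟨y, hy⟩ := this
  refine ⟨mobius A⁻¹ y, ?_⟩
  have h1 := key y
  have h2 := NN_pos A (mobius A⁻¹ y)
  nlinarith

/-- Directions contracted by a factor `ε` relative to the norm, by some element of the group. -/
def Contr {Γ : Type*} (A : Γ → SL2) (ε : ℝ) : Set RP1 := {x | ∃ γ, NN (A γ) x ≤ ε * Fr (A γ)}

/-- By `NN_compare`, a direction close to one contracted by `ε` relative to the norm is contracted
by `3ε`, by the same element. -/
lemma closure_Contr {Γ : Type*} {A : Γ → SL2} {ε : ℝ} (hε : 0 < ε) : closure (Contr A ε) ⊆ Contr A (3 * ε) := by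
  intro x hx
  have ho : IsOpen {y | sqc x y < ε / 2} := by
    have hc : Continuous fun y : RP1 => sqc x y :=
      sqc_cont.comp (g := fun z : RP1 × RP1 => sqc z.1 z.2) (f := fun y : RP1 => (x, y))
        (continuous_const.prodMk continuous_id)
    exact isOpen_lt hc continuous_const
  obtain ⟨y, hy, γ, hγ⟩ := mem_closure_iff.1 hx _ ho (by
    change sqc x x < ε / 2
    rw [sqc_eq_zero.2 rfl]; positivity)
  refine ⟨γ, ?_⟩
  have h1 := NN_compare (A γ) x y
  have h2 := Fr_pos (A γ)
  have hy' : sqc x y < ε / 2 := hy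
  nlinarith

section limit
variable {Γ : Type*} [Group Γ] {ρ : Γ →* Equiv.Perm RP1} {A : Γ → SL2}

lemma mobius_prod (hA : ∀ γ, ⇑(ρ γ) = mobius (A γ)) (γ δ : Γ) :
    mobius (A (γ * δ)) = mobius (A γ * A δ) := by
  funext x
  rw [mobius_mul, ← hA, ← hA, ← hA, map_mul, Equiv.Perm.mul_apply]

lemma mobius_A_inv (hA : ∀ γ, ⇑(ρ γ) = mobius (A γ)) (γ : Γ) :
    mobius (A γ⁻¹) = mobius (A γ)⁻¹ := by
  funext x
  have h : mobius (A γ) (mobius (A γ)⁻¹ x) = x := by rw [← mobius_mul, mul_inv_cancel, mobius_one]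
  rw [← hA, map_inv, Equiv.Perm.inv_eq_iff_eq, hA, h]

/-- A finite group has finite minimal sets, which are not perfect. -/
lemma inf_of_limit {L : Set RP1} (hL : IsLimitSet ρ L) (hP : Perfect L) : Infinite Γ := by
  by_contra hfin
  have : Finite Γ := not_infinite_iff_finite.1 hfin
  obtain ⟨⟨x, hx⟩, -, -, hmin⟩ := hL
  have hsub := hmin (range fun γ => ρ γ x) ⟨_, 1, rfl⟩ (finite_range _).isClosed (fun γ => by
    rw [← range_comp]
    have : ((ρ γ) ∘ fun δ => ρ δ x) = (fun δ => ρ δ x) ∘ Equiv.mulLeft γ := by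
      funext δ; simp
    rw [this, EquivLike.range_comp])
  have hLf : L.Finite := (finite_range _).subset hsub
  have hacc := hP.acc x hx
  rw [accPt_iff_frequently] at hacc
  have hcl : IsOpen (L \ {x})ᶜ := (hLf.subset sdiff_subset).isClosed.isOpen_compl
  have hmem : (L \ {x})ᶜ ∈ nhds x := hcl.mem_nhds (by simp)
  obtain ⟨y, ⟨h1, h2⟩, h3⟩ := (hacc.and_eventually hmem).exists
  exact h3 ⟨h2, h1⟩

/-- Limit points are directions contracted arbitrarily strongly relative to the norm. The
directions with this property form a closed invariant set, nonempty by compactness and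
discreteness, so it contains the minimal set `L`. -/
lemma limit_contr (hA : ∀ γ, ⇑(ρ γ) = mobius (A γ)) (hfin : ∀ R : ℝ, {γ | Fr (A γ) ≤ R}.Finite)
    [Infinite Γ] {L : Set RP1} (hL : IsLimitSet ρ L) :
    ∀ x ∈ L, ∀ ε > 0, ∃ γ, NN (A γ) x ≤ ε * Fr (A γ) := by
  have hne : ∀ ε > 0, (Contr A ε).Nonempty := by
    intro ε hε
    obtain ⟨γ, hγ⟩ : ∃ γ, max (2 / ε) 1 < Fr (A γ) := by
      by_contra! hcon
      exact infinite_univ ((hfin (max (2 / ε) 1)).subset fun γ _ => hcon γ)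
    obtain ⟨x, hx⟩ := exists_contracted (A γ)
    refine ⟨x, γ, ?_⟩
    have h1 := (le_max_left _ _).trans_lt hγ
    have h2 := (le_max_right _ _).trans_lt hγ
    rw [div_lt_iff₀ hε] at h1
    have := NN_pos (A γ) x
    nlinarith
  have hsub : L ⊆ {x | ∀ ε > 0, x ∈ Contr A ε} := by
    refine hL.2.2.2 _ ?_ ?_ ?_
    · have hmono : ∀ n : ℕ, Contr A (1 / ((n + 1 : ℕ) + 1)) ⊆ Contr A (1 / ((n : ℝ) + 1)) := by
        rintro n y ⟨γ, hγ⟩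
        refine ⟨γ, hγ.trans ?_⟩
        have := Fr_pos (A γ)
        gcongr
        simp
      obtain ⟨x, hx⟩ := IsCompact.nonempty_iInter_of_sequence_nonempty_isCompact_isClosed
        (fun n : ℕ => closure (Contr A (1 / ((n : ℝ) + 1)))) (fun n => closure_mono (hmono n))
        (fun n => (hne _ (by positivity)).closure) isClosed_closure.isCompact
        (fun n => isClosed_closure)
      refine ⟨x, fun ε hε => ?_⟩
      obtain ⟨n, hn⟩ := exists_nat_one_div_lt (show 0 < ε / 3 by positivity)
      obtain ⟨γ, hγ⟩ := closure_Contr (by positivity) (mem_iInter.1 hx n)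
      refine ⟨γ, hγ.trans ?_⟩
      have := Fr_pos (A γ)
      gcongr
      linarith
    · refine isClosed_of_closure_subset fun x hx ε hε => ?_
      have := closure_Contr (ε := ε / 3) (by positivity)
        (closure_mono (fun y (hy : ∀ ε > 0, y ∈ Contr A ε) => hy (ε / 3) (by positivity)) hx)
      rwa [mul_div_cancel₀ _ (by norm_num : (3:ℝ) ≠ 0)] at this
    · have hsubs : ∀ g x, (∀ ε > 0, x ∈ Contr A ε) → ∀ ε > 0, ρ g x ∈ Contr A ε := by
        intro g x hx ε hε
        have hc := NN_pos (A g⁻¹) (ρ g x)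
        have hg := Fr_pos (A g)
        obtain ⟨γ, hγ⟩ := hx (ε / (NN (A g⁻¹) (ρ g x) * Fr (A g))) (by positivity)
        refine ⟨γ * g⁻¹, ?_⟩
        have e1 : NN (A (γ * g⁻¹)) (ρ g x) = NN (A γ) x * NN (A g⁻¹) (ρ g x) := by
          rw [NN_sign (mobius_prod hA γ g⁻¹), NN_mul, ← hA g⁻¹]
          simp
        have e2 : Fr (A γ) ≤ Fr (A (γ * g⁻¹)) * Fr (A g) := by
          have : Fr (A γ) = Fr (A (γ * g⁻¹) * A g) := by
            apply Fr_sign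
            rw [← mobius_prod hA]; simp
          rw [this]; exact Fr_mul_le _ _
        rw [e1]
        calc _ ≤ (ε / (NN (A g⁻¹) (ρ g x) * Fr (A g)) * Fr (A γ)) * NN (A g⁻¹) (ρ g x) := by gcongr
          _ = ε / Fr (A g) * Fr (A γ) := by field_simp
          _ ≤ ε / Fr (A g) * (Fr (A (γ * g⁻¹)) * Fr (A g)) := by gcongr
          _ = _ := by field_simp
      intro g
      refine Subset.antisymm ?_ fun x hx => ⟨ρ g⁻¹ x, hsubs g⁻¹ x hx, by simp⟩
      rintro _ ⟨x, hx, rfl⟩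
      exact hsubs g x hx
  exact fun x hx ε hε => hsub hx ε hε

end limit

lemma para_open {U : Set ℝ} (hU : IsOpen U) : IsOpen (para '' U) := by
  have e : para '' U = (para '' (Icc 0 1 \ ⋃ n : ℤ, (fun t => t + n) ⁻¹' U))ᶜ := by
    ext x
    constructor
    · rintro ⟨u, hu, rfl⟩ ⟨v, ⟨-, hv⟩, hvu⟩
      obtain ⟨n, hn⟩ := (para_eq_iff_int _ _).1 hvu.symm
      exact hv (mem_iUnion.2 ⟨n, by change v + n ∈ U; rwa [← hn]⟩)
    · intro hx
      obtain ⟨t, ht, rfl⟩ := para_image_Icc x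
      by_contra hcon
      refine hx ⟨t, ⟨ht, fun h => ?_⟩, rfl⟩
      obtain ⟨n, hn⟩ := mem_iUnion.1 h
      exact hcon ⟨t + n, hn, para_add_int t n⟩
  rw [e]
  refine (IsCompact.isClosed (IsCompact.image ?_ para_cont)).isOpen_compl
  exact isCompact_Icc.diff (isOpen_iUnion fun n => hU.preimage (by fun_prop))

lemma para_dense {L : Set RP1} (h : interior L = ∅) : Dense (para ⁻¹' L)ᶜ := by
  rw [← interior_eq_empty_iff_dense_compl]
  by_contra hne
  obtain ⟨t, ht⟩ := nonempty_iff_ne_empty.2 hne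
  have : para t ∈ interior L :=
    mem_interior.2 ⟨para '' interior (para ⁻¹' L), by
      rintro _ ⟨s, hs, rfl⟩; exact (interior_subset hs : s ∈ para ⁻¹' L),
      para_open isOpen_interior, ⟨t, ht, rfl⟩⟩
  rw [h] at this
  exact this

lemma para_acc {L : Set RP1} (h : Perfect L) : NoIsol (para ⁻¹' L) := by
  intro p hp
  have hacc := h.acc (para p) hp
  rw [accPt_iff_frequently] at hacc
  rw [frequently_nhdsWithin_iff, frequently_nhds_iff]
  intro U hpU hU
  rw [frequently_nhds_iff] at hacc
  obtain ⟨x, ⟨u, hu, rfl⟩, hx1, hx2⟩ := hacc (para '' U) ⟨p, hpU, rfl⟩ (para_open hU)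
  exact ⟨u, hu, hx2, fun h => hx1 (by rw [h])⟩

/-! ### Proof of the theorem -/

/-- A smooth lift with nonvanishing derivative that agrees with a Möbius map on a nonempty set
without isolated points is increasing. -/
lemma orient {A : SL2} {F : ℝ → ℝ} {Lt : Set ℝ} (hL : NoIsol Lt) {p : ℝ} (hp : p ∈ Lt)
    (hF : ContDiff ℝ (⊤ : ℕ∞) F) (h : ∀ t ∈ Lt, mobius A (para t) = para (F t))
    (h0 : ∀ t, deriv F t ≠ 0) : ∀ t, 0 < deriv F t := by
  have hd := deriv_eq_on hL (hF.differentiable (by simp)) h p hp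
  have hpos : 0 < deriv F p := by
    by_contra hcon
    have := NA_pos A p
    nlinarith
  have hc : Continuous (deriv F) := hF.continuous_deriv (by simp)
  intro t
  by_contra hcon
  have hmem : (0 : ℝ) ∈ range (deriv F) :=
    mem_range_of_exists_le_of_exists_ge hc ⟨t, not_lt.1 hcon⟩ ⟨p, hpos.le⟩
  obtain ⟨s, hs⟩ := hmem
  exact h0 s hs

/-- A convex cocompact representation together with a smooth conjugate of it gives a `Sys`, in
which `k` is the inverse of the conjugacy. -/
lemma exists_sys {Γ : Type*} [Group Γ] {ρ₀ ρ₁ : Γ →* Equiv.Perm RP1} {L : Set RP1}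
    (hcc : IsConvexCocompact ρ₀) (hL : IsLimitSet ρ₀ L) (h : RP1 ≃ₜ RP1) (hid : ∀ x ∈ L, h x = x)
    (hconj : ∀ (γ : Γ) (x : RP1), ρ₁ γ x = h (ρ₀ γ (h.symm x)))
    (hdiff : ∀ γ : Γ, IsCircleDiffeo (⊤ : ℕ∞) (ρ₁ γ)) : ∃ S : Sys Γ, S.ρ = ρ₁ := by
  obtain ⟨-, hmob, hpd, -, hcantor, C, hC, -, hconv, hinv, K, hK, hcov⟩ := hcc
  obtain ⟨-, hP, hint⟩ := hcantor L hL
  set A : Γ → SL2 := fun γ => (hmob γ).choose with hAdef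
  have hA : ∀ γ, ⇑(ρ₀ γ) = mobius (A γ) := fun γ => (hmob γ).choose_spec
  have hact : ∀ γ z, mobiusHAct (ρ₀ γ) z = A γ • z := by
    intro γ z
    have hex : ∃ M : SL2, ⇑(ρ₀ γ) = mobius M := hmob γ
    rw [mobiusHAct, dif_pos hex]
  have hfin : ∀ R : ℝ, {γ | Fr (A γ) ≤ R}.Finite := by
    intro R
    refine (hpd (Metric.closedBall UpperHalfPlane.I (R / 2)) (isCompact_closedBall _ _)).subset ?_
    intro γ (hγ : Fr (A γ) ≤ R)
    have hR : 0 < R := (Fr_pos _).trans_le hγ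
    refine ⟨A γ • UpperHalfPlane.I, ⟨UpperHalfPlane.I, ?_, hact _ _⟩, ?_⟩
    · exact Metric.mem_closedBall_self (by positivity)
    · rw [Metric.mem_closedBall, dist_comm]
      have := dist_I_le (A γ)
      linarith
  have : Infinite Γ := inf_of_limit hL hP
  have hlim := limit_contr hA hfin hL
  have hinv' : ∀ γ, ∀ z ∈ C, (A γ)⁻¹ • z ∈ C := by
    intro γ z hz
    rw [← hinv γ] at hz
    obtain ⟨w, hw, rfl⟩ := hz
    rwa [hact, inv_smul_smul]
  have hcov' : ∀ z ∈ C, ∃ γ, ∃ k ∈ K, A γ • k = z := by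
    intro z hz
    obtain ⟨γ, k, hk, hkz⟩ := mem_iUnion.1 (hcov hz)
    exact ⟨γ, k, hk, by rw [← hact, hkz]⟩
  have hexp : ∀ x ∈ L, ∃ γ, NN (A γ) x < 1 / 2 := by
    intro x hx
    obtain ⟨t, rfl⟩ := para_surj x
    obtain ⟨γ, hγ⟩ := conical A hC hconv hinv' hK hcov' (t := t) (by simpa [NN_para] using hlim _ hx)
    exact ⟨γ⁻¹, by rwa [NN_sign (mobius_A_inv hA γ), NN_para]⟩
  have hid' : ∀ x ∈ L, h.symm x = x := fun x hx => by rw [Homeomorph.symm_apply_eq, hid x hx]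
  have hL0 : ∀ γ, ∀ x ∈ L, ρ₀ γ x ∈ L := fun γ x hx => by
    rw [← hL.2.2.1 γ]; exact mem_image_of_mem _ hx
  have hL1 : ∀ γ, ∀ x ∈ L, ρ₁ γ x = ρ₀ γ x := fun γ x hx => by
    rw [hconj, hid' x hx, hid _ (hL0 γ x hx)]
  have hacc := para_acc hP
  choose F hlift hsm hder hdeg using hdiff
  obtain ⟨x, hx⟩ := hL.1
  obtain ⟨p, rfl⟩ := para_surj x
  have hpos : ∀ γ t, 0 < deriv (F γ) t := fun γ =>
    orient (A := A γ) hacc (p := p) hx (hsm γ) (fun t ht => by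
      rw [← hlift γ, ← hA, hL1 γ _ ht]) (hder γ)
  have hper : ∀ γ t, F γ (t + 1) = F γ t + 1 := by
    intro γ
    refine (hdeg γ).resolve_right fun hcon => ?_
    have h1 := strictMono_of_deriv_pos (hpos γ) (show (0 : ℝ) < 0 + 1 by norm_num)
    rw [hcon] at h1
    linarith
  refine ⟨{
    ρ := ρ₁, L := L, k := h.symm, A := A, F := F, kid := hid'
    conj := fun γ x => by rw [hconj, Homeomorph.symm_apply_apply, hA]
    lift := fun γ t => hlift γ t
    smooth := hsm
    dpos := hpos
    per := hper
    Lcl := hL.2.1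
    Linv := fun γ x hx => by rw [hL1 γ x hx]; exact hL0 γ x hx
    acc := hacc
    dense := para_dense hint
    pt := ?_
    fin := hfin
    exp := hexp }, rfl⟩
  have := hP.acc _ hx
  rw [accPt_iff_frequently] at this
  obtain ⟨y, hy1, hy2⟩ := this.exists
  exact ⟨y, hy2, _, hx, hy1⟩

/-- If `ρ₀` is convex cocompact and `h` is a circle homeomorphism equal to the identity on
the limit set `L` of `ρ₀(Γ)` such that `ρ₁ = h ρ₀ h⁻¹` takes values in `Diff(S¹)`, then
`ρ₁` preserves a `C²` volume form on the cylinder. -/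
theorem stmt_15 {Γ : Type*} [Group Γ] (ρ₀ ρ₁ : Γ →* Equiv.Perm RP1)
    (hcc : IsConvexCocompact ρ₀)
    (L : Set RP1) (hL : IsLimitSet ρ₀ L)
    (h : RP1 ≃ₜ RP1) (hid : ∀ x ∈ L, h x = x)
    (hconj : ∀ (γ : Γ) (x : RP1), ρ₁ γ x = h (ρ₀ γ (h.symm x)))
    (hdiff : ∀ γ : Γ, IsCircleDiffeo (⊤ : ℕ∞) (ρ₁ γ)) :
    ∃ ω : RP1 → RP1 → ℝ, IsVolumeForm 2 ω ∧ ∀ γ : Γ, PreservesForm (ρ₁ γ) ω := by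
  obtain ⟨S, rfl⟩ := exists_sys hcc hL h hid hconj hdiff
  exact S.exists_form

end
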